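/- Let K be a number field and fix α > 1. Then for x ≥ 2, Σ_{p prime ideal of O_K, N(p) ≥ x} N(p)^{−α} = 1/((α−1) x^{α−1} log x) + O(1/(x^{α−1}(log x)²)), where the implied constant depends only on α and K. -/

import Mathlib

open Filter Topology
open scoped BigOperators

noncomputable section

/-!
The Dedekind zeta function is continued a little to the left of `Re s = 1` by Mellin transforming
ideal counts, which amount to lattice point counts and therefore have a power saving error term.
The Euler product and the inequality `3 + 4 cos t + cos 2t ≥ 0` bound the continuation from below in
a neighbourhood of `Re s ≥ 1` of width a small negative power of `Im s`. Hence the Fourier transform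
of `(ϑ(e^u) e^{-u} - 1) e^{-(σ - 1)u}` has a second derivative that is bounded uniformly as `σ → 1`,
so by Parseval the mean of `u² (ϑ(e^u) e^{-u} - 1)` over a window of length `1 / U` near `u = U` is
`O(U)`. As `ϑ` is monotone this gives `ϑ(x) = x + O(x / log x)`, and partial summation finishes.
-/

namespace PrimeIdealTail

section LatticeSums

open MeasureTheory Module Metric
open scoped NNReal

variable {E ι : Type*} [NormedAddCommGroup E] [NormedSpace ℝ E] (b : Basis ι ℝ E)

lemma measureReal_fundamentalDomain_pos [Finite ι] [FiniteDimensional ℝ E] [MeasurableSpace E]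
    [BorelSpace E] (μ : Measure E) [μ.IsAddHaarMeasure] : 0 < μ.real (ZSpan.fundamentalDomain b) :=
  ENNReal.toReal_pos (ZSpan.measure_fundamentalDomain_ne_zero b)
    (ZSpan.fundamentalDomain_isBounded b).measure_lt_top.ne

section Fintype

variable [Fintype ι]

lemma floor_add_of_mem_fundamentalDomain (a : Submodule.span ℤ (Set.range b)) {x : E}
    (hx : x ∈ ZSpan.fundamentalDomain b) : ZSpan.floor b (a + x) = a := by
  have hfract : ZSpan.fract b ((a : E) + x) = x := by
    rw [ZSpan.fract_zSpan_add b x a.2, ZSpan.fract_eq_self.mpr hx]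
  rw [ZSpan.fract_apply, sub_eq_iff_eq_add, add_comm x] at hfract
  exact Subtype.ext (add_right_cancel hfract).symm

lemma norm_sub_floor_le (x : E) : ‖x - ZSpan.floor b x‖ ≤ ∑ i, ‖b i‖ := by
  simpa only [ZSpan.fract_apply] using ZSpan.norm_fract_le b x

variable {b} in
lemma abs_sub_comp_floor_le {g : E → ℝ} {C : ℝ≥0} {R : ℝ} (hg : LipschitzWith C g)
    (hR : Function.support g ⊆ closedBall 0 R) (x : E) :
    |g (ZSpan.floor b x) - g x| ≤
      (closedBall (0 : E) (R + ∑ i, ‖b i‖)).indicator (fun _ => C * ∑ i, ‖b i‖) x := by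
  have hfloor := norm_sub_floor_le b x
  by_cases hx : x ∈ closedBall (0 : E) (R + ∑ i, ‖b i‖)
  · rw [Set.indicator_of_mem hx]
    have hdist := hg.dist_le_mul (ZSpan.floor b x : E) x
    rw [Real.dist_eq, dist_comm, dist_eq_norm] at hdist
    exact hdist.trans (by gcongr)
  · rw [mem_closedBall_zero_iff, not_le] at hx
    have hB : 0 ≤ ∑ i, ‖b i‖ := Finset.sum_nonneg fun _ _ => norm_nonneg _
    have hzero (y : E) (hy : R < ‖y‖) : g y = 0 := Function.notMem_support.mp fun h =>
      (mem_closedBall_zero_iff.mp (hR h)).not_gt hy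
    have hfar : R < ‖(ZSpan.floor b x : E)‖ := by
      linarith [norm_sub_norm_le x (ZSpan.floor b x : E)]
    rw [hzero _ hfar, hzero x (by linarith), sub_self, abs_zero]
    exact Set.indicator_nonneg (fun _ _ => by positivity) x

variable [FiniteDimensional ℝ E] [MeasurableSpace E] [BorelSpace E]

lemma measurable_coe_floor : Measurable fun x : E => (ZSpan.floor b x : E) := by
  have hfloor (x : E) : (ZSpan.floor b x : E) = ∑ i, (⌊b.repr x i⌋ : ℝ) • b i := by
    apply b.repr.injective
    ext i
    rw [ZSpan.repr_floor_apply]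
    exact (congrFun (b.repr_sum_self fun i => (⌊b.repr x i⌋ : ℝ)) i).symm
  simp only [hfloor]
  refine Finset.measurable_sum _ fun i _ => Measurable.smul_const ?_ (b i)
  have hcoord : Measurable fun x : E => b.repr x i :=
    (LinearMap.continuous_of_finiteDimensional (b.coord i)).measurable
  exact (measurable_from_top (f := fun z : ℤ => (z : ℝ))).comp hcoord.floor

variable (μ : Measure E) [μ.IsAddHaarMeasure]

lemma integral_comp_floor {g : E → ℝ} (hg : Integrable (fun x => g (ZSpan.floor b x)) μ) :
    ∫ x, g (ZSpan.floor b x) ∂μ =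
      μ.real (ZSpan.fundamentalDomain b) * ∑' a : Submodule.span ℤ (Set.range b), g a := by
  have : VAddInvariantMeasure (Submodule.span ℤ (Set.range b)) E μ :=
    ⟨fun c s _ => measure_preimage_add μ (c : E) s⟩
  rw [(ZSpan.isAddFundamentalDomain b μ).integral_eq_tsum'' _ hg, ← tsum_mul_left]
  refine tsum_congr fun a => ?_
  have hconst : ∀ x ∈ ZSpan.fundamentalDomain b, g (ZSpan.floor b (a +ᵥ x)) = g a := fun x hx =>
    congrArg (fun y : Submodule.span ℤ (Set.range b) => g y)
      (floor_add_of_mem_fundamentalDomain b a hx)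
  rw [setIntegral_congr_fun (ZSpan.fundamentalDomain_measurableSet b) hconst, setIntegral_const,
    smul_eq_mul]

lemma abs_tsum_sub_integral_le {g : E → ℝ} {C : ℝ≥0} {R : ℝ} (hg : LipschitzWith C g)
    (hR : Function.support g ⊆ closedBall 0 R) :
    |μ.real (ZSpan.fundamentalDomain b) * ∑' a : Submodule.span ℤ (Set.range b), g a -
      ∫ x, g x ∂μ| ≤ C * (∑ i, ‖b i‖) * μ.real (closedBall 0 (R + ∑ i, ‖b i‖)) := by
  have hg_int : Integrable g μ := hg.continuous.integrable_of_hasCompactSupport <|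
    HasCompactSupport.intro (isCompact_closedBall 0 R) fun x hx =>
      Function.notMem_support.mp fun h => hx (hR h)
  have hbound_int : Integrable ((closedBall (0 : E) (R + ∑ i, ‖b i‖)).indicator
      fun _ => (C : ℝ) * ∑ i, ‖b i‖) μ :=
    (integrable_indicator_iff measurableSet_closedBall).mpr
      (integrableOn_const measure_closedBall_lt_top.ne)
  have hdiff_int : Integrable (fun x => g (ZSpan.floor b x) - g x) μ :=
    hbound_int.mono'
      ((hg.continuous.measurable.comp (measurable_coe_floor b)).aestronglyMeasurable.sub
        hg_int.aestronglyMeasurable)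
      (Eventually.of_forall (abs_sub_comp_floor_le hg hR))
  have hfloor_int : Integrable (fun x => g (ZSpan.floor b x)) μ :=
    (hdiff_int.add hg_int).congr (Eventually.of_forall fun x => by simp)
  rw [← integral_comp_floor b μ hfloor_int, ← integral_sub hfloor_int hg_int]
  calc |∫ x, g (ZSpan.floor b x) - g x ∂μ|
      ≤ ∫ x, |g (ZSpan.floor b x) - g x| ∂μ := abs_integral_le_integral_abs
    _ ≤ ∫ x, (closedBall (0 : E) (R + ∑ i, ‖b i‖)).indicator (fun _ => C * ∑ i, ‖b i‖) x ∂μ :=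
        integral_mono hdiff_int.abs hbound_int (abs_sub_comp_floor_le hg hR)
    _ = C * (∑ i, ‖b i‖) * μ.real (closedBall 0 (R + ∑ i, ‖b i‖)) := by
        rw [integral_indicator measurableSet_closedBall, setIntegral_const, smul_eq_mul, mul_comm]

end Fintype

theorem exists_abs_tsum_smul_sub_le [Finite ι] [FiniteDimensional ℝ E] [MeasurableSpace E]
    [BorelSpace E] (μ : Measure E) [μ.IsAddHaarMeasure] {f : E → ℝ} {C : ℝ≥0}
    (hf : LipschitzWith C f)
    (hf_supp : HasCompactSupport f) :
    ∃ A : ℝ, ∀ t : ℝ, 1 ≤ t →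
      |∑' a : Submodule.span ℤ (Set.range b), f (t⁻¹ • (a : E)) -
        t ^ finrank ℝ E * ((∫ x, f x ∂μ) / μ.real (ZSpan.fundamentalDomain b))| ≤
      A * (t ^ finrank ℝ E / t) := by
  have := Fintype.ofFinite ι
  obtain ⟨R, hR0, hR⟩ := hf_supp.isCompact.isBounded.subset_closedBall_lt 0 0
  have hV := measureReal_fundamentalDomain_pos b μ
  set V := μ.real (ZSpan.fundamentalDomain b)
  set B := ∑ i, ‖b i‖
  have hB : 0 ≤ B := Finset.sum_nonneg fun _ _ => norm_nonneg _
  refine ⟨C * B * μ.real (closedBall (0 : E) (R + B)) / V, fun t ht => ?_⟩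
  have ht0 : 0 < t := one_pos.trans_le ht
  have hscale_lip : LipschitzWith (C * ‖t⁻¹‖₊) fun x => f (t⁻¹ • x) :=
    hf.comp (lipschitzWith_smul t⁻¹)
  have hscale_supp : Function.support (fun x => f (t⁻¹ • x)) ⊆ closedBall 0 (t * R) := by
    intro x hx
    have hx' := mem_closedBall_zero_iff.mp (hR (subset_tsupport f hx))
    rw [norm_smul, norm_inv, Real.norm_of_nonneg ht0.le, inv_mul_le_iff₀ ht0] at hx'
    exact mem_closedBall_zero_iff.mpr hx'
  have hcount := abs_tsum_sub_integral_le b μ hscale_lip hscale_supp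
  have hball : μ.real (closedBall (0 : E) (t * R + B)) ≤
      t ^ finrank ℝ E * μ.real (closedBall (0 : E) (R + B)) :=
    calc μ.real (closedBall (0 : E) (t * R + B))
        ≤ μ.real (closedBall (0 : E) (t * (R + B))) :=
          measureReal_mono (closedBall_subset_closedBall (by nlinarith))
            measure_closedBall_lt_top.ne
      _ = t ^ finrank ℝ E * μ.real (closedBall (0 : E) (R + B)) := by
          rw [measureReal_def, measureReal_def, Measure.addHaar_closedBall_mul μ 0 ht0.le
            (add_nonneg hR0.le hB), ENNReal.toReal_mul, ENNReal.toReal_ofReal (by positivity)]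
  rw [Measure.integral_comp_inv_smul, smul_eq_mul, abs_of_pos (pow_pos ht0 _),
    NNReal.coe_mul, coe_nnnorm, norm_inv, Real.norm_of_nonneg ht0.le] at hcount
  set S := ∑' a : Submodule.span ℤ (Set.range b), f (t⁻¹ • (a : E))
  calc |S - t ^ finrank ℝ E * ((∫ x, f x ∂μ) / V)|
      = |V * S - t ^ finrank ℝ E * ∫ x, f x ∂μ| / V := by
        rw [eq_div_iff hV.ne', ← abs_of_pos hV, ← abs_mul, abs_of_pos hV]
        congr 1
        field_simp
    _ ≤ (C * t⁻¹ * B * (t ^ finrank ℝ E * μ.real (closedBall (0 : E) (R + B)))) / V := by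
        refine div_le_div_of_nonneg_right (hcount.trans ?_) hV.le
        gcongr
    _ = _ := by ring

end LatticeSums

section Cutoffs

/-- The tent function supported on `[-1, 1]`, whose integer translates sum to `1`. -/
def tent (z : ℝ) : ℝ := max 0 (1 - |z|)

lemma tent_nonneg (z : ℝ) : 0 ≤ tent z := le_max_left _ _

lemma tent_le_one (z : ℝ) : tent z ≤ 1 := max_le zero_le_one (by linarith [abs_nonneg z])

lemma abs_le_one_of_tent_ne_zero {z : ℝ} (h : tent z ≠ 0) : |z| ≤ 1 := by
  by_contra! hz
  exact h (max_eq_left (by linarith))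

lemma lipschitzWith_tent : LipschitzWith 1 tent := by
  refine LipschitzWith.const_max (LipschitzWith.of_dist_le_mul fun z w => ?_) 0
  rw [Real.dist_eq, Real.dist_eq, NNReal.coe_one, one_mul, sub_sub_sub_cancel_left,
    abs_sub_comm z w]
  exact abs_abs_sub_abs_le _ _

lemma sum_tent_add_eq_one (z : ℝ) : ∑ e ∈ ({-⌊z⌋, -⌊z⌋ - 1} : Finset ℤ), tent (z + e) = 1 := by
  have hfloor := Int.floor_le z
  have hlt := Int.lt_floor_add_one z
  rw [Finset.sum_pair (by omega)]
  unfold tent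
  push_cast
  rw [abs_of_nonneg (by linarith : 0 ≤ z + -(⌊z⌋ : ℝ)),
    abs_of_nonpos (by linarith : z + (-(⌊z⌋ : ℝ) - 1) ≤ 0), max_eq_right (by linarith),
    max_eq_right (by linarith)]
  ring

lemma tent_add_eq_zero {z : ℝ} {e : ℤ} (he : e ∉ ({-⌊z⌋, -⌊z⌋ - 1} : Finset ℤ)) :
    tent (z + e) = 0 := by
  have hfloor := Int.floor_le z
  have hlt := Int.lt_floor_add_one z
  simp only [Finset.mem_insert, Finset.mem_singleton, not_or] at he
  refine max_eq_left ?_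
  obtain h | h : e ≤ -⌊z⌋ - 2 ∨ -⌊z⌋ + 1 ≤ e := by omega
  · have h' : (e : ℝ) ≤ -⌊z⌋ - 2 := by exact_mod_cast h
    linarith [neg_le_abs (z + e)]
  · have h' : (-⌊z⌋ + 1 : ℝ) ≤ e := by exact_mod_cast h
    linarith [le_abs_self (z + e)]

lemma tsum_prod_tent_add_eq_one {ι : Type*} [Fintype ι] (z : ι → ℝ) :
    ∑' e : ι → ℤ, ENNReal.ofReal (∏ i, tent (z i + e i)) = 1 := by
  classical
  rw [tsum_eq_sum (s := Fintype.piFinset fun i => ({-⌊z i⌋, -⌊z i⌋ - 1} : Finset ℤ))]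
  · rw [← ENNReal.ofReal_sum_of_nonneg fun _ _ => Finset.prod_nonneg fun _ _ => tent_nonneg _,
      ← Finset.prod_univ_sum (fun i => ({-⌊z i⌋, -⌊z i⌋ - 1} : Finset ℤ))
        (fun i e => tent (z i + e))]
    simp only [sum_tent_add_eq_one, Finset.prod_const_one, ENNReal.ofReal_one]
  · intro e he
    simp only [Fintype.mem_piFinset, not_forall] at he
    obtain ⟨i, hi⟩ := he
    rw [Finset.prod_eq_zero (Finset.mem_univ i) (tent_add_eq_zero hi), ENNReal.ofReal_zero]

lemma abs_prod_sub_prod_le {ι : Type*} (s : Finset ι) {f g : ι → ℝ} (hf0 : ∀ i, 0 ≤ f i)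
    (hf1 : ∀ i, f i ≤ 1) (hg0 : ∀ i, 0 ≤ g i) (hg1 : ∀ i, g i ≤ 1) :
    |∏ i ∈ s, f i - ∏ i ∈ s, g i| ≤ ∑ i ∈ s, |f i - g i| := by
  classical
  induction s using Finset.induction_on with
  | empty => simp
  | insert a s ha ih =>
    have hprod0 : 0 ≤ ∏ i ∈ s, f i := Finset.prod_nonneg fun i _ => hf0 i
    have hprod1 : ∏ i ∈ s, f i ≤ 1 := Finset.prod_le_one (fun i _ => hf0 i) fun i _ => hf1 i
    rw [Finset.prod_insert ha, Finset.prod_insert ha, Finset.sum_insert ha]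
    calc |f a * ∏ i ∈ s, f i - g a * ∏ i ∈ s, g i|
        = |(f a - g a) * ∏ i ∈ s, f i + g a * (∏ i ∈ s, f i - ∏ i ∈ s, g i)| := by ring_nf
      _ ≤ |f a - g a| * ∏ i ∈ s, f i + g a * |∏ i ∈ s, f i - ∏ i ∈ s, g i| := by
          refine (abs_add_le _ _).trans_eq ?_
          rw [abs_mul, abs_mul, abs_of_nonneg hprod0, abs_of_nonneg (hg0 a)]
      _ ≤ |f a - g a| + ∑ i ∈ s, |f i - g i| :=
          add_le_add (mul_le_of_le_one_right (abs_nonneg _) hprod1)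
            ((mul_le_of_le_one_left (abs_nonneg _) (hg1 a)).trans ih)

/-- The cutoff applied to the norm of an ideal. Its Mellin transform is the rational function
`1 / ((s + 1) * (s + 2))`, which has no zeros. -/
def normCutoff (a : ℝ) : ℝ := a * max 0 (1 - a)

lemma normCutoff_nonneg {a : ℝ} (ha : 0 ≤ a) : 0 ≤ normCutoff a :=
  mul_nonneg ha (le_max_left _ _)

lemma normCutoff_le_self {a : ℝ} (ha : 0 ≤ a) : normCutoff a ≤ a :=
  mul_le_of_le_one_right ha (max_le zero_le_one (by linarith))

lemma le_one_of_normCutoff_ne_zero {a : ℝ} (h : normCutoff a ≠ 0) : a ≤ 1 := by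
  by_contra! ha
  exact right_ne_zero_of_mul h (max_eq_left (by linarith))

lemma abs_normCutoff_sub_le {a b : ℝ} (ha : 0 ≤ a) (hb : 0 ≤ b) :
    |normCutoff a - normCutoff b| ≤ |a - b| := by
  wlog hba : b ≤ a generalizing a b
  · rw [abs_sub_comm, abs_sub_comm a]
    exact this hb ha (le_of_not_ge hba)
  unfold normCutoff
  rw [abs_of_nonneg (sub_nonneg.mpr hba), abs_le]
  obtain h1 | h1 := le_total a 1 <;> obtain h2 | h2 := le_total b 1
  · rw [max_eq_right (by linarith), max_eq_right (by linarith)]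
    constructor <;> nlinarith
  · rw [max_eq_right (by linarith), max_eq_left (by linarith)]
    constructor <;> nlinarith
  · rw [max_eq_left (by linarith), max_eq_right (by linarith)]
    constructor <;> nlinarith
  · rw [max_eq_left (by linarith), max_eq_left (by linarith)]
    constructor <;> linarith

end Cutoffs

section UnitCutoff

open Module NumberField NumberField.mixedEmbedding NumberField.Units
  NumberField.Units.dirichletUnitTheorem
open scoped Classical NNReal

variable (K : Type*) [Field K] [NumberField K]

/-- The basis of the logarithmic space given by the images of the fundamental units. -/
def unitLogBasis : Basis (Fin (rank K)) ℝ (logSpace K) :=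
  (basisUnitLattice K).ofZLatticeBasis ℝ (unitLattice K)

variable {K}

/-- A cutoff on the logarithmic space whose translates by the unit lattice sum to `1`. -/
def unitCutoff (h : logSpace K) : ℝ := ∏ i, tent ((unitLogBasis K).repr h i)

lemma unitCutoff_nonneg (h : logSpace K) : 0 ≤ unitCutoff h :=
  Finset.prod_nonneg fun _ _ => tent_nonneg _

lemma unitCutoff_le_one (h : logSpace K) : unitCutoff h ≤ 1 :=
  Finset.prod_le_one (fun _ _ => tent_nonneg _) fun _ _ => tent_le_one _

lemma unitCutoff_zero : unitCutoff (0 : logSpace K) = 1 := by simp [unitCutoff, tent]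

variable (K) in
lemma exists_lipschitzWith_unitCutoff :
    ∃ A : ℝ≥0, LipschitzWith A (unitCutoff (K := K)) := by
  refine ⟨∑ i, ‖LinearMap.toContinuousLinearMap ((unitLogBasis K).coord i)‖₊,
    LipschitzWith.of_dist_le_mul fun h h' => ?_⟩
  rw [Real.dist_eq, NNReal.coe_sum, Finset.sum_mul]
  refine (abs_prod_sub_prod_le _ (fun _ => tent_nonneg _) (fun _ => tent_le_one _)
    (fun _ => tent_nonneg _) fun _ => tent_le_one _).trans (Finset.sum_le_sum fun i _ => ?_)
  calc |tent ((unitLogBasis K).repr h i) - tent ((unitLogBasis K).repr h' i)|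
      ≤ |(unitLogBasis K).repr h i - (unitLogBasis K).repr h' i| := by
        simpa [Real.dist_eq] using lipschitzWith_tent.dist_le_mul _ _
    _ ≤ ‖LinearMap.toContinuousLinearMap ((unitLogBasis K).coord i)‖ * ‖h - h'‖ := by
        simpa using
          (LinearMap.toContinuousLinearMap ((unitLogBasis K).coord i)).le_opNorm (h - h')
    _ = _ := by rw [coe_nnnorm, dist_eq_norm]

lemma norm_le_of_unitCutoff_ne_zero {h : logSpace K} (hh : unitCutoff h ≠ 0) :
    ‖h‖ ≤ ∑ i, ‖unitLogBasis K i‖ := by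
  have hrepr : ∀ i, |(unitLogBasis K).repr h i| ≤ 1 := fun i =>
    abs_le_one_of_tent_ne_zero (Finset.prod_ne_zero_iff.mp hh i (Finset.mem_univ i))
  rw [← (unitLogBasis K).sum_repr h]
  refine (norm_sum_le _ _).trans (Finset.sum_le_sum fun i _ => ?_)
  rw [_root_.norm_smul, Real.norm_eq_abs]
  exact mul_le_of_le_one_left (norm_nonneg _) (hrepr i)

end UnitCutoff

section GeneratorWeight

open MeasureTheory Module NumberField NumberField.mixedEmbedding NumberField.Units
  NumberField.Units.dirichletUnitTheorem NumberField.InfinitePlace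
open scoped Classical NNReal

lemma abs_log_sub_log_le {a b r : ℝ} (hr : 0 < r) (ha : r ≤ a) (hb : r ≤ b) :
    |Real.log a - Real.log b| ≤ |a - b| / r := by
  wlog h : b ≤ a generalizing a b
  · rw [abs_sub_comm, abs_sub_comm a b]
    exact this hb ha (le_of_not_ge h)
  have hb0 : 0 < b := hr.trans_le hb
  have ha0 : 0 < a := hr.trans_le ha
  rw [abs_of_nonneg (sub_nonneg.mpr (Real.log_le_log hb0 h)), abs_of_nonneg (sub_nonneg.mpr h),
    ← Real.log_div ha0.ne' hb0.ne']
  calc Real.log (a / b) ≤ a / b - 1 := Real.log_le_sub_one_of_pos (by positivity)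
    _ = (a - b) / b := by field_simp
    _ ≤ (a - b) / r := div_le_div_of_nonneg_left (sub_nonneg.mpr h) hr hb

lemma abs_sub_le_mul_exp {a b c : ℝ} (ha : 0 < a) (hb : 0 < b)
    (hc : |Real.log a - Real.log b| ≤ c) : |a - b| ≤ a * (c * Real.exp c) := by
  have hc0 : 0 ≤ c := (abs_nonneg _).trans hc
  have hexp := Complex.norm_exp_sub_sum_le_norm_mul_exp ((Real.log b - Real.log a : ℝ) : ℂ) 1
  rw [Finset.sum_range_one, pow_zero, Nat.factorial_zero, Nat.cast_one, div_one, pow_one,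
    ← Complex.ofReal_exp, ← Complex.ofReal_one, ← Complex.ofReal_sub, Complex.norm_real,
    Complex.norm_real, Real.norm_eq_abs, Real.norm_eq_abs, Real.exp_sub, Real.exp_log ha,
    Real.exp_log hb, abs_sub_comm (Real.log b)] at hexp
  calc |a - b| = a * |b / a - 1| := by
        rw [abs_sub_comm, ← abs_of_pos ha, ← abs_mul, abs_of_pos ha]
        congr 1
        field_simp
    _ ≤ a * (c * Real.exp c) := by
        gcongr
        exact hexp.trans (by gcongr)

variable {K : Type*} [Field K] [NumberField K]

lemma normAtPlace_le_norm (w : InfinitePlace K) (x : mixedSpace K) : normAtPlace w x ≤ ‖x‖ := by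
  rw [norm_eq_sup'_normAtPlace]
  exact Finset.le_sup' (fun w => normAtPlace w x) (Finset.mem_univ w)

lemma abs_normAtPlace_sub_le (w : InfinitePlace K) (x y : mixedSpace K) :
    |normAtPlace w x - normAtPlace w y| ≤ ‖x - y‖ := by
  have hle (x y : mixedSpace K) : normAtPlace w x - normAtPlace w y ≤ ‖x - y‖ := by
    have htri := normAtPlace_add_le w y (x - y)
    rw [add_sub_cancel] at htri
    linarith [normAtPlace_le_norm w (x - y)]
  exact abs_sub_le_iff.mpr ⟨hle x y, norm_sub_rev x y ▸ hle y x⟩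

lemma log_norm_eq_sum {x : mixedSpace K} (hx : mixedEmbedding.norm x ≠ 0) :
    Real.log (mixedEmbedding.norm x) = ∑ w, (mult w : ℝ) * Real.log (normAtPlace w x) := by
  rw [mixedEmbedding.norm_apply, Real.log_prod fun w _ =>
    pow_ne_zero _ (mixedEmbedding.norm_ne_zero_iff.mp hx w)]
  simp only [Real.log_pow]

lemma sum_mult_mul_log_sub_eq_zero {x : mixedSpace K} (hx : mixedEmbedding.norm x ≠ 0) :
    ∑ w : InfinitePlace K, (mult w : ℝ) * (Real.log (normAtPlace w x) -
      Real.log (mixedEmbedding.norm x) * (finrank ℚ K : ℝ)⁻¹) = 0 := by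
  simp only [mul_sub, Finset.sum_sub_distrib, ← Finset.sum_mul]
  rw [← log_norm_eq_sum hx, ← Nat.cast_sum, sum_mult_eq, mul_left_comm, mul_inv_cancel₀
    (Nat.cast_ne_zero.mpr finrank_pos.ne'), mul_one, sub_self]

lemma abs_log_normAtPlace_sub_le {x : mixedSpace K} (hx : mixedEmbedding.norm x ≠ 0)
    (w : InfinitePlace K) : |Real.log (normAtPlace w x) -
      Real.log (mixedEmbedding.norm x) * (finrank ℚ K : ℝ)⁻¹| ≤
    (1 + Fintype.card (InfinitePlace K)) * ‖logMap x‖ := by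
  set d : InfinitePlace K → ℝ := fun w => Real.log (normAtPlace w x) -
    Real.log (mixedEmbedding.norm x) * (finrank ℚ K : ℝ)⁻¹
  have hmult (w : InfinitePlace K) : |d w| ≤ |mult w * d w| := by
    rw [abs_mul, Nat.abs_cast]
    exact le_mul_of_one_le_left (abs_nonneg _) (by exact_mod_cast mult_pos)
  have hne (w : InfinitePlace K) (hw : w ≠ w₀) : |mult w * d w| ≤ ‖logMap x‖ := by
    simpa only [logMap_apply, Real.norm_eq_abs] using norm_le_pi_norm (logMap x) ⟨w, hw⟩
  have hw₀ : |mult (w₀ : InfinitePlace K) * d w₀| ≤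
      Fintype.card (InfinitePlace K) * ‖logMap x‖ := by
    have hsum := sum_mult_mul_log_sub_eq_zero hx
    rw [← Finset.add_sum_erase _ _ (Finset.mem_univ w₀)] at hsum
    rw [eq_neg_of_add_eq_zero_left hsum, abs_neg]
    calc |∑ v ∈ Finset.univ.erase w₀, mult v * d v|
        ≤ ∑ v ∈ Finset.univ.erase w₀, |mult v * d v| := Finset.abs_sum_le_sum_abs _ _
      _ ≤ (Finset.univ.erase w₀).card • ‖logMap x‖ :=
          Finset.sum_le_card_nsmul _ _ _ fun v hv => hne v (Finset.ne_of_mem_erase hv)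
      _ ≤ Fintype.card (InfinitePlace K) * ‖logMap x‖ := by
          rw [nsmul_eq_mul]
          gcongr
          exact Finset.card_le_univ _
  have hcard : 0 ≤ (Fintype.card (InfinitePlace K) : ℝ) * ‖logMap x‖ := by positivity
  by_cases h : w = w₀
  · subst h
    linarith [hmult w₀, norm_nonneg (logMap x)]
  · linarith [hmult w, hne w h]

section Near

variable {x y : mixedSpace K} {r : ℝ} (hr : 0 < r) (hx : ∀ w, r ≤ normAtPlace w x)
  (hy : ∀ w, r ≤ normAtPlace w y)

include hr hx in
lemma norm_pos_of_le_normAtPlace : 0 < mixedEmbedding.norm x :=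
  (mixedEmbedding.norm_nonneg x).lt_of_ne' <|
    mixedEmbedding.norm_ne_zero_iff.mpr fun w => (hr.trans_le (hx w)).ne'

include hr hx hy

lemma abs_log_normAtPlace_sub_log_le (w : InfinitePlace K) :
    |Real.log (normAtPlace w x) - Real.log (normAtPlace w y)| ≤ ‖x - y‖ / r :=
  (abs_log_sub_log_le hr (hx w) (hy w)).trans (by gcongr; exact abs_normAtPlace_sub_le w x y)

lemma abs_log_norm_sub_log_le :
    |Real.log (mixedEmbedding.norm x) - Real.log (mixedEmbedding.norm y)| ≤
      finrank ℚ K * (‖x - y‖ / r) := by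
  rw [log_norm_eq_sum (norm_pos_of_le_normAtPlace hr hx).ne',
    log_norm_eq_sum (norm_pos_of_le_normAtPlace hr hy).ne', ← Finset.sum_sub_distrib,
    ← sum_mult_eq, Nat.cast_sum, Finset.sum_mul]
  refine (Finset.abs_sum_le_sum_abs _ _).trans (Finset.sum_le_sum fun w _ => ?_)
  rw [← mul_sub, abs_mul, Nat.abs_cast]
  gcongr
  exact abs_log_normAtPlace_sub_log_le hr hx hy w

lemma norm_logMap_sub_le : ‖logMap x - logMap y‖ ≤ 4 * (‖x - y‖ / r) := by
  set e := ‖x - y‖ / r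
  have : 0 ≤ e := by positivity
  have hn : (0 : ℝ) < finrank ℚ K := by exact_mod_cast finrank_pos
  refine (pi_norm_le_iff_of_nonneg (by positivity)).mpr fun w => ?_
  have hmult : (mult w.1 : ℝ) ≤ 2 := by
    unfold mult
    split_ifs <;> norm_num
  have hlog := abs_log_normAtPlace_sub_log_le hr hx hy w.1
  have hlogN : |Real.log (mixedEmbedding.norm x) - Real.log (mixedEmbedding.norm y)| *
      (finrank ℚ K : ℝ)⁻¹ ≤ e := by
    rw [← div_eq_mul_inv, div_le_iff₀' hn]
    exact abs_log_norm_sub_log_le hr hx hy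
  rw [Pi.sub_apply, logMap_apply, logMap_apply, Real.norm_eq_abs, ← mul_sub, abs_mul,
    Nat.abs_cast, sub_sub_sub_comm, ← sub_mul]
  calc (mult w.1 : ℝ) * |Real.log (normAtPlace w.1 x) - Real.log (normAtPlace w.1 y) -
        (Real.log (mixedEmbedding.norm x) - Real.log (mixedEmbedding.norm y)) *
          (finrank ℚ K : ℝ)⁻¹|
      ≤ 2 * (e + e) := by
        gcongr
        refine (abs_sub _ _).trans (add_le_add hlog ?_)
        rwa [abs_mul, abs_inv, Nat.abs_cast]
    _ = 4 * e := by ring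

end Near

/-- The compactly supported Lipschitz weight whose sum over the generators of a principal ideal
is `torsionOrder K` times `normCutoff` of the norm of the ideal. -/
def generatorWeight (x : mixedSpace K) : ℝ :=
  unitCutoff (logMap x) * normCutoff (mixedEmbedding.norm x)

lemma generatorWeight_nonneg (x : mixedSpace K) : 0 ≤ generatorWeight x :=
  mul_nonneg (unitCutoff_nonneg _) (normCutoff_nonneg (mixedEmbedding.norm_nonneg x))

lemma generatorWeight_le_norm (x : mixedSpace K) : generatorWeight x ≤ mixedEmbedding.norm x :=
  (mul_le_of_le_one_left (normCutoff_nonneg (mixedEmbedding.norm_nonneg x))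
    (unitCutoff_le_one _)).trans (normCutoff_le_self (mixedEmbedding.norm_nonneg x))

lemma generatorWeight_zero : generatorWeight (0 : mixedSpace K) = 0 := by
  simp [generatorWeight, normCutoff]

lemma norm_ne_zero_of_generatorWeight_ne_zero {x : mixedSpace K} (h : generatorWeight x ≠ 0) :
    mixedEmbedding.norm x ≠ 0 :=
  left_ne_zero_of_mul (right_ne_zero_of_mul h)

lemma generatorWeight_inv_smul {t : ℝ} (ht : 0 < t) {x : mixedSpace K}
    (hx : mixedEmbedding.norm x ≠ 0) : generatorWeight (t⁻¹ • x) =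
      unitCutoff (logMap x) * normCutoff (mixedEmbedding.norm x / t ^ finrank ℚ K) := by
  rw [generatorWeight, logMap_real_smul hx (inv_ne_zero ht.ne'), mixedEmbedding.norm_smul,
    abs_of_pos (inv_pos.mpr ht), inv_pow, div_eq_inv_mul]

variable (K) in
lemma exists_comparable_of_generatorWeight_ne_zero : ∃ c : ℝ, 0 < c ∧ ∀ x : mixedSpace K,
    generatorWeight x ≠ 0 → ∃ m : ℝ, 0 < m ∧ m ≤ 1 ∧ mixedEmbedding.norm x ≤ m ∧
      ∀ w, c * m ≤ normAtPlace w x ∧ normAtPlace w x ≤ c⁻¹ * m := by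
  set A : ℝ := (1 + Fintype.card (InfinitePlace K)) * ∑ i, ‖unitLogBasis K i‖
  refine ⟨Real.exp (-A), Real.exp_pos _, fun x hx => ?_⟩
  have hN0 := norm_ne_zero_of_generatorWeight_ne_zero hx
  have hN : 0 < mixedEmbedding.norm x := (mixedEmbedding.norm_nonneg x).lt_of_ne' hN0
  have hN1 := le_one_of_normCutoff_ne_zero (right_ne_zero_of_mul hx)
  have hn : (1 : ℝ) ≤ finrank ℚ K := by exact_mod_cast finrank_pos
  have hlogN : Real.log (mixedEmbedding.norm x) ≤ 0 := Real.log_nonpos hN.le hN1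
  refine ⟨Real.exp (Real.log (mixedEmbedding.norm x) * (finrank ℚ K : ℝ)⁻¹), Real.exp_pos _,
    ?_, ?_, fun w => ?_⟩
  · exact Real.exp_le_one_iff.mpr (mul_nonpos_of_nonpos_of_nonneg hlogN (by positivity))
  · rw [← Real.log_le_iff_le_exp hN, ← div_eq_mul_inv, le_div_iff₀ (by linarith)]
    nlinarith
  · have hw : 0 < normAtPlace w x :=
      (normAtPlace_nonneg w x).lt_of_ne' (mixedEmbedding.norm_ne_zero_iff.mp hN0 w)
    have hcomp := abs_le.mp ((abs_log_normAtPlace_sub_le hN0 w).trans <|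
      mul_le_mul_of_nonneg_left (norm_le_of_unitCutoff_ne_zero (left_ne_zero_of_mul hx))
        (by positivity))
    rw [← Real.exp_neg, neg_neg, ← Real.exp_add, ← Real.exp_add, ← Real.le_log_iff_exp_le hw,
      ← Real.log_le_iff_le_exp hw]
    constructor <;> linarith [hcomp.1, hcomp.2]

lemma abs_generatorWeight_sub_le_of_near {A : ℝ≥0} (hA : LipschitzWith A (unitCutoff (K := K)))
    {x y : mixedSpace K} {r : ℝ} (hr : 0 < r) (hx : ∀ w, r ≤ normAtPlace w x)
    (hy : ∀ w, r ≤ normAtPlace w y) (hxy : ‖x - y‖ ≤ r) :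
    |generatorWeight x - generatorWeight y| ≤
      mixedEmbedding.norm x * ((4 * A + finrank ℚ K * Real.exp (finrank ℚ K)) *
        (‖x - y‖ / r)) := by
  set e := ‖x - y‖ / r
  set n : ℝ := (finrank ℚ K : ℝ)
  have : 0 ≤ e := by positivity
  have hn0 : 0 ≤ n := Nat.cast_nonneg _
  have hNx := norm_pos_of_le_normAtPlace hr hx
  have hNy := norm_pos_of_le_normAtPlace hr hy
  have hne : n * e ≤ n := mul_le_of_le_one_right hn0 ((div_le_one hr).mpr hxy)
  have hunit : |unitCutoff (logMap x) - unitCutoff (logMap y)| ≤ A * (4 * e) := by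
    rw [← Real.dist_eq]
    refine (hA.dist_le_mul _ _).trans ?_
    rw [dist_eq_norm]
    gcongr
    exact norm_logMap_sub_le hr hx hy
  have hnorm : |normCutoff (mixedEmbedding.norm x) - normCutoff (mixedEmbedding.norm y)| ≤
      mixedEmbedding.norm x * (n * e * Real.exp n) := by
    refine (abs_normCutoff_sub_le hNx.le hNy.le).trans <|
      (abs_sub_le_mul_exp hNx hNy (abs_log_norm_sub_log_le hr hx hy)).trans ?_
    gcongr
  calc |generatorWeight x - generatorWeight y|
      = |(unitCutoff (logMap x) - unitCutoff (logMap y)) * normCutoff (mixedEmbedding.norm x) +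
          unitCutoff (logMap y) *
            (normCutoff (mixedEmbedding.norm x) - normCutoff (mixedEmbedding.norm y))| := by
        unfold generatorWeight
        ring_nf
    _ ≤ A * (4 * e) * mixedEmbedding.norm x +
          1 * (mixedEmbedding.norm x * (n * e * Real.exp n)) := by
        refine (abs_add_le _ _).trans ?_
        rw [abs_mul, abs_mul, abs_of_nonneg (normCutoff_nonneg hNx.le),
          abs_of_nonneg (unitCutoff_nonneg _)]
        gcongr
        · exact normCutoff_nonneg hNx.le
        · exact normCutoff_le_self hNx.le
        · exact unitCutoff_le_one _
    _ = mixedEmbedding.norm x * ((4 * A + n * Real.exp n) * e) := by ring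

variable (K) in
lemma exists_abs_generatorWeight_sub_le : ∃ C : ℝ≥0, ∀ x y : mixedSpace K,
    generatorWeight x ≠ 0 →
    (generatorWeight y ≠ 0 → mixedEmbedding.norm y ≤ mixedEmbedding.norm x) →
    |generatorWeight x - generatorWeight y| ≤ C * ‖x - y‖ := by
  obtain ⟨c, hc, hcomp⟩ := exists_comparable_of_generatorWeight_ne_zero K
  obtain ⟨A, hA⟩ := exists_lipschitzWith_unitCutoff K
  set B : ℝ := 4 * A + finrank ℚ K * Real.exp (finrank ℚ K)
  refine ⟨Real.toNNReal ((1 + B) * (2 / c)), fun x y hx hxy => ?_⟩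
  rw [Real.coe_toNNReal _ (by positivity)]
  obtain ⟨m, hm, -, hNm, hw⟩ := hcomp x hx
  have hB : 0 ≤ B := by positivity
  have hr : 0 < c / 2 * m := by positivity
  have hscale : m * (‖x - y‖ / (c / 2 * m)) = 2 / c * ‖x - y‖ := by field_simp
  have hD : 0 ≤ 2 / c * ‖x - y‖ := by positivity
  obtain hfar | hnear := le_or_gt (c / 2 * m) ‖x - y‖
  · have hy : generatorWeight y ≤ m := by
      by_cases hy : generatorWeight y = 0
      · exact hy.trans_le hm.le
      · exact (generatorWeight_le_norm y).trans ((hxy hy).trans hNm)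
    calc |generatorWeight x - generatorWeight y| ≤ m :=
          abs_sub_le_iff.mpr ⟨by linarith [generatorWeight_nonneg y, generatorWeight_le_norm x],
            by linarith [generatorWeight_nonneg x]⟩
      _ ≤ m * (‖x - y‖ / (c / 2 * m)) :=
          le_mul_of_one_le_right hm.le ((one_le_div hr).mpr hfar)
      _ ≤ (1 + B) * (2 / c) * ‖x - y‖ := by nlinarith
  · have hx' (w) : c / 2 * m ≤ normAtPlace w x := by linarith [(hw w).1]
    have hy' (w) : c / 2 * m ≤ normAtPlace w y := by
      linarith [(hw w).1, (abs_le.mp (abs_normAtPlace_sub_le w x y)).2]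
    calc |generatorWeight x - generatorWeight y|
        ≤ mixedEmbedding.norm x * (B * (‖x - y‖ / (c / 2 * m))) :=
          abs_generatorWeight_sub_le_of_near hA hr hx' hy' hnear.le
      _ ≤ m * (B * (‖x - y‖ / (c / 2 * m))) := by gcongr
      _ ≤ (1 + B) * (2 / c) * ‖x - y‖ := by
          rw [mul_left_comm, hscale]
          nlinarith

variable (K) in
lemma exists_lipschitzWith_generatorWeight :
    ∃ C : ℝ≥0, LipschitzWith C (generatorWeight (K := K)) := by
  obtain ⟨C, hC⟩ := exists_abs_generatorWeight_sub_le K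
  refine ⟨C, LipschitzWith.of_dist_le_mul fun x y => ?_⟩
  rw [Real.dist_eq, dist_eq_norm]
  by_cases hx : generatorWeight x = 0
  · by_cases hy : generatorWeight y = 0
    · rw [hx, hy, sub_self, abs_zero]
      positivity
    · rw [abs_sub_comm, norm_sub_rev]
      exact hC y x hy (absurd hx)
  · obtain h | h := le_total (mixedEmbedding.norm y) (mixedEmbedding.norm x)
    · exact hC x y hx fun _ => h
    · by_cases hy : generatorWeight y = 0
      · exact hC x y hx (absurd hy)
      · rw [abs_sub_comm, norm_sub_rev]
        exact hC y x hy fun _ => h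

lemma hasCompactSupport_generatorWeight : HasCompactSupport (generatorWeight (K := K)) := by
  obtain ⟨c, hc, hcomp⟩ := exists_comparable_of_generatorWeight_ne_zero K
  refine HasCompactSupport.intro (isCompact_closedBall 0 c⁻¹) fun x hx => ?_
  contrapose! hx
  obtain ⟨m, -, hm, -, hw⟩ := hcomp x hx
  rw [mem_closedBall_zero_iff, norm_eq_sup'_normAtPlace]
  exact Finset.sup'_le _ _ fun w _ =>
    (hw w).2.trans (mul_le_of_le_one_right (by positivity) hm)

lemma generatorWeight_half_smul_one_ne_zero :
    generatorWeight ((1 / 2 : ℝ) • (1 : mixedSpace K)) ≠ 0 := by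
  have hlog : logMap ((1 / 2 : ℝ) • (1 : mixedSpace K)) = 0 := by
    rw [logMap_real_smul (by simp) (by norm_num), logMap_one]
  have hpow : ((1 / 2 : ℝ)) ^ finrank ℚ K < 1 :=
    pow_lt_one₀ (by norm_num) (by norm_num) finrank_pos.ne'
  rw [generatorWeight, hlog, unitCutoff_zero, one_mul, mixedEmbedding.norm_smul, map_one, mul_one,
    abs_of_pos one_half_pos, normCutoff, max_eq_right (by linarith)]
  exact (mul_pos (by positivity) (by linarith)).ne'

variable (K) in
lemma integral_generatorWeight_pos : 0 < ∫ x : mixedSpace K, generatorWeight x := by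
  obtain ⟨C, hC⟩ := exists_lipschitzWith_generatorWeight K
  exact hC.continuous.integral_pos_of_hasCompactSupport_nonneg_nonzero
    hasCompactSupport_generatorWeight generatorWeight_nonneg
    generatorWeight_half_smul_one_ne_zero

end GeneratorWeight

section IdealCounting

open MeasureTheory Module NumberField NumberField.mixedEmbedding NumberField.Units
  NumberField.Units.dirichletUnitTheorem
open scoped NNReal nonZeroDivisors

variable {K : Type*} [Field K] [NumberField K]

variable (K) in
/-- Dirichlet's unit theorem: every unit is uniquely a root of unity times a product of powers
of the fundamental units. -/
def unitsEquivTorsionProd : torsion K × (Fin (rank K) → ℤ) ≃ (𝓞 K)ˣ :=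
  Equiv.ofBijective (fun ζe => (ζe.1 : (𝓞 K)ˣ) * ∏ i, fundSystem K i ^ ζe.2 i)
    ⟨fun a b hab => (exist_unique_eq_mul_prod K _).unique (y₁ := a) (y₂ := b) rfl hab,
      fun u => (exist_unique_eq_mul_prod K u).exists.imp fun _ h => h.symm⟩

lemma logEmbedding_unitsEquivTorsionProd (p : torsion K × (Fin (rank K) → ℤ)) :
    logEmbedding K (Additive.ofMul (unitsEquivTorsionProd K p)) =
      ∑ i, (p.2 i : ℝ) • unitLogBasis K i := by
  have htorsion : logEmbedding K (Additive.ofMul (p.1 : (𝓞 K)ˣ)) = 0 :=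
    logEmbedding_eq_zero_iff.mpr p.1.2
  change logEmbedding K (Additive.ofMul ((p.1 : (𝓞 K)ˣ) * ∏ i, fundSystem K i ^ p.2 i)) = _
  rw [ofMul_mul, map_add, htorsion, zero_add, ofMul_prod, map_sum]
  refine Finset.sum_congr rfl fun i _ => ?_
  rw [ofMul_zpow, map_zsmul, logEmbedding_fundSystem, unitLogBasis, Basis.ofZLatticeBasis_apply,
    Int.cast_smul_eq_zsmul]

lemma tsum_unitCutoff_logMap_smul {x : mixedSpace K} (hx : mixedEmbedding.norm x ≠ 0) :
    ∑' u : (𝓞 K)ˣ, ENNReal.ofReal (unitCutoff (logMap (u • x))) = torsionOrder K := by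
  have htent (p : torsion K × (Fin (rank K) → ℤ)) :
      unitCutoff (logMap (unitsEquivTorsionProd K p • x)) =
        ∏ i, tent ((unitLogBasis K).repr (logMap x) i + p.2 i) := by
    rw [logMap_unit_smul _ hx, logEmbedding_unitsEquivTorsionProd, unitCutoff]
    refine Finset.prod_congr rfl fun i _ => ?_
    rw [map_add, Finsupp.add_apply, add_comm, Basis.repr_sum_self]
  rw [← (unitsEquivTorsionProd K).tsum_eq]
  simp only [htent]
  rw [ENNReal.tsum_prod']
  simp only [tsum_prod_tent_add_eq_one]
  rw [ENNReal.tsum_one, torsionOrder]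
  simp [ENat.card_eq_coe_natCard]

lemma norm_mixedEmbedding (a : 𝓞 K) :
    mixedEmbedding.norm (mixedEmbedding K a) = Ideal.absNorm (Ideal.span {a}) := by
  rw [mixedEmbedding.norm_eq_norm, Ideal.absNorm_span_singleton, Nat.cast_natAbs,
    ← Algebra.coe_norm_int]
  push_cast
  rfl

/-- The generators of a principal ideal form a torsor under the units. -/
def unitsEquivGenerators {a₀ : 𝓞 K} (ha₀ : a₀ ≠ 0) :
    (𝓞 K)ˣ ≃ {a : 𝓞 K // Ideal.span {a} = Ideal.span {a₀}} :=
  Equiv.ofBijective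
    (fun u => ⟨u * a₀, Ideal.span_singleton_eq_span_singleton.mpr
      (associated_unit_mul_left _ _ u.isUnit)⟩)
    ⟨fun _ _ h => Units.ext (mul_right_cancel₀ ha₀ (congrArg Subtype.val h)), by
      rintro ⟨a, ha⟩
      obtain ⟨u, hu⟩ := (Ideal.span_singleton_eq_span_singleton.mp ha).symm
      exact ⟨u, Subtype.ext ((mul_comm _ _).trans hu)⟩⟩

lemma tsum_generatorWeight_generators {a₀ : 𝓞 K} (ha₀ : a₀ ≠ 0) {t : ℝ} (ht : 0 < t) :
    ∑' a : {a : 𝓞 K // Ideal.span {a} = Ideal.span {a₀}},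
      ENNReal.ofReal (generatorWeight (t⁻¹ • mixedEmbedding K (a : 𝓞 K))) =
    torsionOrder K * ENNReal.ofReal
      (normCutoff (Ideal.absNorm (Ideal.span {a₀}) / t ^ finrank ℚ K)) := by
  have hN : mixedEmbedding.norm (mixedEmbedding K a₀) ≠ 0 := by
    rwa [norm_mixedEmbedding, Nat.cast_ne_zero, Ne, Ideal.absNorm_eq_zero_iff,
      Ideal.span_singleton_eq_bot]
  have hweight (u : (𝓞 K)ˣ) :
      generatorWeight (t⁻¹ • mixedEmbedding K ((unitsEquivGenerators ha₀ u : 𝓞 K) : K)) =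
        unitCutoff (logMap (u • mixedEmbedding K (a₀ : K))) *
          normCutoff (Ideal.absNorm (Ideal.span {a₀}) / t ^ finrank ℚ K) := by
    have hsmul : u • mixedEmbedding K (a₀ : K) =
        mixedEmbedding K ((unitsEquivGenerators ha₀ u : 𝓞 K) : K) :=
      (unit_smul_eq_iff_mul_eq ..).mpr rfl
    rw [← hsmul, generatorWeight_inv_smul ht (by rwa [norm_unit_smul]), norm_unit_smul,
      norm_mixedEmbedding]
  rw [← (unitsEquivGenerators ha₀).tsum_eq]
  simp only [hweight, ENNReal.ofReal_mul (unitCutoff_nonneg _)]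
  rw [ENNReal.tsum_mul_right, tsum_unitCutoff_logMap_smul hN]

lemma mk0_eq_inv_iff {I J : (Ideal (𝓞 K))⁰} :
    ClassGroup.mk0 I = (ClassGroup.mk0 J)⁻¹ ↔
      ∃ a : 𝓞 K, Ideal.span {a} = (J : Ideal (𝓞 K)) * (I : Ideal (𝓞 K)) := by
  rw [eq_inv_iff_mul_eq_one, ← map_mul, mul_comm, ClassGroup.mk0_eq_one_iff (J * I).2]
  exact ⟨fun ⟨a, ha⟩ => ⟨a, ha.symm⟩, fun ⟨a, ha⟩ => ⟨a, ha.symm⟩⟩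

lemma ne_zero_and_mem_of_span_singleton_eq_mul {I J : (Ideal (𝓞 K))⁰} {a : 𝓞 K}
    (ha : Ideal.span {a} = (J : Ideal (𝓞 K)) * (I : Ideal (𝓞 K))) :
    a ≠ 0 ∧ a ∈ (J : Ideal (𝓞 K)) := by
  refine ⟨?_, Ideal.dvd_span_singleton.mp ⟨_, ha⟩⟩
  rintro rfl
  exact nonZeroDivisors.coe_ne_zero (J * I)
    (ha.symm.trans (Ideal.span_singleton_eq_bot.mpr rfl))

lemma exists_span_singleton_eq_mul {J : (Ideal (𝓞 K))⁰} {a : 𝓞 K} (ha : a ≠ 0)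
    (haJ : a ∈ (J : Ideal (𝓞 K))) :
    ∃ I : (Ideal (𝓞 K))⁰, Ideal.span {a} = (J : Ideal (𝓞 K)) * (I : Ideal (𝓞 K)) := by
  obtain ⟨I, hI⟩ := Ideal.dvd_span_singleton.mpr haJ
  have hI0 : I ≠ 0 := by
    rintro rfl
    exact ha (Ideal.span_singleton_eq_bot.mp (hI.trans (mul_zero _)))
  exact ⟨⟨I, mem_nonZeroDivisors_of_ne_zero hI0⟩, hI⟩

/-- A nonzero element of `J` is a generator of `J * I` for a unique ideal `I`, which lies in the
class inverse to that of `J`. -/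
def sigmaGeneratorsEquiv (J : (Ideal (𝓞 K))⁰) :
    (Σ I : {I : (Ideal (𝓞 K))⁰ // ClassGroup.mk0 I = (ClassGroup.mk0 J)⁻¹},
      {a : 𝓞 K // Ideal.span {a} = (J : Ideal (𝓞 K)) * (I.1 : Ideal (𝓞 K))}) ≃
    {a : 𝓞 K // a ≠ 0 ∧ a ∈ (J : Ideal (𝓞 K))} :=
  Equiv.ofBijective (fun p => ⟨p.2.1, ne_zero_and_mem_of_span_singleton_eq_mul p.2.2⟩) <| by
    constructor
    · rintro ⟨⟨I, hI⟩, a, ha⟩ ⟨⟨I', hI'⟩, a', ha'⟩ h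
      obtain rfl : a = a' := congrArg Subtype.val h
      have hII' : (I : Ideal (𝓞 K)) = I' :=
        mul_left_cancel₀ (nonZeroDivisors.coe_ne_zero J) (ha.symm.trans ha')
      obtain rfl : I = I' := Subtype.ext hII'
      rfl
    · rintro ⟨a, ha, haJ⟩
      obtain ⟨I, hI⟩ := exists_span_singleton_eq_mul ha haJ
      exact ⟨⟨⟨I, mk0_eq_inv_iff.mpr ⟨a, hI⟩⟩, a, hI⟩, rfl⟩

lemma tsum_generatorWeight_ideal (J : (Ideal (𝓞 K))⁰) {t : ℝ} (ht : 0 < t) :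
    ∑' a : {a : 𝓞 K // a ≠ 0 ∧ a ∈ (J : Ideal (𝓞 K))},
      generatorWeight (t⁻¹ • mixedEmbedding K (a : 𝓞 K)) =
    torsionOrder K * ∑' I : {I : (Ideal (𝓞 K))⁰ // ClassGroup.mk0 I = (ClassGroup.mk0 J)⁻¹},
      normCutoff (Ideal.absNorm (J : Ideal (𝓞 K)) * Ideal.absNorm (I.1 : Ideal (𝓞 K)) /
        t ^ finrank ℚ K) := by
  have hfiber (I : {I : (Ideal (𝓞 K))⁰ // ClassGroup.mk0 I = (ClassGroup.mk0 J)⁻¹}) :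
      ∑' a : {a : 𝓞 K // Ideal.span {a} = (J : Ideal (𝓞 K)) * (I.1 : Ideal (𝓞 K))},
        ENNReal.ofReal (generatorWeight (t⁻¹ • mixedEmbedding K (a : 𝓞 K))) =
      torsionOrder K * ENNReal.ofReal (normCutoff
        (Ideal.absNorm (J : Ideal (𝓞 K)) * Ideal.absNorm (I.1 : Ideal (𝓞 K)) /
          t ^ finrank ℚ K)) := by
    obtain ⟨a₀, ha₀⟩ := mk0_eq_inv_iff.mp I.2
    rw [← Nat.cast_mul, ← map_mul, ← ha₀]
    exact tsum_generatorWeight_generators (ne_zero_and_mem_of_span_singleton_eq_mul ha₀).1 ht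
  have hsum : ∑' a : {a : 𝓞 K // a ≠ 0 ∧ a ∈ (J : Ideal (𝓞 K))},
      ENNReal.ofReal (generatorWeight (t⁻¹ • mixedEmbedding K (a : 𝓞 K))) =
      torsionOrder K * ∑' I : {I : (Ideal (𝓞 K))⁰ // ClassGroup.mk0 I = (ClassGroup.mk0 J)⁻¹},
        ENNReal.ofReal (normCutoff (Ideal.absNorm (J : Ideal (𝓞 K)) *
          Ideal.absNorm (I.1 : Ideal (𝓞 K)) / t ^ finrank ℚ K)) := by
    rw [← (sigmaGeneratorsEquiv J).tsum_eq, ENNReal.tsum_sigma', ← ENNReal.tsum_mul_left]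
    exact tsum_congr hfiber
  apply_fun ENNReal.toReal at hsum
  rw [ENNReal.toReal_mul, ENNReal.tsum_toReal_eq fun _ => ENNReal.ofReal_ne_top,
    ENNReal.tsum_toReal_eq fun _ => ENNReal.ofReal_ne_top, ENNReal.toReal_natCast] at hsum
  simp only [ENNReal.toReal_ofReal (generatorWeight_nonneg _)] at hsum
  rw [hsum]
  congr 1
  exact tsum_congr fun I => ENNReal.toReal_ofReal (normCutoff_nonneg (by positivity))

lemma tsum_generatorWeight_lattice (J : (Ideal (𝓞 K))⁰) (t : ℝ) :
    ∑' a : Submodule.span ℤ (Set.range (fractionalIdealLatticeBasis K (FractionalIdeal.mk0 K J))),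
      generatorWeight (t⁻¹ • (a : mixedSpace K)) =
    ∑' a : {a : 𝓞 K // a ≠ 0 ∧ a ∈ (J : Ideal (𝓞 K))},
      generatorWeight (t⁻¹ • mixedEmbedding K (a : 𝓞 K)) := by
  let g (a : {a : 𝓞 K // a ≠ 0 ∧ a ∈ (J : Ideal (𝓞 K))}) : Submodule.span ℤ
      (Set.range (fractionalIdealLatticeBasis K (FractionalIdeal.mk0 K J))) :=
    ⟨mixedEmbedding K (a.1 : K), (mem_span_fractionalIdealLatticeBasis ..).mpr
      ⟨_, (FractionalIdeal.mem_coeIdeal _).mpr ⟨a.1, a.2.2, rfl⟩, rfl⟩⟩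
  have hg : Function.Injective g := fun a b hab =>
    Subtype.ext (RingOfIntegers.ext (mixedEmbedding_injective K (congrArg Subtype.val hab)))
  refine (hg.tsum_eq (f := fun a => generatorWeight (t⁻¹ • (a : mixedSpace K))) ?_).symm
  rintro ⟨x, hx⟩ hfx
  obtain ⟨k, hk, rfl⟩ := (mem_span_fractionalIdealLatticeBasis ..).mp hx
  obtain ⟨a, haJ, rfl⟩ := (FractionalIdeal.mem_coeIdeal _).mp hk
  refine ⟨⟨a, ?_, haJ⟩, rfl⟩
  rintro rfl
  exact hfx (by simp [generatorWeight_zero])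

lemma exists_abs_tsum_normCutoff_inv_mk0_sub_le (J : (Ideal (𝓞 K))⁰) :
    ∃ κ : ℝ, 0 < κ ∧ ∃ A : ℝ, ∀ t : ℝ, 1 ≤ t →
      |torsionOrder K * ∑' I : {I : (Ideal (𝓞 K))⁰ // ClassGroup.mk0 I = (ClassGroup.mk0 J)⁻¹},
        normCutoff (Ideal.absNorm (J : Ideal (𝓞 K)) * Ideal.absNorm (I.1 : Ideal (𝓞 K)) /
          t ^ finrank ℚ K) - t ^ finrank ℚ K * κ| ≤ A * (t ^ finrank ℚ K / t) := by
  classical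
  obtain ⟨B, hB⟩ := exists_lipschitzWith_generatorWeight K
  set b := fractionalIdealLatticeBasis K (FractionalIdeal.mk0 K J)
  obtain ⟨A, hA⟩ :=
    exists_abs_tsum_smul_sub_le b volume hB hasCompactSupport_generatorWeight
  refine ⟨_, div_pos (integral_generatorWeight_pos K)
    (measureReal_fundamentalDomain_pos b volume), A, fun t ht => ?_⟩
  have hcount := hA t ht
  rwa [tsum_generatorWeight_lattice, tsum_generatorWeight_ideal J (by linarith),
    mixedEmbedding.finrank] at hcount

theorem exists_abs_tsum_normCutoff_class_sub_le (C : ClassGroup (𝓞 K)) :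
    ∃ c : ℝ, 0 < c ∧ ∃ A : ℝ, ∀ T : ℝ, 1 ≤ T →
      |∑' I : {I : (Ideal (𝓞 K))⁰ // ClassGroup.mk0 I = C},
        normCutoff (Ideal.absNorm (I.1 : Ideal (𝓞 K)) / T) - c * T| ≤
      A * T ^ (1 - (finrank ℚ K : ℝ)⁻¹) := by
  obtain ⟨J, hJ⟩ := ClassGroup.mk0_surjective C⁻¹
  obtain rfl : (ClassGroup.mk0 J)⁻¹ = C := by rw [hJ, inv_inv]
  obtain ⟨κ, hκ, A, hA⟩ := exists_abs_tsum_normCutoff_inv_mk0_sub_le J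
  set n := finrank ℚ K
  have hn : n ≠ 0 := finrank_pos.ne'
  have hw : (0 : ℝ) < torsionOrder K := Nat.cast_pos.mpr (torsionOrder_pos K)
  set w : ℝ := (torsionOrder K : ℝ)
  have hM : (1 : ℝ) ≤ Ideal.absNorm (J : Ideal (𝓞 K)) :=
    Nat.one_le_cast.mpr <| Nat.one_le_iff_ne_zero.mpr <|
      Ideal.absNorm_eq_zero_iff.not.mpr (nonZeroDivisors.coe_ne_zero J)
  set M : ℝ := (Ideal.absNorm (J : Ideal (𝓞 K)) : ℝ)
  refine ⟨M * κ / w, by positivity, A / w * M ^ (1 - (n : ℝ)⁻¹), fun T hT => ?_⟩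
  have hMT : 1 ≤ M * T := one_le_mul_of_one_le_of_one_le hM hT
  set t : ℝ := (M * T) ^ (n : ℝ)⁻¹
  have htn : t ^ n = M * T := Real.rpow_inv_natCast_pow (by linarith) hn
  have herror : t ^ n / t = M ^ (1 - (n : ℝ)⁻¹) * T ^ (1 - (n : ℝ)⁻¹) := by
    rw [htn, ← Real.mul_rpow (by linarith) (by linarith), Real.rpow_sub (by linarith),
      Real.rpow_one]
  have hcount := hA t (Real.one_le_rpow hMT (by positivity))
  rw [herror] at hcount
  simp only [htn, mul_div_mul_left _ _ (by linarith : M ≠ 0)] at hcount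
  set S := ∑' I : {I : (Ideal (𝓞 K))⁰ // ClassGroup.mk0 I = (ClassGroup.mk0 J)⁻¹},
    normCutoff (Ideal.absNorm (I.1 : Ideal (𝓞 K)) / T)
  calc |S - M * κ / w * T| = |w * S - M * T * κ| / w := by
        rw [eq_div_iff hw.ne', ← abs_of_pos hw, ← abs_mul, abs_of_pos hw]
        congr 1
        field_simp
    _ ≤ A * (M ^ (1 - (n : ℝ)⁻¹) * T ^ (1 - (n : ℝ)⁻¹)) / w := by gcongr
    _ = A / w * M ^ (1 - (n : ℝ)⁻¹) * T ^ (1 - (n : ℝ)⁻¹) := by ring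

lemma finite_support_normCutoff_absNorm {T : ℝ} (hT : 0 < T) :
    (Function.support fun I : (Ideal (𝓞 K))⁰ =>
      normCutoff (Ideal.absNorm (I : Ideal (𝓞 K)) / T)).Finite :=
  ((Ideal.finite_setOfPred_absNorm_le ⌊T⌋₊).preimage Subtype.val_injective.injOn).subset
    fun _ hI => Nat.le_floor ((div_le_one hT).mp (le_one_of_normCutoff_ne_zero hI))

variable (K) in
theorem exists_abs_tsum_normCutoff_sub_le : ∃ c : ℝ, 0 < c ∧ ∃ A : ℝ, ∀ T : ℝ, 1 ≤ T →
    |∑' I : (Ideal (𝓞 K))⁰, normCutoff (Ideal.absNorm (I : Ideal (𝓞 K)) / T) - c * T| ≤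
      A * T ^ (1 - (finrank ℚ K : ℝ)⁻¹) := by
  choose c hc A hA using exists_abs_tsum_normCutoff_class_sub_le (K := K)
  refine ⟨∑ C, c C, Finset.sum_pos (fun C _ => hc C) Finset.univ_nonempty, ∑ C, A C,
    fun T hT => ?_⟩
  have hclasses : ∑' I : (Ideal (𝓞 K))⁰, normCutoff (Ideal.absNorm (I : Ideal (𝓞 K)) / T) =
      ∑ C : ClassGroup (𝓞 K), ∑' I : {I : (Ideal (𝓞 K))⁰ // ClassGroup.mk0 I = C},
        normCutoff (Ideal.absNorm (I.1 : Ideal (𝓞 K)) / T) := by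
    have hs : Summable fun I : (Ideal (𝓞 K))⁰ =>
        normCutoff (Ideal.absNorm (I : Ideal (𝓞 K)) / T) := summable_of_hasFiniteSupport
      (finite_support_normCutoff_absNorm (K := K) (one_pos.trans_le hT))
    let φ := Equiv.sigmaFiberEquiv (ClassGroup.mk0 : (Ideal (𝓞 K))⁰ → ClassGroup (𝓞 K))
    rw [← φ.tsum_eq]
    exact (φ.summable_iff.mpr hs).tsum_sigma.trans (tsum_fintype _)
  rw [hclasses, Finset.sum_mul, Finset.sum_mul, ← Finset.sum_sub_distrib]
  exact (Finset.abs_sum_le_sum_abs _ _).trans (Finset.sum_le_sum fun C _ => hA C T hT)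

end IdealCounting

section MellinTransform

open MeasureTheory Set

lemma ofReal_cpow_sub_one {T : ℝ} (hT : 0 < T) (s : ℂ) :
    (T : ℂ) ^ (s - 1) = (T : ℂ) ^ s / T := by
  rw [Complex.cpow_sub _ _ (Complex.ofReal_ne_zero.mpr hT.ne'), Complex.cpow_one]

lemma norm_ofReal_cpow_neg_sub_one {T : ℝ} (hT : 0 < T) (s : ℂ) :
    ‖(T : ℂ) ^ (-s - 1)‖ = T ^ (-s.re - 1) := by
  simp [Complex.norm_cpow_eq_rpow_re_of_pos hT]

lemma measurable_normCutoff : Measurable normCutoff := by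
  unfold normCutoff
  fun_prop

lemma normCutoff_div_mul_cpow_eq_indicator (N : ℝ) (s : ℂ) {T : ℝ} (hT : 0 < T) :
    (normCutoff (N / T) : ℂ) * (T : ℂ) ^ (-s - 1) = (Ioi N).indicator
      (fun T : ℝ => (N : ℂ) * (T : ℂ) ^ (-s - 2) - (N : ℂ) ^ 2 * (T : ℂ) ^ (-s - 3)) T := by
  have hT' : (T : ℂ) ≠ 0 := Complex.ofReal_ne_zero.mpr hT.ne'
  by_cases h : T ∈ Ioi N
  · have hNT : N / T ≤ 1 := (div_le_one hT).mpr h.le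
    rw [indicator_of_mem h, normCutoff, max_eq_right (by linarith),
      show -s - 3 = -s - 2 - 1 by ring, show -s - 2 = -s - 1 - 1 by ring,
      ofReal_cpow_sub_one hT (-s - 1 - 1), ofReal_cpow_sub_one hT (-s - 1)]
    push_cast
    field_simp
  · have hNT : 1 ≤ N / T := (one_le_div hT).mpr (not_lt.mp h)
    rw [indicator_of_notMem h, normCutoff, max_eq_left (by linarith)]
    simp

lemma integrableOn_Ioi_mul_cpow_sub_mul_cpow {N : ℝ} (hN : 0 < N) {s : ℂ} (hs : 0 < s.re) :
    IntegrableOn (fun T : ℝ => (N : ℂ) * (T : ℂ) ^ (-s - 2)) (Ioi N) ∧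
      IntegrableOn (fun T : ℝ => (N : ℂ) ^ 2 * (T : ℂ) ^ (-s - 3)) (Ioi N) :=
  ⟨(integrableOn_Ioi_cpow_of_lt (by simp; linarith) hN).const_mul _,
    (integrableOn_Ioi_cpow_of_lt (by simp; linarith) hN).const_mul _⟩

lemma integrableOn_normCutoff_div_mul_cpow {N : ℝ} (hN : 0 < N) {s : ℂ} (hs : 0 < s.re) :
    IntegrableOn (fun T : ℝ => (normCutoff (N / T) : ℂ) * (T : ℂ) ^ (-s - 1)) (Ioi 1) := by
  refine (integrableOn_congr_fun (fun T hT => normCutoff_div_mul_cpow_eq_indicator N s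
    (one_pos.trans hT)) measurableSet_Ioi).mpr ?_
  obtain ⟨h₂, h₃⟩ := integrableOn_Ioi_mul_cpow_sub_mul_cpow hN hs
  exact ((integrable_indicator_iff measurableSet_Ioi).mpr (h₂.sub h₃)).integrableOn

lemma integral_normCutoff_div_mul_cpow {N : ℝ} (hN : 1 ≤ N) {s : ℂ} (hs : 0 < s.re) :
    ∫ T in Ioi (1 : ℝ), (normCutoff (N / T) : ℂ) * (T : ℂ) ^ (-s - 1) =
      (N : ℂ) ^ (-s) * (1 / ((s + 1) * (s + 2))) := by
  have hN0 : 0 < N := by linarith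
  have hNc : (N : ℂ) ≠ 0 := Complex.ofReal_ne_zero.mpr hN0.ne'
  have h1 : s + 1 ≠ 0 := Complex.ne_zero_of_re_pos (by simp; linarith)
  have h2 : s + 2 ≠ 0 := Complex.ne_zero_of_re_pos (by simp; linarith)
  obtain ⟨hint₂, hint₃⟩ := integrableOn_Ioi_mul_cpow_sub_mul_cpow hN0 hs
  rw [setIntegral_congr_fun measurableSet_Ioi fun T hT =>
      normCutoff_div_mul_cpow_eq_indicator N s (one_pos.trans hT),
    setIntegral_indicator measurableSet_Ioi, inter_eq_right.mpr (Ioi_subset_Ioi hN),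
    integral_sub hint₂ hint₃, integral_const_mul, integral_const_mul,
    integral_Ioi_cpow_of_lt (by simp; linarith) hN0,
    integral_Ioi_cpow_of_lt (by simp; linarith) hN0,
    show -s - 3 + 1 = -s - 1 - 1 by ring, show -s - 2 + 1 = -s - 1 by ring,
    ofReal_cpow_sub_one hN0 (-s - 1), ofReal_cpow_sub_one hN0 (-s),
    show -s - 1 - 1 = -(s + 2) by ring, show -s - 1 = -(s + 1) by ring]
  field_simp
  ring

lemma normCutoff_div_mul_cpow_ofReal (N σ : ℝ) {T : ℝ} (hT : 0 ≤ T) :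
    (normCutoff (N / T) : ℂ) * (T : ℂ) ^ (-(σ : ℂ) - 1) =
      ((normCutoff (N / T) * T ^ (-σ - 1) : ℝ) : ℂ) := by
  push_cast [Complex.ofReal_cpow hT]
  rfl

lemma integrableOn_normCutoff_div_mul_rpow {N : ℝ} (hN : 0 < N) {σ : ℝ} (hσ : 0 < σ) :
    IntegrableOn (fun T : ℝ => normCutoff (N / T) * T ^ (-σ - 1)) (Ioi 1) := by
  have h := integrableOn_normCutoff_div_mul_cpow hN (s := (σ : ℂ)) (by simpa using hσ)
  exact ((integrableOn_congr_fun (fun T hT => normCutoff_div_mul_cpow_ofReal N σ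
    (one_pos.trans hT).le) measurableSet_Ioi).mp h).re

lemma integral_normCutoff_div_mul_rpow {N : ℝ} (hN : 1 ≤ N) {σ : ℝ} (hσ : 0 < σ) :
    ∫ T in Ioi (1 : ℝ), normCutoff (N / T) * T ^ (-σ - 1) =
      N ^ (-σ) * (1 / ((σ + 1) * (σ + 2))) := by
  have h := integral_normCutoff_div_mul_cpow hN (s := (σ : ℂ)) (by simpa using hσ)
  rw [setIntegral_congr_fun measurableSet_Ioi fun T hT => normCutoff_div_mul_cpow_ofReal N σ
    (one_pos.trans hT).le, integral_complex_ofReal] at h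
  apply Complex.ofReal_injective
  rw [h]
  push_cast [Complex.ofReal_cpow (by linarith : 0 ≤ N)]
  rfl

end MellinTransform

section Continuation

open MeasureTheory Set

/-- The smoothed number of indices of norm at most `T` is `c * T` up to a power-saving error. -/
structure HasDensity {ι : Type*} (N : ι → ℝ) (c A δ : ℝ) : Prop where
  one_le : ∀ i, 1 ≤ N i
  summable_normCutoff : ∀ T : ℝ, 0 < T → Summable fun i => normCutoff (N i / T)
  density_pos : 0 < c
  saving_pos : 0 < δ
  abs_tsum_sub_le : ∀ T : ℝ, 1 ≤ T → |∑' i, normCutoff (N i / T) - c * T| ≤ A * T ^ (1 - δ)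

variable {ι : Type*} {N : ι → ℝ} {c A δ : ℝ}

/-- The error term in the smoothed count, set to `0` below `T = 1` so that its Mellin transform
is taken over `T > 1`. -/
def countError (N : ι → ℝ) (c : ℝ) : ℝ → ℂ :=
  (Ioi (1 : ℝ)).indicator fun T => ((∑' i, normCutoff (N i / T) - c * T : ℝ) : ℂ)

/-- The analytic continuation of `(s - 1) * ∑' i, N i ^ (-s)`. -/
def poleFreeZeta (N : ι → ℝ) (c : ℝ) (s : ℂ) : ℂ :=
  (s + 1) * (s + 2) * (c + (s - 1) * mellin (countError N c) (-s))

lemma measurable_countError [Countable ι] : Measurable (countError N c) := by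
  refine Measurable.indicator (Complex.measurable_ofReal.comp ?_) measurableSet_Ioi
  exact (Measurable.tsum fun i => measurable_normCutoff.comp (by fun_prop)).sub (by fun_prop)

lemma countError_isBigO_nhdsGT_zero (b : ℝ) : countError N c =O[𝓝[>] 0] fun x => x ^ (-b) := by
  refine Asymptotics.IsBigO.of_bound 0 ?_
  filter_upwards [Ioo_mem_nhdsGT one_pos] with T hT
  rw [countError, indicator_of_notMem (by simpa using hT.2.le)]
  simp

lemma mellin_countError (s : ℂ) : mellin (countError N c) (-s) =
    ∫ T in Ioi (1 : ℝ), (T : ℂ) ^ (-s - 1) * countError N c T := by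
  refine setIntegral_eq_of_subset_of_forall_sdiff_eq_zero measurableSet_Ioi
    (Ioi_subset_Ioi (zero_le_one' ℝ)) fun T hT => ?_
  rw [countError, indicator_of_notMem hT.2, smul_zero]

namespace HasDensity

lemma pos (h : HasDensity N c A δ) (i : ι) : 0 < N i := one_pos.trans_le (h.one_le i)

lemma error_nonneg (h : HasDensity N c A δ) : 0 ≤ A := by
  simpa using (abs_nonneg _).trans (h.abs_tsum_sub_le 1 le_rfl)

lemma sum_normCutoff_le (h : HasDensity N c A δ) (S : Finset ι) {T : ℝ} (hT : 1 ≤ T) :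
    ∑ i ∈ S, normCutoff (N i / T) ≤ (c + A) * T := by
  have hT0 : 0 < T := by linarith
  have hnonneg : ∀ i, 0 ≤ normCutoff (N i / T) := fun i =>
    normCutoff_nonneg (div_nonneg (h.pos i).le hT0.le)
  have hpow : T ^ (1 - δ) ≤ T :=
    Real.rpow_le_self_of_one_le hT (by linarith [h.saving_pos])
  calc ∑ i ∈ S, normCutoff (N i / T) ≤ ∑' i, normCutoff (N i / T) :=
        (h.summable_normCutoff T hT0).sum_le_tsum S fun i _ => hnonneg i
    _ ≤ c * T + A * T ^ (1 - δ) := by linarith [(abs_le.mp (h.abs_tsum_sub_le T hT)).2]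
    _ ≤ c * T + A * T := by gcongr; exact h.error_nonneg
    _ = (c + A) * T := by ring

lemma summable_rpow (h : HasDensity N c A δ) {σ : ℝ} (hσ : 1 < σ) :
    Summable fun i => N i ^ (-σ) := by
  have hσ0 : 0 < σ := by linarith
  have hcutoff (i : ι) : IntegrableOn (fun T : ℝ => normCutoff (N i / T) * T ^ (-σ - 1)) (Ioi 1) :=
    integrableOn_normCutoff_div_mul_rpow (h.pos i) hσ0
  have hmajorant : IntegrableOn (fun T : ℝ => (c + A) * T ^ (-σ)) (Ioi 1) :=
    (integrableOn_Ioi_rpow_of_lt (by linarith) one_pos).const_mul _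
  have hκ : 0 < 1 / ((σ + 1) * (σ + 2)) := by positivity
  refine summable_of_sum_le
    (c := (∫ T in Ioi (1 : ℝ), (c + A) * T ^ (-σ)) / (1 / ((σ + 1) * (σ + 2))))
    (fun i => (Real.rpow_pos_of_pos (h.pos i) _).le) fun S => ?_
  rw [le_div_iff₀ hκ, Finset.sum_mul,
    Finset.sum_congr rfl fun i _ => (integral_normCutoff_div_mul_rpow (h.one_le i) hσ0).symm,
    ← integral_finsetSum _ fun i _ => hcutoff i]
  refine setIntegral_mono_on (integrable_finsetSum _ fun i _ => hcutoff i) hmajorant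
    measurableSet_Ioi fun T hT => ?_
  have hT0 : 0 < T := one_pos.trans hT
  calc ∑ i ∈ S, normCutoff (N i / T) * T ^ (-σ - 1)
      = (∑ i ∈ S, normCutoff (N i / T)) * T ^ (-σ - 1) := (Finset.sum_mul ..).symm
    _ ≤ (c + A) * T * T ^ (-σ - 1) := by gcongr; exact h.sum_normCutoff_le S hT.le
    _ = (c + A) * T ^ (-σ) := by
      rw [Real.rpow_sub hT0, Real.rpow_one]
      field_simp

lemma integral_tsum_normCutoff_mul_cpow (h : HasDensity N c A δ) [Countable ι] {s : ℂ}
    (hs : 1 < s.re) :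
    ∫ T in Ioi (1 : ℝ), ((∑' i, normCutoff (N i / T) : ℝ) : ℂ) * (T : ℂ) ^ (-s - 1) =
      (∑' i, (N i : ℂ) ^ (-s)) * (1 / ((s + 1) * (s + 2))) := by
  have hs0 : 0 < s.re := by linarith
  have hnorm (i : ι) : ∫ T in Ioi (1 : ℝ), ‖(normCutoff (N i / T) : ℂ) * (T : ℂ) ^ (-s - 1)‖ =
      N i ^ (-s.re) * (1 / ((s.re + 1) * (s.re + 2))) := by
    rw [← integral_normCutoff_div_mul_rpow (h.one_le i) hs0]
    refine setIntegral_congr_fun measurableSet_Ioi fun T hT => ?_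
    have hT0 : 0 < T := one_pos.trans hT
    have := normCutoff_nonneg (div_nonneg (h.pos i).le hT0.le)
    simp only [norm_mul, norm_ofReal_cpow_neg_sub_one hT0, Complex.norm_of_nonneg this]
  have hswap := hasSum_integral_of_summable_integral_norm (μ := volume.restrict (Ioi (1 : ℝ)))
    (F := fun i (T : ℝ) => (normCutoff (N i / T) : ℂ) * (T : ℂ) ^ (-s - 1))
    (fun i => integrableOn_normCutoff_div_mul_cpow (h.pos i) hs0)
    (by simpa only [hnorm] using (h.summable_rpow hs).mul_right _)
  simp only [fun i => integral_normCutoff_div_mul_cpow (h.one_le i) hs0] at hswap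
  rw [← tsum_mul_right, hswap.tsum_eq]
  refine setIntegral_congr_fun measurableSet_Ioi fun T _ => ?_
  rw [Complex.ofReal_tsum, tsum_mul_right]

lemma norm_countError_le (h : HasDensity N c A δ) {T : ℝ} (hT : 0 < T) :
    ‖countError N c T‖ ≤ A * T ^ (1 - δ) := by
  by_cases hT1 : T ∈ Ioi 1
  · rw [countError, indicator_of_mem hT1, Complex.norm_real]
    exact h.abs_tsum_sub_le T hT1.le
  · rw [countError, indicator_of_notMem hT1, norm_zero]
    have := h.error_nonneg
    positivity

lemma locallyIntegrableOn_countError (h : HasDensity N c A δ) [Countable ι] :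
    LocallyIntegrableOn (countError N c) (Ioi 0) := by
  have hmajorant : LocallyIntegrableOn (fun T : ℝ => A * T ^ (1 - δ)) (Ioi 0) :=
    (continuousOn_const.mul (continuousOn_id.rpow_const fun T hT =>
      Or.inl (ne_of_gt hT))).locallyIntegrableOn measurableSet_Ioi
  rw [locallyIntegrableOn_iff isLocallyClosed_Ioi] at hmajorant ⊢
  exact fun k hk hkc => (hmajorant k hk hkc).mono' measurable_countError.aestronglyMeasurable
    (ae_restrict_of_forall_mem hkc.measurableSet fun T hT => h.norm_countError_le (hk hT))

lemma countError_isBigO_atTop (h : HasDensity N c A δ) :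
    countError N c =O[atTop] fun x => x ^ (-(δ - 1)) := by
  refine Asymptotics.IsBigO.of_bound A ?_
  filter_upwards [eventually_gt_atTop 0] with T hT
  rw [neg_sub, Real.norm_of_nonneg (by positivity)]
  exact h.norm_countError_le hT

lemma differentiableAt_mellin_countError (h : HasDensity N c A δ) [Countable ι] {s : ℂ}
    (hs : 1 - δ < s.re) : DifferentiableAt ℂ (fun s => mellin (countError N c) (-s)) s := by
  have hmellin : DifferentiableAt ℂ (mellin (countError N c)) (-s) :=
    mellin_differentiableAt_of_isBigO_rpow h.locallyIntegrableOn_countError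
      h.countError_isBigO_atTop (by simp; linarith)
      (countError_isBigO_nhdsGT_zero (-s.re - 1)) (by simp)
  exact DifferentiableAt.comp (g := mellin (countError N c)) s hmellin
    differentiable_neg.differentiableAt

lemma norm_cpow_mul_countError_le (h : HasDensity N c A δ) (s : ℂ) {T : ℝ} (hT : 0 < T) :
    ‖(T : ℂ) ^ (-s - 1) * countError N c T‖ ≤ A * T ^ (-s.re - δ) := by
  rw [norm_mul, norm_ofReal_cpow_neg_sub_one hT]
  calc T ^ (-s.re - 1) * ‖countError N c T‖ ≤ T ^ (-s.re - 1) * (A * T ^ (1 - δ)) := by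
        gcongr
        exact h.norm_countError_le hT
    _ = A * (T ^ (-s.re - 1) * T ^ (1 - δ)) := by ring
    _ = A * T ^ (-s.re - δ) := by rw [← Real.rpow_add hT]; ring_nf

lemma integrableOn_cpow_mul_countError (h : HasDensity N c A δ) [Countable ι] {s : ℂ}
    (hs : 1 - δ < s.re) :
    IntegrableOn (fun T : ℝ => (T : ℂ) ^ (-s - 1) * countError N c T) (Ioi 1) := by
  have hmajorant : IntegrableOn (fun T : ℝ => A * T ^ (-s.re - δ)) (Ioi 1) :=
    (integrableOn_Ioi_rpow_of_lt (by linarith) one_pos).const_mul _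
  refine hmajorant.mono' (AEStronglyMeasurable.mul ?_ measurable_countError.aestronglyMeasurable)
    (ae_restrict_of_forall_mem measurableSet_Ioi fun T hT =>
      h.norm_cpow_mul_countError_le s (one_pos.trans hT))
  exact (Measurable.pow_const (by fun_prop) _).aestronglyMeasurable

lemma norm_mellin_countError_le (h : HasDensity N c A δ) {s : ℂ} (hs : 1 - δ / 2 ≤ s.re) :
    ‖mellin (countError N c) (-s)‖ ≤ 2 * A / δ := by
  have hA := h.error_nonneg
  have hδ := h.saving_pos
  have hmajorant : IntegrableOn (fun T : ℝ => A * T ^ (-s.re - δ)) (Ioi 1) :=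
    (integrableOn_Ioi_rpow_of_lt (by linarith) one_pos).const_mul _
  calc ‖mellin (countError N c) (-s)‖ ≤ ∫ T in Ioi (1 : ℝ), A * T ^ (-s.re - δ) := by
        rw [mellin_countError]
        exact norm_integral_le_of_norm_le hmajorant (ae_restrict_of_forall_mem measurableSet_Ioi
          fun T hT => h.norm_cpow_mul_countError_le s (one_pos.trans hT))
    _ = A / (s.re + δ - 1) := by
        rw [integral_const_mul, integral_Ioi_rpow_of_lt (by linarith) one_pos, Real.one_rpow,
          neg_div, ← div_neg, mul_one_div]
        ring_nf
    _ ≤ A / (δ / 2) := div_le_div_of_nonneg_left hA (by positivity) (by linarith)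
    _ = 2 * A / δ := by field_simp

lemma tsum_cpow_eq (h : HasDensity N c A δ) [Countable ι] {s : ℂ} (hs : 1 < s.re) :
    (∑' i, (N i : ℂ) ^ (-s)) * (1 / ((s + 1) * (s + 2))) =
      mellin (countError N c) (-s) + c * (1 / (s - 1)) := by
  have hpole : ∫ T in Ioi (1 : ℝ), (c : ℂ) * (T : ℂ) ^ (-s) = c * (1 / (s - 1)) := by
    rw [integral_const_mul, integral_Ioi_cpow_of_lt (by simp; linarith) one_pos,
      Complex.ofReal_one, Complex.one_cpow, show -s + 1 = -(s - 1) by ring, neg_div_neg_eq]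
  have hpole_int : IntegrableOn (fun T : ℝ => (c : ℂ) * (T : ℂ) ^ (-s)) (Ioi 1) :=
    (integrableOn_Ioi_cpow_of_lt (by simp; linarith) one_pos).const_mul _
  rw [← h.integral_tsum_normCutoff_mul_cpow hs, mellin_countError, ← hpole,
    ← integral_add (h.integrableOn_cpow_mul_countError (by linarith [h.saving_pos])) hpole_int]
  refine setIntegral_congr_fun measurableSet_Ioi fun T hT => ?_
  have hT0 : 0 < T := one_pos.trans hT
  have hTc : (T : ℂ) ≠ 0 := Complex.ofReal_ne_zero.mpr hT0.ne'
  simp only [countError, indicator_of_mem hT, ofReal_cpow_sub_one hT0]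
  push_cast
  field_simp
  ring

lemma poleFreeZeta_eq (h : HasDensity N c A δ) [Countable ι] {s : ℂ} (hs : 1 < s.re) :
    poleFreeZeta N c s = (s - 1) * ∑' i, (N i : ℂ) ^ (-s) := by
  have h0 : s - 1 ≠ 0 := Complex.ne_zero_of_re_pos (by simpa using hs)
  have h1 : s + 1 ≠ 0 := Complex.ne_zero_of_re_pos (by simp; linarith)
  have h2 : s + 2 ≠ 0 := Complex.ne_zero_of_re_pos (by simp; linarith)
  have hzeta : ∑' i, (N i : ℂ) ^ (-s) =
      (s + 1) * (s + 2) * (mellin (countError N c) (-s) + c * (1 / (s - 1))) := by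
    rw [← h.tsum_cpow_eq hs]
    field_simp
  rw [poleFreeZeta, hzeta]
  field_simp
  ring

lemma differentiableOn_poleFreeZeta (h : HasDensity N c A δ) [Countable ι] :
    DifferentiableOn ℂ (poleFreeZeta N c) {s | 1 - δ < s.re} := by
  intro s hs
  have hmellin := h.differentiableAt_mellin_countError hs
  unfold poleFreeZeta
  exact (DifferentiableAt.mul (by fun_prop) (DifferentiableAt.add (by fun_prop)
    (DifferentiableAt.mul (by fun_prop) hmellin))).differentiableWithinAt

lemma poleFreeZeta_one_ne_zero (h : HasDensity N c A δ) : poleFreeZeta N c 1 ≠ 0 := by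
  have hc : (c : ℂ) ≠ 0 := Complex.ofReal_ne_zero.mpr h.density_pos.ne'
  norm_num [poleFreeZeta, hc]

lemma norm_poleFreeZeta_le (h : HasDensity N c A δ) {s : ℂ} (hs : 1 - δ / 2 ≤ s.re) :
    ‖poleFreeZeta N c s‖ ≤ 2 * (c + 2 * A / δ) * (1 + ‖s‖) ^ 3 := by
  have := h.error_nonneg
  have := h.saving_pos
  have hc := h.density_pos
  have hadd_one : ‖s + 1‖ ≤ 1 + ‖s‖ := (norm_add_le _ _).trans (by simp [add_comm])
  have hadd_two : ‖s + 2‖ ≤ 2 * (1 + ‖s‖) :=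
    (norm_add_le _ _).trans (by rw [Complex.norm_ofNat]; linarith [norm_nonneg s])
  have hsub_one : ‖s - 1‖ ≤ 1 + ‖s‖ := (norm_sub_le _ _).trans (by simp [add_comm])
  have hfactor : ‖(c : ℂ) + (s - 1) * mellin (countError N c) (-s)‖ ≤
      (1 + ‖s‖) * (c + 2 * A / δ) := by
    calc ‖(c : ℂ) + (s - 1) * mellin (countError N c) (-s)‖
        ≤ ‖(c : ℂ)‖ + ‖s - 1‖ * ‖mellin (countError N c) (-s)‖ :=
          (norm_add_le _ _).trans (by rw [norm_mul])
      _ ≤ (1 + ‖s‖) * c + (1 + ‖s‖) * (2 * A / δ) := by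
          rw [Complex.norm_of_nonneg hc.le]
          gcongr
          · exact le_mul_of_one_le_left hc.le (by linarith [norm_nonneg s])
          · exact h.norm_mellin_countError_le hs
      _ = (1 + ‖s‖) * (c + 2 * A / δ) := by ring
  calc ‖poleFreeZeta N c s‖
      = ‖s + 1‖ * ‖s + 2‖ * ‖(c : ℂ) + (s - 1) * mellin (countError N c) (-s)‖ := by
        rw [poleFreeZeta, norm_mul, norm_mul]
    _ ≤ (1 + ‖s‖) * (2 * (1 + ‖s‖)) * ((1 + ‖s‖) * (c + 2 * A / δ)) := by gcongr
    _ = 2 * (c + 2 * A / δ) * (1 + ‖s‖) ^ 3 := by ring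

end HasDensity

end Continuation

section EulerProduct

variable {M : Type*} [CommMonoidWithZero M]

open Classical in
/-- The restriction of `f` to the elements divisible by no prime of `S`. -/
def awayFrom (f : M →*₀ ℂ) (S : Finset {p : M // Prime p}) (I : M) : ℂ :=
  if ∀ q ∈ S, ¬ (q : M) ∣ I then f I else 0

lemma norm_awayFrom_le (f : M →*₀ ℂ) (S : Finset {p : M // Prime p}) (I : M) :
    ‖awayFrom f S I‖ ≤ ‖f I‖ := by
  unfold awayFrom
  split_ifs <;> simp

lemma summable_awayFrom {f : M →*₀ ℂ} (hf : Summable fun I => ‖f I‖)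
    (S : Finset {p : M // Prime p}) : Summable (awayFrom f S) :=
  .of_norm_bounded hf (norm_awayFrom_le f S)

variable [IsCancelMulZero M] [Subsingleton Mˣ]

lemma dvd_prime_mul_iff {p q : M} (hp : Prime p) (hq : Prime q) (hpq : p ≠ q) (I : M) :
    q ∣ p * I ↔ q ∣ I := by
  refine ⟨fun h => (hq.dvd_or_dvd h).resolve_left fun hqp => hpq ?_, fun h => h.mul_left _⟩
  exact (associated_iff_eq.mp ((hq.dvd_prime_iff_associated hp).mp hqp)).symm

lemma awayFrom_mul {f : M →*₀ ℂ} {S : Finset {p : M // Prime p}} {p : {p : M // Prime p}}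
    (hp : p ∉ S) (I : M) : awayFrom f S (p * I) = f p * awayFrom f S I := by
  have hdvd : (∀ q ∈ S, ¬ (q : M) ∣ p * I) ↔ ∀ q ∈ S, ¬ (q : M) ∣ I :=
    forall₂_congr fun q hq => not_congr <| dvd_prime_mul_iff p.2 q.2
      (fun h => hp (Subtype.ext h ▸ hq)) I
  by_cases h : ∀ q ∈ S, ¬ (q : M) ∣ I
  · rw [awayFrom, awayFrom, if_pos h, if_pos (hdvd.mpr h), map_mul]
  · rw [awayFrom, awayFrom, if_neg h, if_neg (mt hdvd.mp h), mul_zero]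

lemma tsum_awayFrom_insert [DecidableEq {p : M // Prime p}] {f : M →*₀ ℂ}
    (hf : Summable fun I => ‖f I‖) {S : Finset {p : M // Prime p}} {p : {p : M // Prime p}}
    (hp : p ∉ S) :
    ∑' I, awayFrom f (insert p S) I = (1 - f p) * ∑' I, awayFrom f S I := by
  classical
  have hsub (I : M) : awayFrom f S I - awayFrom f (insert p S) I =
      if (p : M) ∣ I then awayFrom f S I else 0 := by
    unfold awayFrom
    by_cases h : (p : M) ∣ I <;> simp [h]
  have hmultiples : ∑' I, (if (p : M) ∣ I then awayFrom f S I else 0) =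
      f p * ∑' I, awayFrom f S I := by
    have hinj : Function.Injective fun I : M => (p : M) * I :=
      fun _ _ h => mul_left_cancel₀ p.2.ne_zero h
    rw [← hinj.tsum_eq (f := fun I => if (p : M) ∣ I then awayFrom f S I else 0),
      ← tsum_mul_left]
    · exact tsum_congr fun I => by rw [if_pos (dvd_mul_right _ _), awayFrom_mul hp]
    · intro I hI
      obtain ⟨J, hJ⟩ : (p : M) ∣ I := by
        by_contra h
        exact hI (if_neg h)
      exact ⟨J, hJ.symm⟩
  have h := (summable_awayFrom hf S).tsum_sub (summable_awayFrom hf (insert p S))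
  rw [tsum_congr hsub, hmultiples] at h
  linear_combination h

lemma tsum_awayFrom {f : M →*₀ ℂ} (hf : Summable fun I => ‖f I‖)
    (S : Finset {p : M // Prime p}) :
    ∑' I, awayFrom f S I = (∏ p ∈ S, (1 - f p)) * ∑' I, f I := by
  classical
  induction S using Finset.induction_on with
  | empty => simp [awayFrom]
  | insert p S hp ih => rw [tsum_awayFrom_insert hf hp, ih, Finset.prod_insert hp, mul_assoc]

omit [IsCancelMulZero M]

lemma eventually_awayFrom_eq [UniqueFactorizationMonoid M] [DecidableEq M] (f : M →*₀ ℂ) (I : M) :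
    ∀ᶠ S in atTop, awayFrom f S I = if I = 1 then 1 else 0 := by
  rcases eq_or_ne I 1 with rfl | h1
  · refine .of_forall fun S => ?_
    have hS : ∀ q ∈ S, ¬ (q : M) ∣ 1 := fun q _ h => q.2.not_dvd_one h
    simp only [awayFrom, if_pos hS, map_one, if_true]
  rcases eq_or_ne I 0 with rfl | h0
  · exact .of_forall fun S => by simp [awayFrom, h1]
  · obtain ⟨q, hq, hqI⟩ := WfDvdMonoid.exists_irreducible_factor
      (mt isUnit_iff_eq_one.mp h1) h0
    have hq' : Prime q := UniqueFactorizationMonoid.irreducible_iff_prime.mp hq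
    filter_upwards [eventually_ge_atTop {⟨q, hq'⟩}] with S hS
    rw [if_neg h1]
    exact if_neg fun h => h ⟨q, hq'⟩ (hS (Finset.mem_singleton_self _)) hqI

lemma tendsto_tsum_awayFrom [UniqueFactorizationMonoid M] {f : M →*₀ ℂ}
    (hf : Summable fun I => ‖f I‖) :
    Tendsto (fun S => ∑' I, awayFrom f S I) atTop (𝓝 1) := by
  classical
  have hone : ∑' I : M, (if I = 1 then 1 else 0) = (1 : ℂ) := tsum_ite_eq 1 _
  rw [← hone]
  exact tendsto_tsum_of_dominated_convergence hf
    (fun I => tendsto_const_nhds.congr' ((eventually_awayFrom_eq f I).mono fun S h => h.symm))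
    (.of_forall fun S I => norm_awayFrom_le f S I)

theorem tsum_eq_exp_tsum_neg_log_one_sub [UniqueFactorizationMonoid M] {f : M →*₀ ℂ}
    (hf : Summable fun I => ‖f I‖) (hf_prime : ∀ p, Prime p → ‖f p‖ < 1) :
    ∑' I, f I = Complex.exp (∑' p : {p : M // Prime p}, -Complex.log (1 - f p)) := by
  have hlog : Summable fun p : {p : M // Prime p} => Complex.log (1 - f p) := by
    have hprime : Summable fun p : {p : M // Prime p} => f p :=
      (Summable.of_norm hf).comp_injective Subtype.val_injective
    simpa only [sub_eq_add_neg] using Complex.summable_log_one_add_of_summable hprime.neg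
  have hprod : Tendsto (fun S : Finset {p : M // Prime p} => ∏ p ∈ S, (1 - f p)) atTop
      (𝓝 (Complex.exp (∑' p : {p : M // Prime p}, Complex.log (1 - f p)))) := by
    refine ((Complex.continuous_exp.tendsto _).comp hlog.hasSum).congr fun S => ?_
    rw [Function.comp, Complex.exp_sum]
    refine Finset.prod_congr rfl fun p _ => Complex.exp_log fun h => ?_
    simpa [← sub_eq_zero.mp h] using hf_prime p p.2
  have hlim := tendsto_tsum_awayFrom hf
  simp_rw [tsum_awayFrom hf] at hlim
  have hmul := tendsto_nhds_unique hlim (hprod.mul_const _)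
  rw [tsum_neg, Complex.exp_neg]
  exact eq_inv_of_mul_eq_one_right hmul.symm

end EulerProduct

section DedekindZeta

open NumberField
open scoped nonZeroDivisors

/-- A family of generalized primes `p` with norms `Np p`: the abscissa of convergence of its
Euler product is at most `1`. -/
structure PrimeNorms {P : Type*} (Np : P → ℕ) : Prop where
  two_le : ∀ p, 2 ≤ Np p
  summable_rpow : ∀ σ : ℝ, 1 < σ → Summable fun p => (Np p : ℝ) ^ (-σ)

/-- The logarithm `-∑ log (1 - N(p) ^ (-s))` of the Euler product. -/
def logEuler {P : Type*} (Np : P → ℕ) (s : ℂ) : ℂ :=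
  ∑' p, -Complex.log (1 - (Np p : ℂ) ^ (-s))

/-- A family of primes with norms `Np`, together with a continuation `Z` of `s - 1` times its
Euler product to the half-plane `1 - δ < s.re`, of polynomial growth and nonzero at `1`. -/
structure EulerContinuation {P : Type*} (Np : P → ℕ) (Z : ℂ → ℂ) (δ B : ℝ) : Prop
    extends PrimeNorms Np where
  width_pos : 0 < δ
  width_le_one : δ ≤ 1
  differentiableOn : DifferentiableOn ℂ Z {s | 1 - δ < s.re}
  eq_mul_exp : ∀ s : ℂ, 1 < s.re →
    Z s = (s - 1) * Complex.exp (logEuler Np s)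
  one_ne_zero : Z 1 ≠ 0
  bound_pos : 0 < B
  norm_le : ∀ s : ℂ, 1 - δ / 2 ≤ s.re → ‖Z s‖ ≤ B * (1 + ‖s‖) ^ 3

lemma mem_range_coe_nonZeroDivisors {M : Type*} [MonoidWithZero M] [NoZeroDivisors M] {I : M}
    (hI : I ≠ 0) : I ∈ Set.range ((↑) : M⁰ → M) :=
  ⟨⟨I, mem_nonZeroDivisors_of_ne_zero hI⟩, rfl⟩

section Norms

variable {R : Type*} [CommRing R] [IsDedekindDomain R] [Module.Free ℤ R]

/-- The completely multiplicative function `I ↦ N(I) ^ (-s)`. -/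
def absNormCpow (R : Type*) [CommRing R] [IsDedekindDomain R] [Module.Free ℤ R] {s : ℂ}
    (hs : s ≠ 0) : Ideal R →*₀ ℂ where
  toFun I := (Ideal.absNorm I : ℂ) ^ (-s)
  map_zero' := by simp [hs]
  map_one' := by simp
  map_mul' I J := by rw [map_mul, Nat.cast_mul, Complex.natCast_mul_natCast_cpow]

lemma norm_absNorm_cpow {s : ℂ} (hs : s.re ≠ 0) (I : Ideal R) :
    ‖(Ideal.absNorm I : ℂ) ^ (-s)‖ = (Ideal.absNorm I : ℝ) ^ (-s.re) := by
  rw [Complex.norm_natCast_cpow_of_re_ne_zero _ (by simpa using hs), Complex.neg_re]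

end Norms

variable {K : Type*} [Field K] [NumberField K]

lemma two_le_absNorm_of_prime {p : Ideal (𝓞 K)} (hp : Prime p) : 2 ≤ Ideal.absNorm p := by
  have h0 : Ideal.absNorm p ≠ 0 := Ideal.absNorm_eq_zero_iff.not.mpr hp.ne_zero
  have h1 : Ideal.absNorm p ≠ 1 :=
    Ideal.absNorm_eq_one_iff.not.mpr (Ideal.isPrime_of_prime hp).ne_top
  lia

instance : Countable (Ideal (𝓞 K)) := by
  have hunion : (⋃ n : ℕ, {I : Ideal (𝓞 K) | Ideal.absNorm I = n}) = Set.univ := by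
    ext I
    simp
  rw [← Set.countable_univ_iff, ← hunion]
  exact Set.countable_iUnion fun n => (Ideal.finite_setOfPred_absNorm_eq n).countable

variable (K) in
theorem exists_hasDensity_absNorm : ∃ c A : ℝ,
    HasDensity (fun I : (Ideal (𝓞 K))⁰ => (Ideal.absNorm (I : Ideal (𝓞 K)) : ℝ)) c A
      (Module.finrank ℚ K : ℝ)⁻¹ := by
  obtain ⟨c, hc, A, hA⟩ := exists_abs_tsum_normCutoff_sub_le K
  have hdegree : (0 : ℝ) < Module.finrank ℚ K := Nat.cast_pos.mpr Module.finrank_pos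
  refine ⟨c, A, fun I => ?_, fun T hT => ?_, hc, inv_pos.mpr hdegree, hA⟩
  · exact Nat.one_le_cast.mpr <| Nat.one_le_iff_ne_zero.mpr <|
      Ideal.absNorm_eq_zero_iff.not.mpr (nonZeroDivisors.coe_ne_zero I)
  · exact summable_of_hasFiniteSupport (finite_support_normCutoff_absNorm hT)

lemma summable_absNorm_rpow {σ : ℝ} (hσ : 1 < σ) :
    Summable fun I : Ideal (𝓞 K) => (Ideal.absNorm I : ℝ) ^ (-σ) := by
  obtain ⟨c, A, h⟩ := exists_hasDensity_absNorm K
  refine (Subtype.val_injective.summable_iff fun I hI => ?_).mp (h.summable_rpow hσ)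
  obtain rfl : I = 0 := by_contra fun hI0 => hI (mem_range_coe_nonZeroDivisors hI0)
  simp [Real.zero_rpow (by linarith : -σ ≠ 0)]

lemma tsum_nonZeroDivisors_absNorm_cpow {s : ℂ} (hs : s ≠ 0) :
    ∑' I : (Ideal (𝓞 K))⁰, ((Ideal.absNorm (I : Ideal (𝓞 K)) : ℝ) : ℂ) ^ (-s) =
      ∑' I : Ideal (𝓞 K), absNormCpow (𝓞 K) hs I := by
  simp only [Complex.ofReal_natCast]
  refine Subtype.val_injective.tsum_eq (f := absNormCpow (𝓞 K) hs) fun I hI => ?_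
  exact mem_range_coe_nonZeroDivisors fun hI0 => hI (by rw [hI0, map_zero])

lemma tsum_absNorm_cpow_eq_exp {s : ℂ} (hs : 1 < s.re) :
    ∑' I : (Ideal (𝓞 K))⁰, ((Ideal.absNorm (I : Ideal (𝓞 K)) : ℝ) : ℂ) ^ (-s) =
      Complex.exp
        (logEuler (fun p : {p : Ideal (𝓞 K) // Prime p} => Ideal.absNorm p.1) s) := by
  have hre : s.re ≠ 0 := by linarith
  have hs0 : s ≠ 0 := Complex.ne_zero_of_re_pos (by linarith)
  have hnorm (I : Ideal (𝓞 K)) : ‖absNormCpow (𝓞 K) hs0 I‖ = (Ideal.absNorm I : ℝ) ^ (-s.re) :=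
    norm_absNorm_cpow hre I
  rw [tsum_nonZeroDivisors_absNorm_cpow hs0]
  refine tsum_eq_exp_tsum_neg_log_one_sub ?_ fun p hp => ?_
  · simpa only [hnorm] using summable_absNorm_rpow hs
  · rw [hnorm]
    have htwo : 1 < Ideal.absNorm p := two_le_absNorm_of_prime hp
    exact Real.rpow_lt_one_of_one_lt_of_neg (Nat.one_lt_cast.mpr htwo) (by linarith)

variable (K) in
theorem exists_eulerContinuation : ∃ (Z : ℂ → ℂ) (δ B : ℝ),
    EulerContinuation (fun p : {p : Ideal (𝓞 K) // Prime p} => Ideal.absNorm p.1) Z δ B := by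
  obtain ⟨c, A, h⟩ := exists_hasDensity_absNorm K
  have hc := h.density_pos
  have hA := h.error_nonneg
  have hδ := h.saving_pos
  refine ⟨_, _, _, ⟨fun p => two_le_absNorm_of_prime p.2, fun σ hσ => ?_⟩, hδ,
    inv_le_one_of_one_le₀ (Nat.one_le_cast.mpr Module.finrank_pos),
    h.differentiableOn_poleFreeZeta, fun s hs => ?_, h.poleFreeZeta_one_ne_zero, ?_,
    fun s hs => h.norm_poleFreeZeta_le hs⟩
  · exact (summable_absNorm_rpow hσ).comp_injective Subtype.val_injective
  · rw [h.poleFreeZeta_eq hs, tsum_absNorm_cpow_eq_exp hs]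
  · positivity

end DedekindZeta

section PrimeSeries

open Complex

variable {P : Type*} {Np : P → ℕ}

namespace PrimeNorms

lemma pos (h : PrimeNorms Np) (p : P) : 0 < Np p := zero_lt_two.trans_le (h.two_le p)

lemma cast_pos (h : PrimeNorms Np) (p : P) : (0 : ℝ) < Np p := Nat.cast_pos.mpr (h.pos p)

lemma cast_ne_zero (h : PrimeNorms Np) (p : P) : (Np p : ℂ) ≠ 0 :=
  Nat.cast_ne_zero.mpr (h.pos p).ne'

lemma two_le_cast (h : PrimeNorms Np) (p : P) : (2 : ℝ) ≤ Np p := Nat.ofNat_le_cast.mpr (h.two_le p)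

lemma norm_cpow_neg (h : PrimeNorms Np) (p : P) (s : ℂ) :
    ‖(Np p : ℂ) ^ (-s)‖ = (Np p : ℝ) ^ (-s.re) := by
  rw [norm_natCast_cpow_of_pos (h.pos p), neg_re]

lemma rpow_neg_le_rpow_neg (h : PrimeNorms Np) (p : P) {a b : ℝ} (hab : a ≤ b) :
    (Np p : ℝ) ^ (-b) ≤ (Np p : ℝ) ^ (-a) :=
  Real.rpow_le_rpow_of_exponent_le (one_le_two.trans (h.two_le_cast p)) (neg_le_neg hab)

lemma rpow_neg_le_half (h : PrimeNorms Np) (p : P) {σ : ℝ} (hσ : 1 ≤ σ) :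
    (Np p : ℝ) ^ (-σ) ≤ 1 / 2 := by
  refine (h.rpow_neg_le_rpow_neg p hσ).trans ?_
  rw [Real.rpow_neg_one, one_div]
  exact inv_anti₀ two_pos (h.two_le_cast p)

lemma norm_log_one_sub_le (h : PrimeNorms Np) (p : P) {σ : ℝ} (hσ : 1 ≤ σ) {s : ℂ}
    (hs : σ ≤ s.re) : ‖-log (1 - (Np p : ℂ) ^ (-s))‖ ≤ 3 / 2 * (Np p : ℝ) ^ (-σ) := by
  have hlog := norm_log_one_add_half_le_self (z := -(Np p : ℂ) ^ (-s)) <| by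
    rw [norm_neg, h.norm_cpow_neg]
    exact h.rpow_neg_le_half p (hσ.trans hs)
  rw [norm_neg (_ ^ _), h.norm_cpow_neg, ← sub_eq_add_neg] at hlog
  rw [norm_neg]
  exact hlog.trans (mul_le_mul_of_nonneg_left (h.rpow_neg_le_rpow_neg p hs) (by norm_num))

lemma summable_log_one_sub (h : PrimeNorms Np) {s : ℂ} (hs : 1 < s.re) :
    Summable fun p => -log (1 - (Np p : ℂ) ^ (-s)) :=
  .of_norm_bounded ((h.summable_rpow s.re hs).mul_left _) fun p =>
    h.norm_log_one_sub_le p hs.le le_rfl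

lemma exists_norm_exp_logEuler_le (h : PrimeNorms Np) {σ : ℝ} (hσ : 1 < σ) :
    ∃ E : ℝ, 0 < E ∧ ∀ s : ℂ, σ ≤ s.re → ‖exp (logEuler Np s)‖ ≤ E := by
  refine ⟨Real.exp (∑' p, 3 / 2 * (Np p : ℝ) ^ (-σ)), Real.exp_pos _, fun s hs => ?_⟩
  rw [norm_exp, Real.exp_le_exp]
  exact (re_le_norm _).trans <| tsum_of_norm_bounded ((h.summable_rpow σ hσ).mul_left _).hasSum
    fun p => h.norm_log_one_sub_le p hσ.le hs

end PrimeNorms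

end PrimeSeries

section ThreeFourOne

open Complex

variable {P : Type*} {Np : P → ℕ} {Z : ℂ → ℂ} {δ B : ℝ}

-- In the Taylor coefficients this is `3 + 4 cos x + cos 2x = 2 (1 + cos x) ^ 2 ≥ 0`.
lemma re_neg_log_combination_nonneg {a : ℝ} (ha₀ : 0 ≤ a) (ha₁ : a < 1) {z : ℂ} (hz : ‖z‖ = 1) :
    0 ≤ 3 * (-log (1 - a)).re + 4 * (-log (1 - a * z)).re + (-log (1 - a * z ^ 2)).re := by
  have hnorm (k : ℕ) : ‖a * z ^ k‖ < 1 := by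
    rwa [norm_mul, norm_pow, hz, one_pow, mul_one, Complex.norm_of_nonneg ha₀]
  have htaylor (k : ℕ) := hasSum_re (hasSum_taylorSeries_neg_log (hnorm k))
  have hsum := (((htaylor 0).mul_left 3).add ((htaylor 1).mul_left 4)).add (htaylor 2)
  simp only [pow_zero, mul_one, pow_one] at hsum
  refine hsum.nonneg fun n => ?_
  have hsq : (z ^ n).re ^ 2 + (z ^ n).im ^ 2 = 1 := by
    rw [sq, sq, ← normSq_apply, ← Complex.sq_norm, norm_pow, hz, one_pow, one_pow]
  have hdouble : ((z ^ 2) ^ n).re = 2 * (z ^ n).re ^ 2 - 1 := by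
    rw [← pow_mul, mul_comm, pow_mul, sq, mul_re]
    linarith
  simp only [mul_pow, ← ofReal_pow, div_natCast_re, ofReal_re, re_ofReal_mul, hdouble]
  have hnonneg : 0 ≤ 2 * a ^ n * (1 + (z ^ n).re) ^ 2 / n := by positivity
  exact hnonneg.trans_eq (by ring)

lemma PrimeNorms.re_logEuler_combination_nonneg (h : PrimeNorms Np) {σ : ℝ} (hσ : 1 < σ) (t : ℝ) :
    0 ≤ 3 * (logEuler Np σ).re + 4 * (logEuler Np (σ + t * I)).re +
      (logEuler Np (σ + 2 * t * I)).re := by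
  have hre {s : ℂ} (hs : s.re = σ) :=
    hasSum_re (h.summable_log_one_sub (hσ.trans_eq hs.symm)).hasSum
  have hsum := (((hre (s := σ) (by simp)).mul_left 3).add
    ((hre (s := σ + t * I) (by simp)).mul_left 4)).add (hre (s := σ + 2 * t * I) (by simp))
  refine hsum.nonneg fun p => ?_
  have hnorm : ‖(Np p : ℂ) ^ (-(t * I))‖ = 1 := by
    rw [h.norm_cpow_neg]
    simp
  have hreal : (Np p : ℂ) ^ (-σ : ℂ) = ((Np p : ℝ) ^ (-σ) : ℝ) := by
    rw [ofReal_cpow (Nat.cast_nonneg _), ofReal_neg, ofReal_natCast]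
  have hone : (Np p : ℂ) ^ (-(σ + t * I)) = (Np p : ℂ) ^ (-σ : ℂ) * (Np p : ℂ) ^ (-(t * I)) := by
    rw [← cpow_add _ _ (h.cast_ne_zero p)]
    ring_nf
  have htwo : (Np p : ℂ) ^ (-(σ + 2 * t * I)) =
      (Np p : ℂ) ^ (-σ : ℂ) * ((Np p : ℂ) ^ (-(t * I))) ^ 2 := by
    rw [← cpow_nat_mul, ← cpow_add _ _ (h.cast_ne_zero p)]
    push_cast
    ring_nf
  rw [hone, htwo, hreal]
  exact re_neg_log_combination_nonneg (by positivity)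
    ((h.rpow_neg_le_half p hσ.le).trans_lt one_half_lt_one) hnorm

namespace EulerContinuation

lemma norm_eq (h : EulerContinuation Np Z δ B) {s : ℂ} (hs : 1 < s.re) :
    ‖Z s‖ = ‖s - 1‖ * Real.exp (logEuler Np s).re := by
  rw [h.eq_mul_exp s hs, norm_mul, norm_exp]

lemma pow_mul_abs_pow_le (h : EulerContinuation Np Z δ B) {σ : ℝ} (hσ : 1 < σ) (t : ℝ) :
    (σ - 1) ^ 3 * |t| ^ 5 ≤ ‖Z σ‖ ^ 3 * ‖Z (σ + t * I)‖ ^ 4 * ‖Z (σ + 2 * t * I)‖ := by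
  have : 0 ≤ σ - 1 := by linarith
  have hreal : σ - 1 ≤ ‖(σ - 1 : ℂ)‖ := by
    simpa using re_le_norm (σ - 1 : ℂ)
  have hline : |t| ≤ ‖(σ + t * I - 1 : ℂ)‖ := by
    simpa using abs_im_le_norm (σ + t * I - 1 : ℂ)
  have hdouble : |t| ≤ ‖(σ + 2 * t * I - 1 : ℂ)‖ := by
    have him : |2 * t| ≤ ‖(σ + 2 * t * I - 1 : ℂ)‖ := by
      simpa using abs_im_le_norm (σ + 2 * t * I - 1 : ℂ)
    rw [abs_mul, abs_two] at him
    linarith [abs_nonneg t]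
  rw [h.norm_eq (by simpa using hσ), h.norm_eq (by simpa using hσ), h.norm_eq (by simpa using hσ)]
  calc (σ - 1) ^ 3 * |t| ^ 5 = (σ - 1) ^ 3 * |t| ^ 4 * |t| * 1 := by ring
    _ ≤ ‖(σ - 1 : ℂ)‖ ^ 3 * ‖(σ + t * I - 1 : ℂ)‖ ^ 4 * ‖(σ + 2 * t * I - 1 : ℂ)‖ *
        Real.exp (3 * (logEuler Np σ).re + 4 * (logEuler Np (σ + t * I)).re +
          (logEuler Np (σ + 2 * t * I)).re) := by
      gcongr
      exact Real.one_le_exp (h.re_logEuler_combination_nonneg hσ t)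
    _ = _ := by
      rw [Real.exp_add, Real.exp_add, mul_comm 3, mul_comm 4, Real.exp_mul, Real.exp_mul]
      norm_cast
      ring

end EulerContinuation

end ThreeFourOne

section Convexity

open Complex Complex.HadamardThreeLines

lemma one_add_abs_pow_mul_norm_exp_sq_le {R : ℝ} {k m : ℕ} (hkm : k ≤ m) {s : ℂ}
    (hs : |s.re| ≤ R) :
    (1 + |s.im|) ^ k * ‖exp (s ^ 2)‖ ≤ Real.exp (R ^ 2 + m ^ 2) := by
  have hre : s.re ^ 2 ≤ R ^ 2 := sq_le_sq' (abs_le.mp hs).1 (abs_le.mp hs).2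
  have hpow : (1 + |s.im|) ^ k ≤ Real.exp (m * |s.im|) := by
    rw [Real.exp_nat_mul]
    have hone : 1 ≤ 1 + |s.im| := by linarith [abs_nonneg s.im]
    refine (pow_le_pow_right₀ hone hkm).trans ?_
    gcongr
    linarith [Real.add_one_le_exp |s.im|]
  calc (1 + |s.im|) ^ k * ‖exp (s ^ 2)‖
      ≤ Real.exp (m * |s.im|) * Real.exp (s.re ^ 2 - |s.im| ^ 2) := by
        rw [norm_exp, sq_abs, sq, mul_re, ← sq, ← sq]
        gcongr
    _ = Real.exp (m * |s.im| + (s.re ^ 2 - |s.im| ^ 2)) := (Real.exp_add _ _).symm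
    _ ≤ Real.exp (R ^ 2 + m ^ 2) :=
        Real.exp_le_exp.mpr (by nlinarith [sq_nonneg (|s.im| - m)])

lemma one_add_abs_le_mul (a b : ℝ) : 1 + |a| ≤ (1 + |b|) * (1 + |a - b|) := by
  have htriangle : |a| ≤ |b| + |a - b| := by simpa using abs_add_le b (a - b)
  nlinarith [mul_nonneg (abs_nonneg b) (abs_nonneg (a - b))]

lemma norm_mul_exp_sq_le {A R t : ℝ} {k m : ℕ} (hA : 0 ≤ A) (hkm : k ≤ m) {w s : ℂ}
    (hs : |s.re| ≤ R) (hw : ‖w‖ ≤ A * (1 + |s.im|) ^ k) :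
    ‖w * exp ((s - t * I) ^ 2)‖ ≤ A * Real.exp (R ^ 2 + m ^ 2) * (1 + |t|) ^ k := by
  have hgauss := one_add_abs_pow_mul_norm_exp_sq_le hkm (s := s - t * I) (R := R) (by simpa)
  simp only [sub_im, im_ofReal_mul, I_im, mul_one] at hgauss
  rw [norm_mul]
  calc ‖w‖ * ‖exp ((s - t * I) ^ 2)‖
      ≤ A * ((1 + |t|) * (1 + |s.im - t|)) ^ k * ‖exp ((s - t * I) ^ 2)‖ := by
        gcongr
        exact hw.trans (by gcongr; exact one_add_abs_le_mul _ _)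
    _ = A * ((1 + |s.im - t|) ^ k * ‖exp ((s - t * I) ^ 2)‖) * (1 + |t|) ^ k := by
        rw [mul_pow]
        ring
    _ ≤ A * Real.exp (R ^ 2 + m ^ 2) * (1 + |t|) ^ k := by gcongr

-- The factor `exp ((s - t I) ^ 2)` localizes the three lines theorem at height `t = z.im`.
theorem norm_le_interp_of_polynomial_growth {f : ℂ → ℂ} {l u A R : ℝ} {m n : ℕ} (hlu : l < u)
    (hl : -R ≤ l) (hu : u ≤ R) (hA : 0 < A) (hnm : n ≤ m)
    (hf : DifferentiableOn ℂ f (verticalClosedStrip l u))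
    (hstrip : ∀ s ∈ verticalClosedStrip l u, ‖f s‖ ≤ A * (1 + |s.im|) ^ m)
    (hright : ∀ s : ℂ, s.re = u → ‖f s‖ ≤ A * (1 + |s.im|) ^ n) {z : ℂ}
    (hz : z ∈ verticalClosedStrip l u) :
    ‖f z‖ ≤ A * Real.exp (R ^ 2 + m ^ 2) *
      (1 + |z.im|) ^ (m * (1 - (z.re - l) / (u - l)) + n * ((z.re - l) / (u - l))) := by
  set x := (z.re - l) / (u - l)
  set C := A * Real.exp (R ^ 2 + m ^ 2)
  set τ := 1 + |z.im|
  have hC : 0 < C := by positivity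
  have hτ : 0 < τ := by positivity
  let g : ℂ → ℂ := fun s => f s * exp ((s - z.im * I) ^ 2)
  have habs {s : ℂ} (hs : s ∈ verticalClosedStrip l u) : |s.re| ≤ R :=
    abs_le.mpr ⟨hl.trans hs.1, hs.2.trans hu⟩
  have hg {s : ℂ} (hs : s ∈ verticalClosedStrip l u) : ‖g s‖ ≤ C * τ ^ m :=
    norm_mul_exp_sq_le hA.le le_rfl (habs hs) (hstrip s hs)
  have hg_right {s : ℂ} (hs : s.re = u) : ‖g s‖ ≤ C * τ ^ n :=
    norm_mul_exp_sq_le hA.le hnm (habs ⟨hlu.le.trans_eq hs.symm, hs.le⟩) (hright s hs)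
  have hclosure : closure (verticalStrip l u) ⊆ verticalClosedStrip l u :=
    closure_minimal (Set.preimage_mono Set.Ioo_subset_Icc_self)
      (isClosed_Icc.preimage continuous_re)
  have hdiff : DifferentiableOn ℂ g (verticalClosedStrip l u) := hf.mul (by fun_prop)
  have hfg : ‖f z‖ = ‖g z‖ * Real.exp (-z.re ^ 2) := by
    have hz_sub : z - z.im * I = z.re := sub_eq_of_eq_add (re_add_im z).symm
    rw [norm_mul, norm_exp, hz_sub, ← ofReal_pow, ofReal_re, mul_assoc, ← Real.exp_add,
      add_neg_cancel, Real.exp_zero, mul_one]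
  calc ‖f z‖ ≤ ‖g z‖ := by
        rw [hfg]
        refine mul_le_of_le_one_right (norm_nonneg _) (Real.exp_le_one_iff.mpr ?_)
        exact neg_nonpos.mpr (sq_nonneg _)
    _ ≤ (C * τ ^ m) ^ (1 - x) * (C * τ ^ n) ^ x :=
        norm_le_interp_of_mem_verticalClosedStrip' hlu hz (hdiff.mono hclosure).diffContOnCl
          ⟨C * τ ^ m, Set.forall_mem_image.mpr fun s hs => hg hs⟩
          (fun s (hs : s.re = l) => hg ⟨hs.ge, hs.trans_le hlu.le⟩)
          (fun s hs => hg_right hs)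
    _ = C ^ ((1 - x) + x) * τ ^ (m * (1 - x) + n * x) := by
        rw [Real.mul_rpow hC.le (by positivity), Real.mul_rpow hC.le (by positivity),
          Real.rpow_add hC, Real.rpow_add hτ, Real.rpow_mul hτ.le, Real.rpow_mul hτ.le,
          Real.rpow_natCast, Real.rpow_natCast]
        ring
    _ = C * τ ^ (m * (1 - x) + n * x) := by rw [sub_add_cancel, Real.rpow_one]

end Convexity

section GrowthNearOne

open Complex Complex.HadamardThreeLines

/-- Growth of `Z` and its derivative of order at most `17 / 16` in the closed strip of half-width
`θ` around the line `s.re = 1`. -/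
structure StripBound (Z : ℂ → ℂ) (θ C : ℝ) : Prop where
  width_pos : 0 < θ
  bound_pos : 0 < C
  differentiableAt : ∀ s : ℂ, |s.re - 1| ≤ θ → DifferentiableAt ℂ Z s
  norm_le : ∀ s : ℂ, |s.re - 1| ≤ θ → ‖Z s‖ ≤ C * (1 + |s.im|) ^ (17 / 16 : ℝ)
  norm_deriv_le : ∀ s : ℂ, |s.re - 1| ≤ θ → ‖deriv Z s‖ ≤ C * (1 + |s.im|) ^ (17 / 16 : ℝ)

variable {P : Type*} {Np : P → ℕ} {Z : ℂ → ℂ} {δ B : ℝ}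

namespace EulerContinuation

lemma differentiableAt (h : EulerContinuation Np Z δ B) {s : ℂ} (hs : 1 - δ < s.re) :
    DifferentiableAt ℂ Z s :=
  h.differentiableOn.differentiableAt ((isOpen_lt continuous_const continuous_re).mem_nhds hs)

lemma norm_le_of_abs_re_le (h : EulerContinuation Np Z δ B) {s : ℂ} (hs : 1 - δ / 2 ≤ s.re)
    (hs' : s.re ≤ 2) : ‖Z s‖ ≤ 27 * B * (1 + |s.im|) ^ 3 := by
  have hB := h.bound_pos
  have hδ := h.width_le_one
  have hnorm : 1 + ‖s‖ ≤ 3 * (1 + |s.im|) := by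
    have hre : |s.re| ≤ 2 := abs_le.mpr ⟨by linarith, hs'⟩
    linarith [norm_le_abs_re_add_abs_im s, abs_nonneg s.im]
  calc ‖Z s‖ ≤ B * (1 + ‖s‖) ^ 3 := h.norm_le s hs
    _ ≤ B * (3 * (1 + |s.im|)) ^ 3 := by gcongr
    _ = 27 * B * (1 + |s.im|) ^ 3 := by ring

lemma exists_norm_le_right (h : EulerContinuation Np Z δ B) {u : ℝ} (hu : 1 < u) (hu' : u ≤ 2) :
    ∃ E, 0 < E ∧ ∀ s : ℂ, s.re = u → ‖Z s‖ ≤ E * (1 + |s.im|) := by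
  obtain ⟨E, hE, hexp⟩ := h.exists_norm_exp_logEuler_le hu
  refine ⟨E, hE, fun s hs => ?_⟩
  rw [h.eq_mul_exp s (by rwa [hs]), norm_mul, mul_comm]
  gcongr
  · exact hexp s hs.ge
  · have hre : |(s - 1).re| ≤ 1 := by
      rw [sub_re, one_re, hs]
      exact abs_le.mpr ⟨by linarith, by linarith⟩
    have him : (s - 1).im = s.im := by simp
    rw [← him]
    linarith [norm_le_abs_re_add_abs_im (s - 1)]

theorem exists_norm_le_rpow (h : EulerContinuation Np Z δ B) :
    ∃ θ C : ℝ, 0 < θ ∧ θ < δ / 2 ∧ 0 < C ∧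
      ∀ s : ℂ, |s.re - 1| ≤ θ → ‖Z s‖ ≤ C * (1 + |s.im|) ^ (17 / 16 : ℝ) := by
  have hδ := h.width_pos
  have hδ_le := h.width_le_one
  obtain ⟨E, hE, hright⟩ := h.exists_norm_le_right (u := 1 + δ / 200) (by linarith) (by linarith)
  set A := max (27 * B) E
  have hA : 0 < A := hE.trans_le (le_max_right _ _)
  have hgap : 1 - δ / 2 < 1 + δ / 200 := by linarith
  refine ⟨δ / 200, A * Real.exp (2 ^ 2 + (3 : ℕ) ^ 2), by linarith, by linarith, by positivity,
    fun s hs => ?_⟩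
  have hs_bounds := abs_le.mp hs
  have hinterp := norm_le_interp_of_polynomial_growth (f := Z) (R := 2) (m := 3) (n := 1) hgap
    (by linarith) (by linarith) hA (by norm_num)
    (h.differentiableOn.mono fun w hw => show 1 - δ < w.re from by linarith [hw.1])
    (fun w hw => (h.norm_le_of_abs_re_le hw.1 (hw.2.trans (by linarith))).trans <| by
      gcongr
      exact le_max_left _ _)
    (fun w hw => (hright w hw).trans <| by
      rw [pow_one]
      gcongr
      exact le_max_right _ _)
    (z := s) ⟨by linarith, by linarith⟩
  have hfraction : 31 / 32 ≤ (s.re - (1 - δ / 2)) / (1 + δ / 200 - (1 - δ / 2)) := by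
    rw [le_div_iff₀ (by linarith)]
    linarith
  refine hinterp.trans ?_
  gcongr
  · linarith [abs_nonneg s.im]
  · push_cast
    linarith

theorem exists_stripBound (h : EulerContinuation Np Z δ B) :
    ∃ θ C : ℝ, θ < δ / 2 ∧ StripBound Z θ C := by
  obtain ⟨θ, C, hθ, hθδ, hC, hZ⟩ := h.exists_norm_le_rpow
  set D := C * 2 ^ (17 / 16 : ℝ) / (θ / 2)
  have hD : 0 < D := by positivity
  refine ⟨θ / 2, C + D, by linarith, by positivity, by positivity,
    fun s hs => h.differentiableAt (by linarith [(abs_le.mp hs).1]), fun s hs => ?_, fun s hs => ?_⟩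
  · refine (hZ s (by linarith)).trans ?_
    gcongr
    linarith
  have hre {z : ℂ} (hz : ‖z - s‖ ≤ θ / 2) : |z.re - 1| ≤ θ := by
    have hdist := (abs_re_le_norm (z - s)).trans hz
    rw [sub_re] at hdist
    linarith [abs_sub_le z.re s.re 1]
  have him {z : ℂ} (hz : ‖z - s‖ ≤ θ / 2) : 1 + |z.im| ≤ 2 * (1 + |s.im|) := by
    have hdist := (abs_im_le_norm (z - s)).trans hz
    rw [sub_im] at hdist
    have hδ_le := h.width_le_one
    linarith [abs_sub_abs_le_abs_sub z.im s.im, abs_nonneg s.im]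
  have hcauchy := norm_deriv_le_of_forall_mem_sphere_norm_le (f := Z) (c := s) (R := θ / 2)
    (C := C * (2 * (1 + |s.im|)) ^ (17 / 16 : ℝ)) (by positivity)
    (DifferentiableOn.diffContOnCl fun z hz => by
      rw [closure_ball _ (by positivity), mem_closedBall_iff_norm] at hz
      exact (h.differentiableAt (by linarith [(abs_le.mp (hre hz)).1])).differentiableWithinAt)
    fun z hz => by
      have hz' : ‖z - s‖ ≤ θ / 2 := (mem_sphere_iff_norm.mp hz).le
      exact (hZ z (hre hz')).trans (by gcongr; exact him hz')
  calc ‖deriv Z s‖ ≤ C * (2 * (1 + |s.im|)) ^ (17 / 16 : ℝ) / (θ / 2) := hcauchy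
    _ = D * (1 + |s.im|) ^ (17 / 16 : ℝ) := by
        rw [Real.mul_rpow two_pos.le (by positivity)]
        ring
    _ ≤ (C + D) * (1 + |s.im|) ^ (17 / 16 : ℝ) := by
        gcongr
        linarith

end EulerContinuation

end GrowthNearOne

section ZeroFreeRegion

open Complex

/-- A lower bound for `Z` in the region `1 - a * (1 + |s.im|) ^ (-5 / 16) ≤ s.re ≤ 1 + θ`, together
with an upper bound for its derivative: they control `Z'/Z` to the left of the line `s.re = 1`. -/
structure ZeroFreeRegion (Z : ℂ → ℂ) (θ a c C : ℝ) : Prop where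
  width_pos : 0 < θ
  depth_pos : 0 < a
  depth_le : a ≤ θ
  lower_pos : 0 < c
  upper_pos : 0 < C
  norm_deriv_le : ∀ s : ℂ, |s.re - 1| ≤ θ → ‖deriv Z s‖ ≤ C * (1 + |s.im|) ^ (17 / 16 : ℝ)
  le_norm : ∀ s : ℂ, 1 - a * (1 + |s.im|) ^ (-(5 / 16) : ℝ) ≤ s.re → s.re ≤ 1 + θ →
    c * (1 + |s.im|) ^ (3 / 4 : ℝ) ≤ ‖Z s‖

lemma exists_half_norm_le_norm {Z : ℂ → ℂ} {w : ℂ} (hZ : ContinuousAt Z w) (hw : Z w ≠ 0) :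
    ∃ ρ > 0, ∀ s, ‖s - w‖ ≤ ρ → ‖Z w‖ / 2 ≤ ‖Z s‖ := by
  have hlt : ‖Z w‖ / 2 < ‖Z w‖ := half_lt_self (norm_pos_iff.mpr hw)
  obtain ⟨ρ, hρ, hball⟩ := Metric.eventually_nhds_iff.mp (hZ.norm.eventually (lt_mem_nhds hlt))
  refine ⟨ρ / 2, half_pos hρ, fun s hs => (hball ?_).le⟩
  rw [dist_eq_norm]
  linarith

lemma depth_mul_rpow_le {a t : ℝ} (ha : 0 ≤ a) : a * (1 + |t|) ^ (-(5 / 16) : ℝ) ≤ a :=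
  mul_le_of_le_one_right ha <|
    Real.rpow_le_one_of_one_le_of_nonpos (by linarith [abs_nonneg t]) (by norm_num)

namespace StripBound

variable {Z : ℂ → ℂ} {θ C : ℝ}

lemma mono (hZ : StripBound Z θ C) {θ' : ℝ} (hθ' : 0 < θ') (hle : θ' ≤ θ) : StripBound Z θ' C where
  width_pos := hθ'
  bound_pos := hZ.bound_pos
  differentiableAt s hs := hZ.differentiableAt s (hs.trans hle)
  norm_le s hs := hZ.norm_le s (hs.trans hle)
  norm_deriv_le s hs := hZ.norm_deriv_le s (hs.trans hle)

lemma norm_sub_le (hZ : StripBound Z θ C) {s : ℂ} {r : ℝ} (hs : |s.re - 1| ≤ θ)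
    (hr : |r - 1| ≤ θ) :
    ‖Z (r + s.im * I) - Z s‖ ≤ C * (1 + |s.im|) ^ (17 / 16 : ℝ) * |r - s.re| := by
  have hline : Convex ℝ (re ⁻¹' Metric.closedBall 1 θ ∩ im ⁻¹' {s.im}) :=
    ((convex_closedBall _ _).linear_preimage reLm).inter ((convex_singleton _).linear_preimage imLm)
  have hmem {w : ℂ} (hw : |w.re - 1| ≤ θ) (him : w.im = s.im) :
      w ∈ re ⁻¹' Metric.closedBall 1 θ ∩ im ⁻¹' {s.im} := ⟨hw, him⟩
  have hdist : (r + s.im * I : ℂ) - s = (r - s.re : ℝ) := by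
    apply Complex.ext <;> simp
  have hmean := hline.norm_image_sub_le_of_norm_deriv_le
    (fun w hw => hZ.differentiableAt w hw.1)
    (fun w hw => by simpa only [Set.mem_singleton_iff.mp hw.2] using hZ.norm_deriv_le w hw.1)
    (hmem hs rfl) (hmem (w := r + s.im * I) (by simpa using hr) (by simp))
  rwa [hdist, norm_real, Real.norm_eq_abs] at hmean

end StripBound

namespace EulerContinuation

variable {P : Type*} {Np : P → ℕ} {Z : ℂ → ℂ} {δ B θ C : ℝ}

lemma mul_pow_le_norm_pow_four (h : EulerContinuation Np Z δ B) (hZ : StripBound Z θ C)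
    {κ σ t : ℝ} (hκ : 0 ≤ κ) (hσ : 1 < σ) (hσθ : σ ≤ 1 + θ) (ht : κ * (1 + |t|) ≤ |t|) :
    κ ^ 5 / (4 * C ^ 4) * (σ - 1) ^ 3 * (1 + |t|) ^ (63 / 16 : ℝ) ≤ ‖Z (σ + t * I)‖ ^ 4 := by
  have hC := hZ.bound_pos
  have hσ_sub : 0 ≤ σ - 1 := by linarith
  have hstrip : |σ - 1| ≤ θ := by
    rw [abs_of_nonneg hσ_sub]
    linarith
  set τ := 1 + |t|
  have hτ : 0 < τ := by positivity
  have hreal : ‖Z σ‖ ≤ C := by simpa using hZ.norm_le σ (by simpa using hstrip)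
  have hdouble : ‖Z (σ + 2 * t * I)‖ ≤ C * (4 * τ ^ (17 / 16 : ℝ)) := by
    refine (hZ.norm_le (σ + 2 * t * I) (by simpa using hstrip)).trans ?_
    have him : 1 + |(σ + 2 * t * I : ℂ).im| ≤ 2 * τ := by
      simp only [add_im, ofReal_im, mul_im, mul_re, re_ofNat, im_ofNat, ofReal_re, I_re, I_im,
        zero_add, mul_zero, zero_mul, add_zero, mul_one, sub_zero, abs_mul, abs_two, τ]
      linarith
    have htwo : (2 : ℝ) ^ (17 / 16 : ℝ) ≤ 4 := by
      calc (2 : ℝ) ^ (17 / 16 : ℝ) ≤ 2 ^ (2 : ℝ) :=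
            Real.rpow_le_rpow_of_exponent_le one_le_two (by norm_num)
        _ = 4 := by norm_num
    calc C * (1 + |(σ + 2 * t * I : ℂ).im|) ^ (17 / 16 : ℝ) ≤ C * (2 * τ) ^ (17 / 16 : ℝ) := by
          gcongr
      _ ≤ C * (4 * τ ^ (17 / 16 : ℝ)) := by
          rw [Real.mul_rpow two_pos.le hτ.le]
          gcongr
  have hτ_split : τ ^ 5 = τ ^ (63 / 16 : ℝ) * τ ^ (17 / 16 : ℝ) := by
    rw [← Real.rpow_add hτ]
    norm_num
  have hmul : (σ - 1) ^ 3 * (κ * τ) ^ 5 ≤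
      C ^ 3 * ‖Z (σ + t * I)‖ ^ 4 * (C * (4 * τ ^ (17 / 16 : ℝ))) :=
    calc (σ - 1) ^ 3 * (κ * τ) ^ 5 ≤ (σ - 1) ^ 3 * |t| ^ 5 := by gcongr
      _ ≤ ‖Z σ‖ ^ 3 * ‖Z (σ + t * I)‖ ^ 4 * ‖Z (σ + 2 * t * I)‖ := h.pow_mul_abs_pow_le hσ t
      _ ≤ _ := by gcongr
  have hfactor : 0 < 4 * C ^ 4 * τ ^ (17 / 16 : ℝ) := by positivity
  refine le_of_mul_le_mul_right (le_of_eq_of_le ?_ (hmul.trans_eq ?_)) hfactor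
  · rw [mul_pow κ, hτ_split]
    field_simp
  · ring

lemma mul_rpow_le_norm (h : EulerContinuation Np Z δ B) (hZ : StripBound Z θ C) {κ m b σ t : ℝ}
    (hκ : 0 ≤ κ) (hm : m ^ 4 = κ ^ 5 / (4 * C ^ 4)) (hb : 0 < b)
    (hσ : b ^ 4 * (1 + |t|) ^ (-(5 / 16) : ℝ) ≤ σ - 1) (hσθ : σ ≤ 1 + θ)
    (ht : κ * (1 + |t|) ≤ |t|) :
    m * b ^ 3 * (1 + |t|) ^ (3 / 4 : ℝ) ≤ ‖Z (σ + t * I)‖ := by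
  set τ := 1 + |t|
  have hτ : 0 < τ := by positivity
  have hdepth : 0 < b ^ 4 * τ ^ (-(5 / 16) : ℝ) := by positivity
  have hexponent : (τ ^ (3 / 4 : ℝ)) ^ 4 = (τ ^ (-(5 / 16) : ℝ)) ^ 3 * τ ^ (63 / 16 : ℝ) := by
    rw [← Real.rpow_mul_natCast hτ.le, ← Real.rpow_mul_natCast hτ.le, ← Real.rpow_add hτ]
    norm_num
  refine le_of_pow_le_pow_left₀ four_ne_zero (norm_nonneg _) ?_
  calc (m * b ^ 3 * τ ^ (3 / 4 : ℝ)) ^ 4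
      = κ ^ 5 / (4 * C ^ 4) * (b ^ 4 * τ ^ (-(5 / 16) : ℝ)) ^ 3 * τ ^ (63 / 16 : ℝ) := by
        rw [mul_pow, mul_pow, hm, hexponent]
        ring
    _ ≤ κ ^ 5 / (4 * C ^ 4) * (σ - 1) ^ 3 * τ ^ (63 / 16 : ℝ) := by gcongr
    _ ≤ ‖Z (σ + t * I)‖ ^ 4 := h.mul_pow_le_norm_pow_four hZ hκ (by linarith) hσθ ht

-- Left of `σ = 1 + b ^ 4 * τ ^ (-5 / 16)` the mean value inequality costs `2 b ^ 4 C τ ^ (3 / 4)`,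
-- which for small `b` is at most half of the lower bound `m b ^ 3 τ ^ (3 / 4)` on that line.
lemma exists_rpow_le_norm_of_im (h : EulerContinuation Np Z δ B) (hZ : StripBound Z θ C) {κ : ℝ}
    (hκ : 0 < κ) :
    ∃ a c, 0 < a ∧ a ≤ θ ∧ 0 < c ∧ ∀ s : ℂ, κ * (1 + |s.im|) ≤ |s.im| →
      1 - a * (1 + |s.im|) ^ (-(5 / 16) : ℝ) ≤ s.re → s.re ≤ 1 + θ →
      c * (1 + |s.im|) ^ (3 / 4 : ℝ) ≤ ‖Z s‖ := by
  have hC := hZ.bound_pos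
  have hθ := hZ.width_pos
  obtain ⟨m, hm, hm_pow⟩ : ∃ m : ℝ, 0 < m ∧ m ^ 4 = κ ^ 5 / (4 * C ^ 4) :=
    ⟨_, by positivity, Real.rpow_inv_natCast_pow (by positivity) four_ne_zero⟩
  set b := min (min 1 θ) (m / (4 * C))
  have hb : 0 < b := by positivity
  have hb_one : b ≤ 1 := (min_le_left _ _).trans (min_le_left _ _)
  have hb_width : b ^ 4 ≤ θ := (pow_le_of_le_one hb.le hb_one four_ne_zero).trans
    ((min_le_left _ _).trans (min_le_right _ _))
  have hb_small : 2 * b ^ 4 * C ≤ m * b ^ 3 / 2 := by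
    have hbm : b * (4 * C) ≤ m := (le_div_iff₀ (by positivity)).mp (min_le_right _ _)
    nlinarith [pow_pos hb 3]
  refine ⟨b ^ 4, m * b ^ 3 / 2, by positivity, hb_width, by positivity, fun s ht hs hs' => ?_⟩
  have hdepth := depth_mul_rpow_le (t := s.im) (pow_nonneg hb.le 4)
  set τ := 1 + |s.im|
  have hτ : 0 < τ := by positivity
  set η := b ^ 4 * τ ^ (-(5 / 16) : ℝ)
  have hη : 0 < η := by positivity
  rcases le_total η (s.re - 1) with hright | hleft
  · refine le_trans ?_ <| (h.mul_rpow_le_norm hZ hκ.le hm_pow hb hright hs' ht).trans_eq ?_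
    · gcongr
      linarith [show 0 < m * b ^ 3 by positivity]
    · rw [re_add_im]
  · have hedge := h.mul_rpow_le_norm hZ hκ.le hm_pow hb (σ := 1 + η) (by simp [η, τ])
      (by linarith) ht
    have hmean : ‖Z ((1 + η : ℝ) + s.im * I) - Z s‖ ≤ m * b ^ 3 / 2 * τ ^ (3 / 4 : ℝ) := by
      have hgap : |1 + η - s.re| ≤ 2 * η := abs_le.mpr ⟨by linarith, by linarith⟩
      have hη_abs : |1 + η - 1| ≤ θ := abs_le.mpr ⟨by linarith, by linarith⟩
      calc ‖Z ((1 + η : ℝ) + s.im * I) - Z s‖ ≤ C * τ ^ (17 / 16 : ℝ) * (2 * η) :=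
            (hZ.norm_sub_le (abs_le.mpr ⟨by linarith, by linarith⟩) hη_abs).trans (by gcongr)
        _ = 2 * b ^ 4 * C * (τ ^ (17 / 16 : ℝ) * τ ^ (-(5 / 16) : ℝ)) := by ring
        _ = 2 * b ^ 4 * C * τ ^ (3 / 4 : ℝ) := by
            rw [← Real.rpow_add hτ]
            norm_num
        _ ≤ m * b ^ 3 / 2 * τ ^ (3 / 4 : ℝ) := by gcongr
    linarith [norm_sub_norm_le (Z ((1 + η : ℝ) + s.im * I)) (Z s)]

theorem exists_zeroFreeRegion (h : EulerContinuation Np Z δ B) :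
    ∃ θ a c C : ℝ, θ < δ / 2 ∧ ZeroFreeRegion Z θ a c C := by
  obtain ⟨θ₀, C, hθ₀, hZ₀⟩ := h.exists_stripBound
  obtain ⟨ρ, hρ, hnear⟩ := exists_half_norm_le_norm (Z := Z) (w := 1)
    (h.differentiableAt (by simpa using h.width_pos)).continuousAt h.one_ne_zero
  have hθ : 0 < min θ₀ (ρ / 2) := lt_min hZ₀.width_pos (half_pos hρ)
  have hZ := hZ₀.mono hθ (min_le_left _ _)
  set θ := min θ₀ (ρ / 2)
  have hθρ : θ ≤ ρ / 2 := min_le_right _ _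
  obtain ⟨a, c, ha, haθ, hc, hfar⟩ := h.exists_rpow_le_norm_of_im hZ
    (show 0 < ρ / 2 / (1 + ρ / 2) by positivity)
  have hZ_one : 0 < ‖Z 1‖ := norm_pos_iff.mpr h.one_ne_zero
  refine ⟨θ, a, min (‖Z 1‖ / 2 / (1 + ρ / 2)) c, C, (min_le_left _ _).trans_lt hθ₀, hθ, ha, haθ,
    by positivity, hZ.bound_pos, hZ.norm_deriv_le, fun s hs hs' => ?_⟩
  have hdepth := depth_mul_rpow_le (t := s.im) ha.le
  rcases le_total |s.im| (ρ / 2) with hlow | hhigh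
  · have hdist : ‖s - 1‖ ≤ ρ := by
      have hre : |(s - 1).re| ≤ θ := by
        rw [sub_re, one_re]
        exact abs_le.mpr ⟨by linarith, by linarith⟩
      have him : |(s - 1).im| ≤ ρ / 2 := by simpa using hlow
      linarith [norm_le_abs_re_add_abs_im (s - 1)]
    calc min (‖Z 1‖ / 2 / (1 + ρ / 2)) c * (1 + |s.im|) ^ (3 / 4 : ℝ)
        ≤ ‖Z 1‖ / 2 / (1 + ρ / 2) * (1 + ρ / 2) := by
          gcongr
          · exact min_le_left _ _
          · refine (Real.rpow_le_self_of_one_le ?_ (by norm_num)).trans (by linarith)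
            linarith [abs_nonneg s.im]
      _ = ‖Z 1‖ / 2 := by field_simp
      _ ≤ ‖Z s‖ := hnear s hdist
  · have hfraction : ρ / 2 / (1 + ρ / 2) * (1 + |s.im|) ≤ |s.im| := by
      rw [div_mul_eq_mul_div, div_le_iff₀ (by positivity)]
      linarith
    refine le_trans ?_ (hfar s hfraction hs hs')
    gcongr
    exact min_le_right _ _

end EulerContinuation

end ZeroFreeRegion

section LogarithmicDerivative

open Complex

variable {P : Type*} {Np : P → ℕ} {Z : ℂ → ℂ} {δ B : ℝ}

/-- The Dirichlet series `∑ log N(p) * N(p) ^ (-s)` over the primes. -/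
def primeLogSeries (Np : P → ℕ) (s : ℂ) : ℂ :=
  ∑' p, (Real.log (Np p) : ℂ) * (Np p : ℂ) ^ (-s)

/-- The contribution `∑ log N(p) * ∑_{k ≥ 2} N(p) ^ (-k * s)` of the proper prime powers to the
logarithmic derivative of the Euler product. -/
def primePowerSeries (Np : P → ℕ) (s : ℂ) : ℂ :=
  ∑' p, (Real.log (Np p) : ℂ) * (((Np p : ℂ) ^ (-s)) ^ 2 / (1 - (Np p : ℂ) ^ (-s)))

namespace PrimeNorms

lemma summable_log_mul_rpow (h : PrimeNorms Np) {σ : ℝ} (hσ : 1 < σ) :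
    Summable fun p => Real.log (Np p) * (Np p : ℝ) ^ (-σ) := by
  obtain ⟨ρ, hρ, hρσ⟩ := exists_between hσ
  refine .of_nonneg_of_le (fun p => mul_nonneg (Real.log_natCast_nonneg _) (by positivity))
    (fun p => ?_) ((h.summable_rpow ρ hρ).mul_left (1 / (σ - ρ)))
  have hgap : 0 < σ - ρ := sub_pos.mpr hρσ
  calc Real.log (Np p) * (Np p : ℝ) ^ (-σ)
      ≤ (Np p : ℝ) ^ (σ - ρ) / (σ - ρ) * (Np p : ℝ) ^ (-σ) := by
        gcongr
        exact Real.log_le_rpow_div (Nat.cast_nonneg _) hgap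
    _ = 1 / (σ - ρ) * ((Np p : ℝ) ^ (σ - ρ) * (Np p : ℝ) ^ (-σ)) := by ring
    _ = 1 / (σ - ρ) * (Np p : ℝ) ^ (-ρ) := by
        rw [← Real.rpow_add (h.cast_pos p)]
        ring_nf

lemma norm_log_mul_cpow (h : PrimeNorms Np) (p : P) (s : ℂ) :
    ‖(Real.log (Np p) : ℂ) * (Np p : ℂ) ^ (-s)‖ = Real.log (Np p) * (Np p : ℝ) ^ (-s.re) := by
  rw [norm_mul, h.norm_cpow_neg, Complex.norm_of_nonneg (Real.log_natCast_nonneg _)]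

lemma summable_log_mul_cpow (h : PrimeNorms Np) {s : ℂ} (hs : 1 < s.re) :
    Summable fun p => (Real.log (Np p) : ℂ) * (Np p : ℂ) ^ (-s) :=
  .of_norm_bounded (h.summable_log_mul_rpow hs) fun p => (h.norm_log_mul_cpow p s).le

lemma one_third_le_norm_one_sub (h : PrimeNorms Np) (p : P) {s : ℂ} (hs : 3 / 4 < s.re) :
    1 / 3 ≤ ‖1 - (Np p : ℂ) ^ (-s)‖ := by
  have htwo : (2 : ℝ) ^ (-(3 / 4) : ℝ) ≤ 2 / 3 := by
    refine le_of_pow_le_pow_left₀ four_ne_zero (by norm_num) ?_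
    rw [← Real.rpow_mul_natCast two_pos.le]
    norm_num
  have hnorm : ‖(Np p : ℂ) ^ (-s)‖ ≤ 2 / 3 := by
    rw [h.norm_cpow_neg]
    exact (h.rpow_neg_le_rpow_neg p hs.le).trans <|
      (Real.rpow_le_rpow_of_nonpos two_pos (h.two_le_cast p) (by norm_num)).trans htwo
  have htriangle := norm_sub_norm_le (1 : ℂ) ((Np p : ℂ) ^ (-s))
  rw [norm_one] at htriangle
  linarith

lemma one_sub_cpow_ne_zero (h : PrimeNorms Np) (p : P) {s : ℂ} (hs : 3 / 4 < s.re) :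
    1 - (Np p : ℂ) ^ (-s) ≠ 0 :=
  norm_pos_iff.mp <| lt_of_lt_of_le (by norm_num) (h.one_third_le_norm_one_sub p hs)

lemma norm_primePower_term_le (h : PrimeNorms Np) (p : P) {s : ℂ} (hs : 3 / 4 < s.re) :
    ‖(Real.log (Np p) : ℂ) * (((Np p : ℂ) ^ (-s)) ^ 2 / (1 - (Np p : ℂ) ^ (-s)))‖ ≤
      Real.log (Np p) * (Np p : ℝ) ^ (-(3 / 2) : ℝ) * 3 := by
  have hlog := Real.log_natCast_nonneg (Np p)
  have hsq : ((Np p : ℝ) ^ (-s.re)) ^ 2 ≤ (Np p : ℝ) ^ (-(3 / 2) : ℝ) := by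
    rw [← Real.rpow_mul_natCast (Nat.cast_nonneg _), neg_mul]
    exact h.rpow_neg_le_rpow_neg p (by norm_num; linarith)
  rw [norm_mul, norm_div, norm_pow, h.norm_cpow_neg, Complex.norm_of_nonneg hlog, mul_assoc]
  gcongr
  rw [div_le_iff₀ (norm_pos_iff.mpr (h.one_sub_cpow_ne_zero p hs))]
  calc ((Np p : ℝ) ^ (-s.re)) ^ 2 ≤ (Np p : ℝ) ^ (-(3 / 2) : ℝ) * 3 * (1 / 3) := by linarith
    _ ≤ _ := by
      gcongr
      exact h.one_third_le_norm_one_sub p hs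

lemma summable_primePower_bound (h : PrimeNorms Np) :
    Summable fun p => Real.log (Np p) * (Np p : ℝ) ^ (-(3 / 2) : ℝ) * 3 :=
  (h.summable_log_mul_rpow (by norm_num)).mul_right 3

lemma exists_norm_primePowerSeries_le (h : PrimeNorms Np) :
    ∃ D : ℝ, 0 ≤ D ∧ ∀ s : ℂ, 3 / 4 < s.re → ‖primePowerSeries Np s‖ ≤ D :=
  ⟨_, tsum_nonneg fun p =>
      mul_nonneg (mul_nonneg (Real.log_natCast_nonneg _) (by positivity)) (by positivity),
    fun _ hs => tsum_of_norm_bounded h.summable_primePower_bound.hasSum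
      fun p => h.norm_primePower_term_le p hs⟩

lemma hasDerivAt_cpow_neg (h : PrimeNorms Np) (p : P) (s : ℂ) :
    HasDerivAt (fun w : ℂ => (Np p : ℂ) ^ (-w))
      (-((Real.log (Np p) : ℂ) * (Np p : ℂ) ^ (-s))) s := by
  convert (hasDerivAt_neg s).const_cpow (Or.inl (h.cast_ne_zero p)) using 1
  rw [natCast_log]
  ring

lemma differentiableAt_primePowerSeries (h : PrimeNorms Np) {s : ℂ} (hs : 3 / 4 < s.re) :
    DifferentiableAt ℂ (primePowerSeries Np) s := by
  have hopen : IsOpen {w : ℂ | 3 / 4 < w.re} := isOpen_lt continuous_const continuous_re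
  refine (differentiableOn_tsum_of_summable_norm h.summable_primePower_bound (fun p w hw => ?_)
    hopen fun p w hw => h.norm_primePower_term_le p hw).differentiableAt (hopen.mem_nhds hs)
  have hterm := (h.hasDerivAt_cpow_neg p w).differentiableAt
  exact (((hterm.pow 2).div (hterm.const_sub 1)
    (h.one_sub_cpow_ne_zero p hw)).const_mul _).differentiableWithinAt

lemma hasDerivAt_neg_log_one_sub (h : PrimeNorms Np) (p : P) {s : ℂ} (hs : 1 < s.re) :
    HasDerivAt (fun w => -log (1 - (Np p : ℂ) ^ (-w)))
      (-((Real.log (Np p) : ℂ) * (Np p : ℂ) ^ (-s) / (1 - (Np p : ℂ) ^ (-s)))) s := by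
  have hslit : 1 - (Np p : ℂ) ^ (-s) ∈ slitPlane := by
    rw [sub_eq_add_neg]
    refine mem_slitPlane_of_norm_lt_one ?_
    rw [norm_neg, h.norm_cpow_neg]
    exact (h.rpow_neg_le_half p hs.le).trans_lt one_half_lt_one
  simpa only [neg_neg] using (((h.hasDerivAt_cpow_neg p s).const_sub 1).clog hslit).fun_neg

lemma hasDerivAt_logEuler (h : PrimeNorms Np) {s : ℂ} (hs : 1 < s.re) :
    HasDerivAt (logEuler Np) (-(primeLogSeries Np s + primePowerSeries Np s)) s := by
  obtain ⟨σ, hσ, hσs⟩ := exists_between hs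
  have hopen : IsOpen {w : ℂ | σ < w.re} := isOpen_lt continuous_const continuous_re
  have hsummable := (h.summable_rpow σ hσ).mul_left (3 / 2)
  have hbound (p : P) (w : ℂ) (hw : w ∈ {w : ℂ | σ < w.re}) := h.norm_log_one_sub_le p hσ.le hw.le
  have hterm (p : P) : DifferentiableOn ℂ (fun w => -log (1 - (Np p : ℂ) ^ (-w)))
      {w : ℂ | σ < w.re} := fun w hw =>
    (h.hasDerivAt_neg_log_one_sub p (hσ.trans hw)).differentiableAt.differentiableWithinAt
  have hderiv : HasDerivAt (logEuler Np) (deriv (logEuler Np) s) s :=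
    ((differentiableOn_tsum_of_summable_norm hsummable hterm hopen hbound).differentiableAt
      (hopen.mem_nhds hσs)).hasDerivAt
  have hsplit (p : P) : deriv (fun w => -log (1 - (Np p : ℂ) ^ (-w))) s =
      -((Real.log (Np p) : ℂ) * (Np p : ℂ) ^ (-s) +
        (Real.log (Np p) : ℂ) * (((Np p : ℂ) ^ (-s)) ^ 2 / (1 - (Np p : ℂ) ^ (-s)))) := by
    rw [(h.hasDerivAt_neg_log_one_sub p hs).deriv]
    have hne := h.one_sub_cpow_ne_zero p (s := s) (by linarith)
    field_simp
    ring
  have hseries := (hasSum_deriv_of_summable_norm hsummable hterm hopen hbound hσs).tsum_eq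
  simp only [hsplit] at hseries
  have hpowers := Summable.of_norm_bounded h.summable_primePower_bound
    fun p => h.norm_primePower_term_le p (s := s) (by linarith)
  rw [tsum_neg, (h.summable_log_mul_cpow hs).tsum_add hpowers] at hseries
  rw [primeLogSeries, primePowerSeries, hseries]
  exact hderiv

end PrimeNorms

namespace EulerContinuation

lemma ne_zero (h : EulerContinuation Np Z δ B) {s : ℂ} (hs : 1 < s.re) : Z s ≠ 0 := by
  rw [h.eq_mul_exp s hs]
  refine mul_ne_zero (sub_ne_zero.mpr ?_) (exp_ne_zero _)
  rintro rfl
  simp at hs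

lemma logDeriv_eq (h : EulerContinuation Np Z δ B) {s : ℂ} (hs : 1 < s.re) :
    logDeriv Z s = 1 / (s - 1) - (primeLogSeries Np s + primePowerSeries Np s) := by
  have hZ : Z =ᶠ[𝓝 s] fun w => (w - 1) * exp (logEuler Np w) := by
    filter_upwards [(isOpen_lt continuous_const continuous_re).mem_nhds hs] with w hw
    exact h.eq_mul_exp w hw
  have hs_sub : s - 1 ≠ 0 := left_ne_zero_of_mul (h.eq_mul_exp s hs ▸ h.ne_zero hs)
  have hderiv := ((hasDerivAt_id' s).sub_const 1).mul (h.hasDerivAt_logEuler hs).cexp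
  rw [logDeriv_apply, hZ.deriv_eq, h.eq_mul_exp s hs]
  rw [show deriv (fun w => (w - 1) * exp (logEuler Np w)) s = _ from hderiv.deriv]
  have hexp := exp_ne_zero (logEuler Np s)
  field_simp
  ring

end EulerContinuation

/-- The continuation of `∑ log N(p) * N(p) ^ (-s) / s - 1 / (s - 1)` to the zero-free region; for
`1 < s.re` this is the Laplace transform of the error term in the prime ideal theorem. -/
def chebyshevRemainder (Np : P → ℕ) (Z : ℂ → ℂ) (s : ℂ) : ℂ :=
  -(1 + logDeriv Z s + primePowerSeries Np s) / s

lemma EulerContinuation.chebyshevRemainder_eq (h : EulerContinuation Np Z δ B) {s : ℂ}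
    (hs : 1 < s.re) : chebyshevRemainder Np Z s = primeLogSeries Np s / s - 1 / (s - 1) := by
  have hs_ne : s ≠ 0 := ne_zero_of_re_pos (by linarith)
  have hs_sub : s - 1 ≠ 0 := ne_zero_of_re_pos (by simpa using hs)
  rw [chebyshevRemainder, h.logDeriv_eq hs]
  field_simp
  ring

end LogarithmicDerivative

section RemainderBound

open Complex

variable {P : Type*} {Np : P → ℕ} {Z : ℂ → ℂ} {δ B θ a c C : ℝ}

lemma rpow_neg_le_two_mul_rpow_neg {x y α : ℝ} (hx : 0 < x) (hxy : x ≤ 2 * y)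
    (hα₀ : 0 ≤ α) (hα₁ : α ≤ 1) : y ^ (-α) ≤ 2 * x ^ (-α) :=
  calc y ^ (-α) ≤ (x / 2) ^ (-α) :=
        Real.rpow_le_rpow_of_nonpos (by positivity) (by linarith) (neg_nonpos.mpr hα₀)
    _ = 2 ^ α * x ^ (-α) := by
        rw [Real.div_rpow hx.le two_pos.le, Real.rpow_neg two_pos.le, div_inv_eq_mul, mul_comm]
    _ ≤ 2 * x ^ (-α) := by
        gcongr
        exact Real.rpow_le_self_of_one_le one_le_two hα₁

lemma one_add_abs_im_le {z w : ℂ} (hzw : ‖z - w‖ ≤ 1) : 1 + |z.im| ≤ 2 * (1 + |w.im|) := by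
  have him := (abs_im_le_norm (z - w)).trans hzw
  rw [sub_im] at him
  linarith [abs_sub_abs_le_abs_sub z.im w.im, abs_nonneg w.im]

lemma one_add_abs_im_le_four_mul_norm {s : ℂ} (hs : 3 / 4 ≤ s.re) : 1 + |s.im| ≤ 4 * ‖s‖ := by
  linarith [re_le_norm s, abs_im_le_norm s]

lemma re_mem_zeroFree_of_norm_sub_le {r : ℝ} (hr : 0 ≤ r) (hra : 2 * r ≤ a)
    (hrθ : 2 * r ≤ θ) (hr₁ : r ≤ 1) {s z : ℂ} (hs : 1 < s.re) (hs' : s.re ≤ 1 + θ / 2)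
    (hz : ‖z - s‖ ≤ r * (1 + |s.im|) ^ (-(5 / 16) : ℝ)) :
    1 - a * (1 + |z.im|) ^ (-(5 / 16) : ℝ) ≤ z.re ∧ z.re ≤ 1 + θ := by
  have hz_le := hz.trans (depth_mul_rpow_le hr)
  have hcompare : (1 + |s.im|) ^ (-(5 / 16) : ℝ) ≤ 2 * (1 + |z.im|) ^ (-(5 / 16) : ℝ) :=
    rpow_neg_le_two_mul_rpow_neg (by positivity)
      (one_add_abs_im_le (hz_le.trans hr₁)) (by norm_num) (by norm_num)
  have hre := abs_le.mp ((abs_re_le_norm (z - s)).trans hz)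
  have hre' := abs_le.mp ((abs_re_le_norm (z - s)).trans hz_le)
  rw [sub_re] at hre hre'
  have hdepth : r * (1 + |s.im|) ^ (-(5 / 16) : ℝ) ≤ a * (1 + |z.im|) ^ (-(5 / 16) : ℝ) :=
    calc r * (1 + |s.im|) ^ (-(5 / 16) : ℝ) ≤ r * (2 * (1 + |z.im|) ^ (-(5 / 16) : ℝ)) := by gcongr
      _ = 2 * r * (1 + |z.im|) ^ (-(5 / 16) : ℝ) := by ring
      _ ≤ a * (1 + |z.im|) ^ (-(5 / 16) : ℝ) := by gcongr
  exact ⟨by linarith, by linarith⟩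

namespace EulerContinuation

lemma differentiableAt_chebyshevRemainder (h : EulerContinuation Np Z δ B) {s : ℂ}
    (hδ : 1 - δ < s.re) (hs : 3 / 4 < s.re) (hZ : Z s ≠ 0) :
    DifferentiableAt ℂ (chebyshevRemainder Np Z) s := by
  have hopen : IsOpen {w : ℂ | 1 - δ < w.re} := isOpen_lt continuous_const continuous_re
  have hderiv : DifferentiableAt ℂ (deriv Z) s :=
    (h.differentiableOn.deriv hopen).differentiableAt (hopen.mem_nhds hδ)
  have hquot : DifferentiableAt ℂ (logDeriv Z) s := hderiv.div (h.differentiableAt hδ) hZ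
  exact ((hquot.const_add 1).add (h.differentiableAt_primePowerSeries hs)).neg.div
    differentiableAt_id (ne_zero_of_re_pos (by linarith))

lemma differentiableAt_chebyshevRemainder_of_one_lt_re (h : EulerContinuation Np Z δ B) {s : ℂ}
    (hs : 1 < s.re) : DifferentiableAt ℂ (chebyshevRemainder Np Z) s :=
  h.differentiableAt_chebyshevRemainder (by linarith [h.width_pos]) (by linarith) (h.ne_zero hs)

end EulerContinuation

namespace ZeroFreeRegion

lemma mono (hZ : ZeroFreeRegion Z θ a c C) {a' : ℝ} (ha' : 0 < a') (hle : a' ≤ a) :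
    ZeroFreeRegion Z θ a' c C where
  width_pos := hZ.width_pos
  depth_pos := ha'
  depth_le := hle.trans hZ.depth_le
  lower_pos := hZ.lower_pos
  upper_pos := hZ.upper_pos
  norm_deriv_le := hZ.norm_deriv_le
  le_norm s hs := hZ.le_norm s (le_trans (by gcongr) hs)

lemma ne_zero (hZ : ZeroFreeRegion Z θ a c C) {s : ℂ}
    (hs : 1 - a * (1 + |s.im|) ^ (-(5 / 16) : ℝ) ≤ s.re) (hs' : s.re ≤ 1 + θ) : Z s ≠ 0 := by
  have hc := hZ.lower_pos
  exact norm_pos_iff.mp <| lt_of_lt_of_le (by positivity) (hZ.le_norm s hs hs')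

lemma norm_logDeriv_le (hZ : ZeroFreeRegion Z θ a c C) {s : ℂ}
    (hs : 1 - a * (1 + |s.im|) ^ (-(5 / 16) : ℝ) ≤ s.re) (hs' : s.re ≤ 1 + θ) :
    ‖logDeriv Z s‖ ≤ C / c * (1 + |s.im|) ^ (5 / 16 : ℝ) := by
  have hc := hZ.lower_pos
  have hC := hZ.upper_pos
  have hdepth := depth_mul_rpow_le (t := s.im) hZ.depth_pos.le
  have hstrip : |s.re - 1| ≤ θ := abs_le.mpr ⟨by linarith [hZ.depth_le], by linarith⟩
  rw [logDeriv_apply, norm_div]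
  calc ‖deriv Z s‖ / ‖Z s‖
      ≤ C * (1 + |s.im|) ^ (17 / 16 : ℝ) / (c * (1 + |s.im|) ^ (3 / 4 : ℝ)) := by
        gcongr
        exacts [hZ.norm_deriv_le s hstrip, hZ.le_norm s hs hs']
    _ = C / c * (1 + |s.im|) ^ (5 / 16 : ℝ) := by
        rw [mul_div_mul_comm, ← Real.rpow_sub (by positivity)]
        norm_num

lemma exists_norm_chebyshevRemainder_le (hZ : ZeroFreeRegion Z θ a c C) (h : PrimeNorms Np)
    (ha : a < 1 / 4) :
    ∃ E : ℝ, 0 < E ∧ ∀ s : ℂ, 1 - a * (1 + |s.im|) ^ (-(5 / 16) : ℝ) ≤ s.re → s.re ≤ 1 + θ →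
      ‖chebyshevRemainder Np Z s‖ ≤ E * (1 + |s.im|) ^ (-(11 / 16) : ℝ) := by
  obtain ⟨D, hD, hpowers⟩ := h.exists_norm_primePowerSeries_le
  have hc := hZ.lower_pos
  have hC := hZ.upper_pos
  refine ⟨(1 + C / c + D) * 4, by positivity, fun s hs hs' => ?_⟩
  have hre : 3 / 4 < s.re := by linarith [depth_mul_rpow_le (t := s.im) hZ.depth_pos.le]
  have hlog := hZ.norm_logDeriv_le hs hs'
  have hnorm := one_add_abs_im_le_four_mul_norm hre.le
  set τ := 1 + |s.im|
  have hτ : 0 < τ := by positivity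
  have hone : 1 ≤ τ ^ (5 / 16 : ℝ) :=
    Real.one_le_rpow (by linarith [abs_nonneg s.im]) (by norm_num)
  have hnum : ‖1 + logDeriv Z s + primePowerSeries Np s‖ ≤ (1 + C / c + D) * τ ^ (5 / 16 : ℝ) := by
    refine (norm_add₃_le).trans ?_
    rw [norm_one]
    nlinarith [hpowers s hre]
  rw [chebyshevRemainder, norm_div, norm_neg]
  calc ‖1 + logDeriv Z s + primePowerSeries Np s‖ / ‖s‖
      ≤ (1 + C / c + D) * τ ^ (5 / 16 : ℝ) / (τ / 4) := by
        gcongr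
        linarith
    _ = (1 + C / c + D) * 4 * (τ ^ (5 / 16 : ℝ) / τ ^ (1 : ℝ)) := by
        rw [Real.rpow_one]
        field_simp
    _ = (1 + C / c + D) * 4 * τ ^ (-(11 / 16) : ℝ) := by
        rw [← Real.rpow_sub hτ]
        norm_num

end ZeroFreeRegion

namespace EulerContinuation

-- The radius `r * (1 + |t|) ^ (-5 / 16)` of the zero-free discs costs `(1 + |t|) ^ (5 / 8)` in the
-- Cauchy estimate, less than the decay `(1 + |t|) ^ (-11 / 16)` of the remainder.
theorem exists_norm_iteratedDeriv_chebyshevRemainder_le (h : EulerContinuation Np Z δ B) :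
    ∃ θ M : ℝ, 0 < θ ∧ ∀ s : ℂ, 1 < s.re → s.re ≤ 1 + θ →
      ‖iteratedDeriv 2 (chebyshevRemainder Np Z) s‖ ≤ M := by
  obtain ⟨θ, a₀, c, C, hθδ, hZ₀⟩ := h.exists_zeroFreeRegion
  have ha : 0 < min a₀ (1 / 5) := lt_min hZ₀.depth_pos (by norm_num)
  have hZ := hZ₀.mono ha (min_le_left _ _)
  have ha_lt : min a₀ (1 / 5) < 1 / 4 := (min_le_right _ _).trans_lt (by norm_num)
  set a := min a₀ (1 / 5)
  obtain ⟨E, hE, hbound⟩ := hZ.exists_norm_chebyshevRemainder_le h.toPrimeNorms ha_lt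
  have haθ := hZ.depth_le
  refine ⟨θ / 2, 2 * (2 * E) / (a / 2) ^ 2, half_pos hZ.width_pos, fun s hs hs' => ?_⟩
  have hτ : 0 < 1 + |s.im| := by positivity
  have hradius : 0 < a / 2 * (1 + |s.im|) ^ (-(5 / 16) : ℝ) := by positivity
  have hmem {z : ℂ} (hz : ‖z - s‖ ≤ a / 2 * (1 + |s.im|) ^ (-(5 / 16) : ℝ)) :=
    re_mem_zeroFree_of_norm_sub_le (a := a) (r := a / 2) (by positivity) (by linarith) (by linarith)
      (by linarith) hs hs' hz
  have hdiff : DiffContOnCl ℂ (chebyshevRemainder Np Z)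
      (Metric.ball s (a / 2 * (1 + |s.im|) ^ (-(5 / 16) : ℝ))) := by
    refine DifferentiableOn.diffContOnCl ?_
    rw [closure_ball _ hradius.ne']
    intro z hz
    obtain ⟨hleft, hright⟩ := hmem (mem_closedBall_iff_norm.mp hz)
    have hdepth := depth_mul_rpow_le (t := z.im) ha.le
    exact (h.differentiableAt_chebyshevRemainder (by linarith [h.width_pos]) (by linarith)
      (hZ.ne_zero hleft hright)).differentiableWithinAt
  have hsphere : ∀ z ∈ Metric.sphere s (a / 2 * (1 + |s.im|) ^ (-(5 / 16) : ℝ)),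
      ‖chebyshevRemainder Np Z z‖ ≤ 2 * E * (1 + |s.im|) ^ (-(11 / 16) : ℝ) := by
    intro z hz
    have hz' := (mem_sphere_iff_norm.mp hz).le
    obtain ⟨hleft, hright⟩ := hmem hz'
    have hzs : ‖s - z‖ ≤ 1 := by
      rw [norm_sub_rev]
      linarith [depth_mul_rpow_le (t := s.im) (half_pos ha).le]
    calc ‖chebyshevRemainder Np Z z‖ ≤ E * (1 + |z.im|) ^ (-(11 / 16) : ℝ) := hbound z hleft hright
      _ ≤ E * (2 * (1 + |s.im|) ^ (-(11 / 16) : ℝ)) := by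
        gcongr
        exact rpow_neg_le_two_mul_rpow_neg hτ (one_add_abs_im_le hzs)
          (by norm_num) (by norm_num)
      _ = 2 * E * (1 + |s.im|) ^ (-(11 / 16) : ℝ) := by ring
  refine (norm_iteratedDeriv_le_of_forall_mem_sphere_norm_le 2 hradius hdiff hsphere).trans ?_
  have hexponent : (1 + |s.im|) ^ (-(11 / 16) : ℝ) ≤ ((1 + |s.im|) ^ (-(5 / 16) : ℝ)) ^ 2 := by
    rw [← Real.rpow_mul_natCast hτ.le]
    exact Real.rpow_le_rpow_of_exponent_le (by linarith [abs_nonneg s.im]) (by norm_num)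
  rw [mul_pow, Nat.factorial_two, Nat.cast_ofNat, div_le_div_iff₀ (by positivity) (by positivity)]
  calc 2 * (2 * E * (1 + |s.im|) ^ (-(11 / 16) : ℝ)) * (a / 2) ^ 2
      ≤ 2 * (2 * E * ((1 + |s.im|) ^ (-(5 / 16) : ℝ)) ^ 2) * (a / 2) ^ 2 := by gcongr
    _ = 2 * (2 * E) * ((a / 2) ^ 2 * ((1 + |s.im|) ^ (-(5 / 16) : ℝ)) ^ 2) := by ring

end EulerContinuation

end RemainderBound

section ChebyshevFunction

open MeasureTheory Set

variable {P : Type*} {Np : P → ℕ}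

/-- The Chebyshev function `ϑ(x)`: the sum of `log Np p` over the primes with `Np p ≤ x`. -/
def chebyshevTheta (Np : P → ℕ) (x : ℝ) : ℝ :=
  ∑' p, if (Np p : ℝ) ≤ x then Real.log (Np p) else 0

lemma log_ite_nonneg (n : ℕ) (x : ℝ) : 0 ≤ if (n : ℝ) ≤ x then Real.log n else 0 := by
  split_ifs
  exacts [Real.log_natCast_nonneg n, le_rfl]

lemma chebyshevTheta_nonneg (Np : P → ℕ) (x : ℝ) : 0 ≤ chebyshevTheta Np x :=
  tsum_nonneg fun p => log_ite_nonneg (Np p) x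

namespace PrimeNorms

lemma countable (h : PrimeNorms Np) : Countable P := by
  rw [← Set.countable_univ_iff]
  exact (h.summable_rpow 2 one_lt_two).countable_support.mono fun p _ =>
    (Real.rpow_pos_of_pos (h.cast_pos p) _).ne'

lemma log_ite_le (h : PrimeNorms Np) (p : P) {σ x : ℝ} (hσ : 0 ≤ σ) (hx : 0 ≤ x) :
    (if (Np p : ℝ) ≤ x then Real.log (Np p) else 0) ≤
      Real.log (Np p) * (Np p : ℝ) ^ (-σ) * x ^ σ := by
  have hp := h.cast_pos p
  have hlog := Real.log_natCast_nonneg (Np p)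
  split_ifs with hpx
  · have hone : 1 ≤ (Np p : ℝ) ^ (-σ) * x ^ σ := by
      rw [Real.rpow_neg hp.le, inv_mul_eq_div, one_le_div (by positivity)]
      exact Real.rpow_le_rpow hp.le hpx hσ
    rw [mul_assoc]
    exact le_mul_of_one_le_right hlog hone
  · positivity

lemma log_ite_eq_zero (h : PrimeNorms Np) (p : P) {x : ℝ} (hx : x < 2) :
    (if (Np p : ℝ) ≤ x then Real.log (Np p) else 0) = 0 :=
  if_neg (hx.trans_le (h.two_le_cast p)).not_ge

lemma summable_log_ite (h : PrimeNorms Np) (x : ℝ) :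
    Summable fun p => if (Np p : ℝ) ≤ x then Real.log (Np p) else 0 := by
  rcases le_or_gt 2 x with hx | hx
  · exact .of_nonneg_of_le (fun p => log_ite_nonneg (Np p) x)
      (fun p => h.log_ite_le p zero_le_two (zero_le_two.trans hx))
      ((h.summable_log_mul_rpow one_lt_two).mul_right _)
  · simpa only [h.log_ite_eq_zero _ hx] using summable_zero

lemma chebyshevTheta_eq_zero (h : PrimeNorms Np) {x : ℝ} (hx : x < 2) :
    chebyshevTheta Np x = 0 := by
  simp only [chebyshevTheta, h.log_ite_eq_zero _ hx, tsum_zero]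

lemma monotone_chebyshevTheta (h : PrimeNorms Np) : Monotone (chebyshevTheta Np) := by
  intro x y hxy
  refine (h.summable_log_ite x).tsum_le_tsum (fun p => ?_) (h.summable_log_ite y)
  by_cases hpx : (Np p : ℝ) ≤ x
  · rw [if_pos hpx, if_pos (hpx.trans hxy)]
  · rw [if_neg hpx]
    exact log_ite_nonneg (Np p) y

lemma measurable_chebyshevTheta_exp (h : PrimeNorms Np) :
    Measurable fun u => chebyshevTheta Np (Real.exp u) :=
  (h.monotone_chebyshevTheta.comp Real.exp_monotone).measurable

lemma chebyshevTheta_exp_eq_zero (h : PrimeNorms Np) {u : ℝ} (hu : u < 0) :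
    chebyshevTheta Np (Real.exp u) = 0 :=
  h.chebyshevTheta_eq_zero ((Real.exp_lt_one_iff.mpr hu).trans one_lt_two)

lemma exists_chebyshevTheta_exp_le (h : PrimeNorms Np) {σ : ℝ} (hσ : 1 < σ) :
    ∃ C : ℝ, 0 ≤ C ∧ ∀ u, chebyshevTheta Np (Real.exp u) ≤ C * Real.exp (σ * u) := by
  refine ⟨∑' p, Real.log (Np p) * (Np p : ℝ) ^ (-σ),
    tsum_nonneg fun p => by positivity, fun u => ?_⟩
  rw [← tsum_mul_right, mul_comm σ u, Real.exp_mul]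
  exact (h.summable_log_ite _).tsum_le_tsum
    (fun p => h.log_ite_le p (zero_lt_one.trans hσ).le (Real.exp_pos u).le)
    ((h.summable_log_mul_rpow hσ).mul_right _)

end PrimeNorms

end ChebyshevFunction

section LaplaceTransform

open MeasureTheory Set

variable {P : Type*} {Np : P → ℕ}

lemma integrable_indicator_Ici_cexp {a : ℂ} (ha : a.re < 0) (c : ℝ) :
    Integrable ((Ici c).indicator fun u : ℝ => Complex.exp (a * u)) := by
  rw [integrable_indicator_iff measurableSet_Ici, integrableOn_Ici_iff_integrableOn_Ioi]
  exact integrableOn_exp_mul_complex_Ioi ha c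

lemma integral_indicator_Ici_cexp {a : ℂ} (ha : a.re < 0) (c : ℝ) :
    ∫ u : ℝ, (Ici c).indicator (fun u : ℝ => Complex.exp (a * u)) u =
      -Complex.exp (a * c) / a := by
  rw [integral_indicator measurableSet_Ici, integral_Ici_eq_integral_Ioi,
    integral_exp_mul_complex_Ioi ha]

lemma integral_norm_indicator_Ici_cexp {a : ℂ} (ha : a.re < 0) (c : ℝ) :
    ∫ u : ℝ, ‖(Ici c).indicator (fun u : ℝ => Complex.exp (a * u)) u‖ =
      -Real.exp (a.re * c) / a.re := by
  simp only [norm_indicator_eq_indicator_norm, Complex.norm_exp, Complex.re_mul_ofReal]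
  rw [integral_indicator measurableSet_Ici, integral_Ici_eq_integral_Ioi, integral_exp_mul_Ioi ha]

lemma integrable_indicator_Ici_pow_mul_exp {κ : ℝ} (hκ : 0 < κ) (n : ℕ) :
    Integrable ((Ici 0).indicator fun u : ℝ => u ^ n * Real.exp (-κ * u)) := by
  rw [integrable_indicator_iff measurableSet_Ici, integrableOn_Ici_iff_integrableOn_Ioi]
  simpa only [Real.rpow_natCast, Real.rpow_one] using
    integrableOn_rpow_mul_exp_neg_mul_rpow (p := 1) (s := n) (by linarith [n.cast_nonneg (α := ℝ)])
      one_pos hκ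

namespace PrimeNorms

lemma cexp_neg_mul_log (h : PrimeNorms Np) (p : P) (s : ℂ) :
    Complex.exp (-s * Real.log (Np p)) = (Np p : ℂ) ^ (-s) := by
  rw [Complex.cpow_def_of_ne_zero (h.cast_ne_zero p), Complex.natCast_log, mul_comm]

lemma exp_neg_mul_log (h : PrimeNorms Np) (p : P) (σ : ℝ) :
    Real.exp (-σ * Real.log (Np p)) = (Np p : ℝ) ^ (-σ) := by
  rw [Real.rpow_def_of_pos (h.cast_pos p), mul_comm]

lemma tsum_log_mul_indicator_cexp (h : PrimeNorms Np) (s : ℂ) (u : ℝ) :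
    ∑' p, (Real.log (Np p) : ℂ) *
        (Ici (Real.log (Np p))).indicator (fun u : ℝ => Complex.exp (-s * u)) u =
      chebyshevTheta Np (Real.exp u) * Complex.exp (-s * u) := by
  rw [chebyshevTheta, Complex.ofReal_tsum, ← tsum_mul_right]
  refine tsum_congr fun p => ?_
  simp only [indicator_apply, mem_Ici, Real.log_le_iff_le_exp (h.cast_pos p)]
  split_ifs <;> simp

theorem integral_chebyshevTheta_exp_mul_cexp (h : PrimeNorms Np) {s : ℂ} (hs : 1 < s.re) :
    ∫ u : ℝ, (chebyshevTheta Np (Real.exp u) : ℂ) * Complex.exp (-s * u) =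
      primeLogSeries Np s / s := by
  have := h.countable
  have hneg : (-s).re < 0 := by
    rw [Complex.neg_re]
    linarith
  have hint (p : P) : Integrable fun u : ℝ => (Real.log (Np p) : ℂ) *
      (Ici (Real.log (Np p))).indicator (fun u : ℝ => Complex.exp (-s * u)) u :=
    (integrable_indicator_Ici_cexp hneg _).const_mul _
  have hnorm : Summable fun p => ∫ u : ℝ, ‖(Real.log (Np p) : ℂ) *
      (Ici (Real.log (Np p))).indicator (fun u : ℝ => Complex.exp (-s * u)) u‖ := by
    refine ((h.summable_log_mul_rpow hs).div_const s.re).congr fun p => ?_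
    simp only [norm_mul, Complex.norm_real, Real.norm_of_nonneg (Real.log_natCast_nonneg _)]
    rw [integral_const_mul, integral_norm_indicator_Ici_cexp hneg, Complex.neg_re,
      h.exp_neg_mul_log, neg_div_neg_eq, mul_div_assoc]
  simp only [← h.tsum_log_mul_indicator_cexp]
  rw [← integral_tsum_of_summable_integral_norm hint hnorm, primeLogSeries, ← tsum_div_const]
  refine tsum_congr fun p => ?_
  rw [integral_const_mul, integral_indicator_Ici_cexp hneg, h.cexp_neg_mul_log, neg_div_neg_eq,
    mul_div_assoc]

lemma integrable_chebyshevTheta_exp_mul_cexp (h : PrimeNorms Np) {s : ℂ} (hs : 1 < s.re) :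
    Integrable fun u : ℝ => (chebyshevTheta Np (Real.exp u) : ℂ) * Complex.exp (-s * u) := by
  obtain ⟨C, -, hC⟩ := h.exists_chebyshevTheta_exp_le (σ := (1 + s.re) / 2) (by linarith)
  have hκ : 0 < (s.re - 1) / 2 := by linarith
  have hdom := (integrable_indicator_Ici_pow_mul_exp hκ 0).const_mul C
  refine hdom.mono' ((Complex.measurable_ofReal.comp h.measurable_chebyshevTheta_exp).mul
    (by fun_prop)).aestronglyMeasurable (.of_forall fun u => ?_)
  rcases le_or_gt 0 u with hu | hu
  · rw [indicator_of_mem (mem_Ici.mpr hu), norm_mul, Complex.norm_real,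
      Real.norm_of_nonneg (chebyshevTheta_nonneg Np _), Complex.norm_exp, Complex.re_mul_ofReal,
      Complex.neg_re, pow_zero, one_mul]
    calc chebyshevTheta Np (Real.exp u) * Real.exp (-s.re * u)
        ≤ C * Real.exp ((1 + s.re) / 2 * u) * Real.exp (-s.re * u) := by
          gcongr
          exact hC u
      _ = C * Real.exp (-((s.re - 1) / 2) * u) := by
          rw [mul_assoc, ← Real.exp_add]
          ring_nf
  · rw [indicator_of_notMem (notMem_Ici.mpr hu), h.chebyshevTheta_exp_eq_zero hu]
    simp

end PrimeNorms

end LaplaceTransform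

section ScaledError

open MeasureTheory Set
open scoped FourierTransform

variable {P : Type*} {Np : P → ℕ} {Z : ℂ → ℂ} {δ B : ℝ}

/-- The relative error `ϑ(e^u) e^{-u} - 1` in the prime number theorem, set to zero for `u < 0`
and damped by `e^{-(σ - 1) u}` to make it integrable. -/
def scaledError (Np : P → ℕ) (σ u : ℝ) : ℝ :=
  (chebyshevTheta Np (Real.exp u) * Real.exp (-u) - (Ici (0 : ℝ)).indicator 1 u) *
    Real.exp (-(σ - 1) * u)

lemma PrimeNorms.scaledError_of_neg (h : PrimeNorms Np) (σ : ℝ) {u : ℝ} (hu : u < 0) :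
    scaledError Np σ u = 0 := by
  rw [scaledError, h.chebyshevTheta_exp_eq_zero hu, indicator_of_notMem (notMem_Ici.mpr hu),
    zero_mul, sub_zero, zero_mul]

lemma scaledError_of_nonneg (Np : P → ℕ) (σ : ℝ) {u : ℝ} (hu : 0 ≤ u) :
    scaledError Np σ u =
      (chebyshevTheta Np (Real.exp u) * Real.exp (-u) - 1) * Real.exp (-(σ - 1) * u) := by
  rw [scaledError, indicator_of_mem (mem_Ici.mpr hu), Pi.one_apply]

lemma PrimeNorms.measurable_scaledError (h : PrimeNorms Np) (σ : ℝ) :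
    Measurable (scaledError Np σ) :=
  ((h.measurable_chebyshevTheta_exp.mul (by fun_prop)).sub
    (measurable_one.indicator measurableSet_Ici)).mul (by fun_prop)

lemma PrimeNorms.exists_abs_scaledError_le (h : PrimeNorms Np) {σ : ℝ} (hσ : 1 < σ) :
    ∃ C κ : ℝ, 0 < κ ∧ ∀ u, 0 ≤ u → |scaledError Np σ u| ≤ C * Real.exp (-κ * u) := by
  obtain ⟨C, hC₀, hC⟩ := h.exists_chebyshevTheta_exp_le (σ := (1 + σ) / 2) (by linarith)
  refine ⟨C + 1, (σ - 1) / 2, by linarith, fun u hu => ?_⟩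
  have hnonneg := chebyshevTheta_nonneg Np (Real.exp u)
  have hone : 1 ≤ Real.exp ((σ - 1) / 2 * u) :=
    Real.one_le_exp (mul_nonneg (by linarith) hu)
  have hmain : chebyshevTheta Np (Real.exp u) * Real.exp (-u) ≤
      C * Real.exp ((σ - 1) / 2 * u) := by
    calc _ ≤ C * Real.exp ((1 + σ) / 2 * u) * Real.exp (-u) := by
          gcongr
          exact hC u
      _ = _ := by
          rw [mul_assoc, ← Real.exp_add]
          ring_nf
  have hmain₀ : 0 ≤ chebyshevTheta Np (Real.exp u) * Real.exp (-u) := by positivity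
  rw [scaledError_of_nonneg Np σ hu, abs_mul, Real.abs_exp]
  calc |chebyshevTheta Np (Real.exp u) * Real.exp (-u) - 1| * Real.exp (-(σ - 1) * u)
      ≤ (C + 1) * Real.exp ((σ - 1) / 2 * u) * Real.exp (-(σ - 1) * u) := by
        gcongr
        rw [abs_le]
        constructor <;> linarith [mul_nonneg hC₀ (Real.exp_nonneg ((σ - 1) / 2 * u))]
    _ = (C + 1) * Real.exp (-((σ - 1) / 2) * u) := by
        rw [mul_assoc, ← Real.exp_add]
        ring_nf

lemma PrimeNorms.integrable_pow_mul_scaledError (h : PrimeNorms Np) {σ : ℝ} (hσ : 1 < σ) (n : ℕ) :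
    Integrable fun u : ℝ => u ^ n * scaledError Np σ u := by
  obtain ⟨C, κ, hκ, hC⟩ := h.exists_abs_scaledError_le hσ
  refine ((integrable_indicator_Ici_pow_mul_exp hκ n).const_mul C).mono'
    ((measurable_id.pow_const n).mul (h.measurable_scaledError σ)).aestronglyMeasurable
    (.of_forall fun u => ?_)
  rcases le_or_gt 0 u with hu | hu
  · rw [indicator_of_mem (mem_Ici.mpr hu), Real.norm_eq_abs, abs_mul,
      abs_of_nonneg (pow_nonneg hu n), mul_left_comm]
    gcongr
    exact hC u hu
  · rw [h.scaledError_of_neg σ hu, mul_zero, norm_zero, indicator_of_notMem (notMem_Ici.mpr hu),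
      mul_zero]

theorem EulerContinuation.fourier_scaledError (h : EulerContinuation Np Z δ B) {σ : ℝ} (hσ : 1 < σ)
    (t : ℝ) :
    𝓕 (fun u => (scaledError Np σ u : ℂ)) t =
      chebyshevRemainder Np Z (σ + 2 * Real.pi * t * Complex.I) := by
  set s : ℂ := σ + 2 * Real.pi * t * Complex.I with hs
  have hre : s.re = σ := by simp [hs]
  have hs₁ : 1 < s.re := hre ▸ hσ
  have hneg : (-(s - 1)).re < 0 := by simpa [hre] using hσ
  have hpole : ∫ u, (Ici (0 : ℝ)).indicator (fun u : ℝ => Complex.exp (-(s - 1) * u)) u =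
      1 / (s - 1) := by
    rw [integral_indicator_Ici_cexp hneg, Complex.ofReal_zero, mul_zero, Complex.exp_zero,
      neg_div_neg_eq]
  rw [h.chebyshevRemainder_eq hs₁, ← h.integral_chebyshevTheta_exp_mul_cexp hs₁, ← hpole,
    ← integral_sub (h.integrable_chebyshevTheta_exp_mul_cexp hs₁)
      (integrable_indicator_Ici_cexp hneg 0), Real.fourier_real_eq_integral_exp_smul]
  congr 1 with u
  have hpole_exp : Complex.exp (-(s - 1) * u) =
      Complex.exp (↑(-2 * Real.pi * u * t) * Complex.I) * Complex.exp (-(σ - 1) * u) := by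
    rw [← Complex.exp_add, hs]
    push_cast
    ring_nf
  have hexp : Complex.exp (-s * u) = Complex.exp (↑(-2 * Real.pi * u * t) * Complex.I) *
      (Complex.exp (-u) * Complex.exp (-(σ - 1) * u)) := by
    rw [mul_left_comm, ← hpole_exp, ← Complex.exp_add]
    ring_nf
  rcases le_or_gt 0 u with hu | hu
  · rw [scaledError_of_nonneg Np σ hu, indicator_of_mem (mem_Ici.mpr hu), hexp, hpole_exp,
      smul_eq_mul]
    push_cast
    ring
  · rw [h.scaledError_of_neg σ hu, h.chebyshevTheta_exp_eq_zero hu,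
      indicator_of_notMem (notMem_Ici.mpr hu)]
    simp

end ScaledError

section UnitWeight

open MeasureTheory Set
open scoped FourierTransform

/-- A continuous averaging density concentrated on the interval `(a, b)`. -/
structure IsUnitWeight (v : ℝ → ℝ) (a b : ℝ) : Prop where
  nonneg : ∀ u, 0 ≤ v u
  continuous : Continuous v
  integral_eq_one : ∫ u, v u = 1
  support_subset : Function.support v ⊆ Ioo a b

namespace IsUnitWeight

variable {v g : ℝ → ℝ} {a b m : ℝ}

lemma hasCompactSupport (hv : IsUnitWeight v a b) : HasCompactSupport v :=
  .of_support_subset_isCompact isCompact_Icc (hv.support_subset.trans Ioo_subset_Icc_self)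

lemma integrable (hv : IsUnitWeight v a b) : Integrable v :=
  hv.continuous.integrable_of_hasCompactSupport hv.hasCompactSupport

lemma integrable_mul (hv : IsUnitWeight v a b) (hg : Integrable g) :
    Integrable fun u => g u * v u := by
  obtain ⟨c, hc⟩ := hv.hasCompactSupport.exists_bound_of_continuous hv.continuous
  exact hg.mul_bdd hv.continuous.aestronglyMeasurable (.of_forall hc)

lemma le_integral (hv : IsUnitWeight v a b) (hg : Integrable g) (hm : ∀ u ∈ Ioo a b, m ≤ g u) :
    m ≤ ∫ u, g u * v u := by
  calc m = ∫ u, m * v u := by rw [integral_const_mul, hv.integral_eq_one, mul_one]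
    _ ≤ ∫ u, g u * v u := by
      refine integral_mono (hv.integrable.const_mul m) (hv.integrable_mul hg) fun u => ?_
      by_cases hu : v u = 0
      · simp only [hu, mul_zero, le_refl]
      · exact mul_le_mul_of_nonneg_right (hm u (hv.support_subset hu)) (hv.nonneg u)

lemma rescale (hv : IsUnitWeight v 0 1) {ε : ℝ} (hε : 0 < ε) (V : ℝ) :
    IsUnitWeight (fun u => ε⁻¹ * v ((u - V) / ε)) V (V + ε) where
  nonneg u := mul_nonneg (inv_nonneg.mpr hε.le) (hv.nonneg _)
  continuous := continuous_const.mul (hv.continuous.comp (by fun_prop))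
  integral_eq_one := by
    rw [integral_const_mul, integral_sub_right_eq_self (fun u => v (u / ε)) V,
      Measure.integral_comp_div, hv.integral_eq_one, abs_of_pos hε, smul_eq_mul, mul_one,
      inv_mul_cancel₀ hε.ne']
  support_subset u hu := by
    obtain ⟨hlower, hupper⟩ := hv.support_subset (right_ne_zero_of_mul hu)
    rw [div_lt_one hε] at hupper
    exact ⟨sub_pos.mp ((div_pos_iff_of_pos_right hε).mp hlower), by linarith⟩

end IsUnitWeight

lemma exists_isUnitWeight_eq_fourier : ∃ (w : ℝ → ℝ) (κ : ℝ → ℂ), IsUnitWeight w 0 1 ∧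
    Integrable κ ∧ ∀ u, 𝓕 κ u = w u := by
  let bump : ContDiffBump (1 / 2 : ℝ) := ⟨1 / 8, 1 / 2, by norm_num, by norm_num⟩
  have hcompact : HasCompactSupport fun u => (bump.normed volume u : ℂ) :=
    bump.hasCompactSupport_normed.comp_left Complex.ofReal_zero
  have hsmooth : ContDiff ℝ (⊤ : ℕ∞) fun u => (bump.normed volume u : ℂ) :=
    Complex.ofRealCLM.contDiff.comp bump.contDiff_normed
  let W : SchwartzMap ℝ ℂ := hcompact.toSchwartzMap hsmooth
  refine ⟨bump.normed volume, ⇑(𝓕⁻ W : SchwartzMap ℝ ℂ),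
    ⟨bump.nonneg_normed, bump.continuous_normed, bump.integral_normed, ?_⟩,
    SchwartzMap.integrable _, fun u => ?_⟩
  · rw [bump.support_normed_eq, Real.ball_eq_Ioo]
    norm_num [bump]
  · rw [← SchwartzMap.fourier_coe, FourierTransform.fourier_fourierInv_eq W]
    rfl

end UnitWeight

section ModulatedDilation

open MeasureTheory
open scoped FourierTransform

/-- The dilation of `κ` by `ε`, modulated by the frequency `V`. On the Fourier side this rescales
`𝓕 κ` by `ε` and translates it by `V`. -/
def modulatedDilation (κ : ℝ → ℂ) (ε V t : ℝ) : ℂ :=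
  Complex.exp (↑(2 * Real.pi * t * V) * Complex.I) * κ (ε * t)

variable {κ : ℝ → ℂ} {ε : ℝ}

lemma integrable_modulatedDilation (hκ : Integrable κ) (hε : 0 < ε) (V : ℝ) :
    Integrable (modulatedDilation κ ε V) :=
  (hκ.comp_mul_left' hε.ne').bdd_mul
    (by fun_prop : Continuous fun t : ℝ =>
      Complex.exp (↑(2 * Real.pi * t * V) * Complex.I)).aestronglyMeasurable
    (.of_forall fun _ => (Complex.norm_exp_ofReal_mul_I _).le)

lemma integral_norm_modulatedDilation (hε : 0 < ε) (V : ℝ) :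
    ∫ t, ‖modulatedDilation κ ε V t‖ = (∫ t, ‖κ t‖) / ε := by
  simp only [modulatedDilation, norm_mul, Complex.norm_exp_ofReal_mul_I, one_mul]
  rw [Measure.integral_comp_mul_left fun t => ‖κ t‖, abs_of_pos (inv_pos.mpr hε), smul_eq_mul,
    inv_mul_eq_div]

lemma fourier_modulatedDilation (hε : 0 < ε) (V u : ℝ) :
    𝓕 (modulatedDilation κ ε V) u = (ε⁻¹ : ℝ) * 𝓕 κ ((u - V) / ε) := by
  rw [Real.fourier_real_eq_integral_exp_smul, Real.fourier_real_eq_integral_exp_smul,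
    ← Complex.real_smul, ← abs_of_pos (inv_pos.mpr hε), ← Measure.integral_comp_mul_left
      fun t : ℝ => Complex.exp (↑(-2 * Real.pi * t * ((u - V) / ε)) * Complex.I) • κ t]
  congr 1 with t
  rw [modulatedDilation, smul_eq_mul, smul_eq_mul, ← mul_assoc, ← Complex.exp_add, ← add_mul,
    ← Complex.ofReal_add]
  congr 4
  field_simp
  ring

end ModulatedDilation

section FourierPairing

open MeasureTheory Set
open scoped FourierTransform

variable {P : Type*} {Np : P → ℕ} {Z : ℂ → ℂ} {δ B : ℝ}

lemma hasDerivAt_comp_verticalLine {G : ℂ → ℂ} {σ t : ℝ}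
    (hG : DifferentiableAt ℂ G (σ + 2 * Real.pi * t * Complex.I)) :
    HasDerivAt (fun t : ℝ => G (σ + 2 * Real.pi * t * Complex.I))
      (deriv G (σ + 2 * Real.pi * t * Complex.I) * (2 * Real.pi * Complex.I)) t := by
  have hline : HasDerivAt (fun z : ℂ => (σ : ℂ) + 2 * Real.pi * z * Complex.I)
      (2 * Real.pi * Complex.I) t := by
    simpa only [id_eq, mul_one] using
      (((hasDerivAt_id (t : ℂ)).const_mul (2 * Real.pi : ℂ)).mul_const Complex.I).const_add (σ : ℂ)
  exact hG.hasDerivAt.comp t hline.comp_ofReal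

lemma iteratedDeriv_two_comp_verticalLine {G : ℂ → ℂ} {σ₀ σ : ℝ} (hσ : σ₀ < σ)
    (hG : DifferentiableOn ℂ G {s | σ₀ < s.re}) (t : ℝ) :
    iteratedDeriv 2 (fun t : ℝ => G (σ + 2 * Real.pi * t * Complex.I)) t =
      (2 * Real.pi * Complex.I) ^ 2 * iteratedDeriv 2 G (σ + 2 * Real.pi * t * Complex.I) := by
  have hopen : IsOpen {s : ℂ | σ₀ < s.re} := isOpen_lt continuous_const Complex.continuous_re
  have hline (t : ℝ) : {s : ℂ | σ₀ < s.re} ∈ 𝓝 ((σ : ℂ) + 2 * Real.pi * t * Complex.I) :=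
    hopen.mem_nhds (by simpa using hσ)
  have hfirst : deriv (fun t : ℝ => G (σ + 2 * Real.pi * t * Complex.I)) =
      fun t : ℝ => deriv G (σ + 2 * Real.pi * t * Complex.I) * (2 * Real.pi * Complex.I) :=
    funext fun t => (hasDerivAt_comp_verticalLine (hG.differentiableAt (hline t))).deriv
  rw [iteratedDeriv_succ, iteratedDeriv_one, hfirst, ((hasDerivAt_comp_verticalLine
    ((hG.deriv hopen).differentiableAt (hline t))).mul_const _).deriv, iteratedDeriv_succ,
    iteratedDeriv_one]
  ring

namespace EulerContinuation

lemma fourier_sq_mul_scaledError (h : EulerContinuation Np Z δ B) {σ : ℝ} (hσ : 1 < σ) (t : ℝ) :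
    𝓕 (fun u => ((u ^ 2 * scaledError Np σ u : ℝ) : ℂ)) t =
      iteratedDeriv 2 (chebyshevRemainder Np Z) (σ + 2 * Real.pi * t * Complex.I) := by
  have hint (n : ℕ) : Integrable fun u : ℝ => u ^ n • (scaledError Np σ u : ℂ) := by
    simpa [Complex.real_smul] using!
      (h.integrable_pow_mul_scaledError hσ n).ofReal (𝕜 := ℂ)
  have hderiv :=
    congrFun (Real.iteratedDeriv_fourier (N := 2) (n := 2) (fun n _ => hint n) le_rfl) t
  rw [funext (h.fourier_scaledError hσ), iteratedDeriv_two_comp_verticalLine hσ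
    fun s hs => (h.differentiableAt_chebyshevRemainder_of_one_lt_re hs).differentiableWithinAt]
    at hderiv
  refine mul_left_cancel₀ (pow_ne_zero 2 Complex.two_pi_I_ne_zero) (Eq.trans ?_ hderiv.symm)
  rw [Real.fourier_real_eq_integral_exp_smul, Real.fourier_real_eq_integral_exp_smul,
    ← integral_const_mul]
  congr 1 with u
  simp only [smul_eq_mul, Complex.ofReal_mul, Complex.ofReal_pow]
  ring

-- By Parseval, the weighted mean equals an integral of the bounded second derivative of the
-- remainder against an integrable kernel of mass `O(1 / ε)`.
theorem exists_abs_integral_sq_mul_scaledError_le (h : EulerContinuation Np Z δ B) :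
    ∃ θ C : ℝ, 0 < θ ∧ ∀ V ε : ℝ, 0 < ε → ∃ v, IsUnitWeight v V (V + ε) ∧
      ∀ σ, 1 < σ → σ ≤ 1 + θ → |∫ u, u ^ 2 * scaledError Np σ u * v u| ≤ C / ε := by
  obtain ⟨w, κ, hw, hκ, hfourier⟩ := exists_isUnitWeight_eq_fourier
  obtain ⟨θ, M, hθ, hM⟩ := h.exists_norm_iteratedDeriv_chebyshevRemainder_le
  refine ⟨θ, M * ∫ t, ‖κ t‖, hθ, fun V ε hε => ⟨_, hw.rescale hε V, fun σ hσ hσθ => ?_⟩⟩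
  set f : ℝ → ℂ := fun u => ((u ^ 2 * scaledError Np σ u : ℝ) : ℂ)
  have hf : Integrable f := (h.integrable_pow_mul_scaledError hσ 2).ofReal
  have hkernel := integrable_modulatedDilation hκ hε V
  have hparseval : ∫ t, 𝓕 f t • modulatedDilation κ ε V t =
      ∫ u, f u • 𝓕 (modulatedDilation κ ε V) u := by
    simpa using! (VectorFourier.integral_fourierIntegral_smul_eq_flip (L := innerₗ ℝ)
      Real.continuous_fourierChar continuous_inner hf hkernel)
  have hreal : ∫ u, f u • 𝓕 (modulatedDilation κ ε V) u =
      ((∫ u, u ^ 2 * scaledError Np σ u * (ε⁻¹ * w ((u - V) / ε)) : ℝ) : ℂ) := by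
    rw [← integral_complex_ofReal]
    congr 1 with u
    rw [fourier_modulatedDilation hε, hfourier, smul_eq_mul, ← Complex.ofReal_mul,
      ← Complex.ofReal_mul]
  rw [← Real.norm_eq_abs, ← Complex.norm_real, ← hreal, ← hparseval, mul_div_assoc,
    ← integral_norm_modulatedDilation hε V, ← integral_const_mul]
  refine norm_integral_le_of_norm_le (hkernel.norm.const_mul M) (.of_forall fun t => ?_)
  rw [norm_smul, h.fourier_sq_mul_scaledError hσ]
  gcongr
  exact hM _ (by simpa using hσ) (by simpa using hσθ)

end EulerContinuation

end FourierPairing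

section TauberianStep

open MeasureTheory Set

variable {P : Type*} {Np : P → ℕ} {Z : ℂ → ℂ} {δ B : ℝ}

lemma IsUnitWeight.sq_mul_le_abs_integral {v : ℝ → ℝ} {a b U D η : ℝ} (hv : IsUnitWeight v a b)
    (h : PrimeNorms Np) (hU : 1 ≤ U) (ha : U / 2 ≤ a) (hb : b ≤ U + U⁻¹) (hη : |η| = 1)
    (hD : ∀ u ∈ Ioo a b, D ≤ η * (chebyshevTheta Np (Real.exp u) * Real.exp (-u) - 1)) :
    (U / 2) ^ 2 * (D * Real.exp (-2)) ≤
      |∫ u, u ^ 2 * scaledError Np (1 + U⁻¹) u * v u| := by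
  rcases le_or_gt D 0 with hD₀ | hD₀
  · exact (mul_nonpos_of_nonneg_of_nonpos (sq_nonneg _)
      (mul_nonpos_of_nonpos_of_nonneg hD₀ (Real.exp_nonneg _))).trans (abs_nonneg _)
  have hU₀ : 0 < U := zero_lt_one.trans_le hU
  have hint := (h.integrable_pow_mul_scaledError
    (lt_add_of_pos_right 1 (inv_pos.mpr hU₀)) 2).const_mul η
  calc (U / 2) ^ 2 * (D * Real.exp (-2))
      ≤ ∫ u, η * (u ^ 2 * scaledError Np (1 + U⁻¹) u) * v u := by
        refine hv.le_integral hint fun u hu => ?_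
        have hUu : U / 2 ≤ u := ha.trans hu.1.le
        have hexponent : U⁻¹ * u ≤ 2 :=
          calc U⁻¹ * u ≤ U⁻¹ * (U + U⁻¹) := by
                gcongr
                exact hu.2.le.trans hb
            _ = 1 + U⁻¹ * U⁻¹ := by rw [mul_add, inv_mul_cancel₀ hU₀.ne']
            _ ≤ 2 := by
                have hinv := inv_le_one_of_one_le₀ hU
                nlinarith [inv_pos.mpr hU₀]
        calc (U / 2) ^ 2 * (D * Real.exp (-2))
            ≤ u ^ 2 * (η * (chebyshevTheta Np (Real.exp u) * Real.exp (-u) - 1) *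
                Real.exp (-U⁻¹ * u)) := by
              gcongr
              · exact hD₀.le.trans (hD u hu)
              · exact hD u hu
              · linarith
          _ = η * (u ^ 2 * scaledError Np (1 + U⁻¹) u) := by
              rw [scaledError_of_nonneg Np _ (by linarith), add_sub_cancel_left, neg_mul]
              ring
    _ = η * ∫ u, u ^ 2 * scaledError Np (1 + U⁻¹) u * v u := by
        simp only [mul_assoc, integral_const_mul]
    _ ≤ |∫ u, u ^ 2 * scaledError Np (1 + U⁻¹) u * v u| := by
        rw [← one_mul |_|, ← hη, ← abs_mul]
        exact le_abs_self _

lemma abs_sub_one_le_of_mul_exp {R C ε : ℝ} (hR : 0 ≤ R) (hε : 0 ≤ ε) (hε' : ε ≤ 1 / 2)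
    (hupper : R * Real.exp (-ε) - 1 ≤ C * ε) (hlower : 1 - R * Real.exp ε ≤ C * ε) (hC : 0 ≤ C) :
    |R - 1| ≤ 2 * (1 + C) * ε := by
  have hexp : Real.exp ε ≤ 1 + 2 * ε := by
    have := Real.abs_exp_sub_one_le (x := ε) (abs_le.mpr ⟨by linarith, by linarith⟩)
    rw [abs_of_nonneg hε] at this
    linarith [le_abs_self (Real.exp ε - 1)]
  rw [abs_le]
  constructor
  · rcases le_total 1 R with hR₁ | hR₁
    · have : 0 ≤ 2 * (1 + C) * ε := by positivity
      linarith
    · nlinarith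
  · have hR_le : R ≤ (1 + C * ε) * (1 + 2 * ε) :=
      calc R = R * Real.exp (-ε) * Real.exp ε := by
            rw [mul_assoc, ← Real.exp_add, neg_add_cancel, Real.exp_zero, mul_one]
        _ ≤ (1 + C * ε) * (1 + 2 * ε) := by
            gcongr
            linarith
    nlinarith [mul_nonneg hC hε]

-- Monotonicity of `ϑ` transfers averages of `ϑ(e^u) e^{-u} - 1` over windows of length `1 / U` on
-- either side of `U` to the value at `U`.
theorem EulerContinuation.exists_abs_chebyshevTheta_exp_sub_one_le
    (h : EulerContinuation Np Z δ B) :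
    ∃ U₀ C : ℝ, 1 ≤ U₀ ∧ 0 < C ∧ ∀ U, U₀ ≤ U →
      |chebyshevTheta Np (Real.exp U) * Real.exp (-U) - 1| ≤ C / U := by
  obtain ⟨θ, C, hθ, hmean⟩ := h.exists_abs_integral_sq_mul_scaledError_le
  obtain ⟨v₁, -, hv₁⟩ := hmean 0 1 one_pos
  have hC : 0 ≤ C := by
    simpa using (abs_nonneg _).trans (hv₁ (1 + θ) (by linarith) le_rfl)
  refine ⟨max 2 θ⁻¹, 2 * (1 + 4 * Real.exp 2 * C), one_le_two.trans (le_max_left _ _),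
    by positivity, fun U hU => ?_⟩
  have hU₂ : 2 ≤ U := (le_max_left _ _).trans hU
  have hε : 0 < U⁻¹ := inv_pos.mpr (by linarith)
  have hε' : U⁻¹ ≤ 1 / 2 := by simpa using inv_anti₀ two_pos hU₂
  have hεθ : U⁻¹ ≤ θ := inv_le_of_inv_le₀ hθ ((le_max_right _ _).trans hU)
  have hone_sided {V D η : ℝ} (hV : U / 2 ≤ V) (hVU : V ≤ U) (hη : |η| = 1)
      (hD : ∀ u ∈ Ioo V (V + U⁻¹),
        D ≤ η * (chebyshevTheta Np (Real.exp u) * Real.exp (-u) - 1)) :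
      D ≤ 4 * Real.exp 2 * C * U⁻¹ := by
    obtain ⟨v, hv, hbound⟩ := hmean V U⁻¹ hε
    have hmain := (hv.sq_mul_le_abs_integral h.toPrimeNorms (one_le_two.trans hU₂) hV
      (by gcongr) hη hD).trans (hbound (1 + U⁻¹) (by linarith) (by gcongr))
    have hU₀ : 0 < U := by linarith
    rw [div_inv_eq_mul, Real.exp_neg] at hmain
    rw [← div_eq_mul_inv, le_div_iff₀ hU₀]
    refine le_of_mul_le_mul_right ?_ (by positivity : 0 < U / (4 * Real.exp 2))
    calc D * U * (U / (4 * Real.exp 2)) = (U / 2) ^ 2 * (D * (Real.exp 2)⁻¹) := by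
          field_simp
          ring
      _ ≤ C * U := hmain
      _ = 4 * Real.exp 2 * C * (U / (4 * Real.exp 2)) := by field_simp
  have hnonneg := chebyshevTheta_nonneg Np
  rw [div_eq_mul_inv]
  refine abs_sub_one_le_of_mul_exp (mul_nonneg (hnonneg _) (Real.exp_nonneg _)) hε.le hε'
    (hone_sided (V := U) (η := 1) (by linarith) le_rfl abs_one fun u hu => ?_)
    (hone_sided (V := U - U⁻¹) (η := -1) (by linarith) (by linarith) (by simp) fun u hu => ?_)
    (by positivity)
  · rw [one_mul, mul_assoc, ← Real.exp_add]
    gcongr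
    · exact hnonneg _
    · exact h.monotone_chebyshevTheta (Real.exp_le_exp.mpr hu.1.le)
    · linarith [hu.2]
  · rw [neg_one_mul, neg_sub, mul_assoc, ← Real.exp_add]
    gcongr
    · exact hnonneg _
    · exact h.monotone_chebyshevTheta (Real.exp_le_exp.mpr (by linarith [hu.2]))
    · linarith [hu.1]

end TauberianStep

section ChebyshevAsymptotics

open Set

variable {P : Type*} {Np : P → ℕ} {Z : ℂ → ℂ} {δ B : ℝ}

theorem EulerContinuation.exists_abs_chebyshevTheta_sub_le (h : EulerContinuation Np Z δ B) :
    ∃ C : ℝ, 0 < C ∧ ∀ x, 1 < x → |chebyshevTheta Np x - x| ≤ C * (x / Real.log x) := by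
  obtain ⟨U₀, C, -, hC, hbound⟩ := h.exists_abs_chebyshevTheta_exp_sub_one_le
  have hnonneg := chebyshevTheta_nonneg Np
  obtain ⟨D, hD₀, hD⟩ : ∃ D : ℝ, 0 < D ∧
      ∀ x, 0 ≤ x → x ≤ Real.exp U₀ → |chebyshevTheta Np x - x| ≤ D := by
    refine ⟨chebyshevTheta Np (Real.exp U₀) + Real.exp U₀,
      add_pos_of_nonneg_of_pos (hnonneg _) (Real.exp_pos _), fun x hx₀ hx => abs_le.mpr ?_⟩
    constructor <;> linarith [hnonneg x, hnonneg (Real.exp U₀), h.monotone_chebyshevTheta hx]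
  refine ⟨C + D, by positivity, fun x hx => ?_⟩
  have hx₀ : 0 < x := one_pos.trans hx
  have hlog : 0 < Real.log x := Real.log_pos hx
  rcases le_total U₀ (Real.log x) with hlarge | hsmall
  · have hrel := hbound _ hlarge
    rw [Real.exp_neg, Real.exp_log hx₀] at hrel
    calc |chebyshevTheta Np x - x| = |(chebyshevTheta Np x * x⁻¹ - 1) * x| := by
          rw [sub_mul, inv_mul_cancel_right₀ hx₀.ne', one_mul]
      _ = |chebyshevTheta Np x * x⁻¹ - 1| * x := by rw [abs_mul, abs_of_pos hx₀]
      _ ≤ C / Real.log x * x := by gcongr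
      _ = C * (x / Real.log x) := by ring
      _ ≤ (C + D) * (x / Real.log x) := by gcongr; linarith
  · have hx_le : x ≤ Real.exp U₀ := (Real.log_le_iff_le_exp hx₀).mp hsmall
    have hone_le : 1 ≤ x / Real.log x :=
      (one_le_div hlog).mpr (Real.log_le_self hx₀.le)
    calc |chebyshevTheta Np x - x| ≤ D := hD x hx₀.le hx_le
      _ ≤ (C + D) * 1 := by linarith
      _ ≤ (C + D) * (x / Real.log x) := by gcongr

/-- The left limit of `chebyshevTheta`: the sum of `log (Np p)` over the primes of norm strictly
below `x`. -/
def chebyshevThetaLT (Np : P → ℕ) (x : ℝ) : ℝ :=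
  ∑' p, if (Np p : ℝ) < x then Real.log (Np p) else 0

lemma log_ite_lt_le_log_ite (n : ℕ) (x : ℝ) :
    (if (n : ℝ) < x then Real.log n else 0) ≤ if (n : ℝ) ≤ x then Real.log n else 0 := by
  by_cases hn : (n : ℝ) < x
  · rw [if_pos hn, if_pos hn.le]
  · rw [if_neg hn]
    exact log_ite_nonneg n x

lemma log_ite_le_log_ite_lt (n : ℕ) {x y : ℝ} (hyx : y < x) :
    (if (n : ℝ) ≤ y then Real.log n else 0) ≤ if (n : ℝ) < x then Real.log n else 0 := by
  by_cases hn : (n : ℝ) ≤ y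
  · rw [if_pos hn, if_pos (hn.trans_lt hyx)]
  · rw [if_neg hn]
    split_ifs
    exacts [Real.log_natCast_nonneg n, le_rfl]

namespace PrimeNorms

lemma summable_log_ite_lt (h : PrimeNorms Np) (x : ℝ) :
    Summable fun p => if (Np p : ℝ) < x then Real.log (Np p) else 0 :=
  .of_nonneg_of_le (fun p => by split_ifs; exacts [Real.log_natCast_nonneg _, le_rfl])
    (fun p => log_ite_lt_le_log_ite (Np p) x) (h.summable_log_ite x)

lemma chebyshevThetaLT_le (h : PrimeNorms Np) (x : ℝ) :
    chebyshevThetaLT Np x ≤ chebyshevTheta Np x :=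
  (h.summable_log_ite_lt x).tsum_le_tsum (fun p => log_ite_lt_le_log_ite (Np p) x)
    (h.summable_log_ite x)

lemma chebyshevTheta_le_chebyshevThetaLT (h : PrimeNorms Np) {x y : ℝ} (hyx : y < x) :
    chebyshevTheta Np y ≤ chebyshevThetaLT Np x :=
  (h.summable_log_ite y).tsum_le_tsum (fun p => log_ite_le_log_ite_lt (Np p) hyx)
    (h.summable_log_ite_lt x)

lemma abs_chebyshevThetaLT_sub_le (h : PrimeNorms Np) {C : ℝ}
    (hC : ∀ x, 1 < x → |chebyshevTheta Np x - x| ≤ C * (x / Real.log x)) {x : ℝ} (hx : 1 < x) :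
    |chebyshevThetaLT Np x - x| ≤ C * (x / Real.log x) := by
  have hcont : ContinuousAt (fun y => y - C * (y / Real.log y)) x :=
    continuousAt_id.sub (continuousAt_const.mul (continuousAt_id.div
      (Real.continuousAt_log (one_pos.trans hx).ne') (Real.log_pos hx).ne'))
  have hlower : x - C * (x / Real.log x) ≤ chebyshevThetaLT Np x := by
    refine le_of_tendsto (hcont.tendsto.mono_left (nhdsWithin_le_nhds (s := Iio x))) ?_
    filter_upwards [Ioo_mem_nhdsLT hx] with y hy
    linarith [(abs_le.mp (hC y hy.1)).1, h.chebyshevTheta_le_chebyshevThetaLT hy.2]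
  rw [abs_le]
  constructor <;> linarith [(abs_le.mp (hC x hx)).2, h.chebyshevThetaLT_le x]

end PrimeNorms

end ChebyshevAsymptotics

section SummationKernel

open MeasureTheory Set

/-- The kernel of the partial summation in the variable `u = log t`: minus the derivative of
`u ↦ t^{-α} / log t = e^{-αu} / u`. -/
def summationKernel (α u : ℝ) : ℝ := Real.exp (-α * u) * (α / u + 1 / u ^ 2)

lemma summationKernel_nonneg {α u : ℝ} (hα : 0 ≤ α) (hu : 0 ≤ u) : 0 ≤ summationKernel α u := by
  unfold summationKernel
  positivity

@[fun_prop]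
lemma measurable_summationKernel (α : ℝ) : Measurable (summationKernel α) := by
  unfold summationKernel
  fun_prop

lemma hasDerivAt_neg_exp_div (α : ℝ) {u : ℝ} (hu : u ≠ 0) :
    HasDerivAt (fun u => -(Real.exp (-α * u) / u)) (summationKernel α u) u := by
  have hexp := ((hasDerivAt_id u).const_mul (-α)).exp
  refine (hexp.fun_div (hasDerivAt_id u) hu).fun_neg.congr_deriv ?_
  simp only [summationKernel, id]
  field_simp
  ring

lemma tendsto_exp_neg_mul_div {α : ℝ} (hα : 0 < α) :
    Tendsto (fun u : ℝ => Real.exp (-α * u) / u) atTop (𝓝 0) :=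
  (Real.tendsto_exp_atBot.comp
    (tendsto_id.const_mul_atTop_of_neg (neg_neg_of_pos hα))).div_atTop tendsto_id

lemma tendsto_neg_exp_neg_mul_div {α : ℝ} (hα : 0 < α) :
    Tendsto (fun u : ℝ => -(Real.exp (-α * u) / u)) atTop (𝓝 0) := by
  simpa using (tendsto_exp_neg_mul_div hα).neg

lemma integrableOn_summationKernel {α a : ℝ} (hα : 0 < α) (ha : 0 < a) :
    IntegrableOn (summationKernel α) (Ioi a) :=
  integrableOn_Ioi_deriv_of_nonneg'
    (fun _ hu => hasDerivAt_neg_exp_div α (ha.trans_le hu).ne')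
    (fun _ hu => summationKernel_nonneg hα.le (ha.trans hu).le) (tendsto_neg_exp_neg_mul_div hα)

lemma integral_summationKernel {α a : ℝ} (hα : 0 < α) (ha : 0 < a) :
    ∫ u in Ioi a, summationKernel α u = Real.exp (-α * a) / a := by
  rw [integral_Ioi_of_hasDerivAt_of_nonneg'
    (fun _ hu => hasDerivAt_neg_exp_div α (ha.trans_le hu).ne')
    (fun _ hu => summationKernel_nonneg hα.le (ha.trans hu).le) (tendsto_neg_exp_neg_mul_div hα),
    zero_sub, neg_neg]

lemma exp_sub_one_mul (α u : ℝ) :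
    Real.exp (-(α - 1) * u) = Real.exp u * Real.exp (-α * u) := by
  rw [← Real.exp_add]
  ring_nf

/-- The main term of the partial summation, `ϑ(t)` being replaced by `t`, with the summand that
makes its integral elementary. -/
def mainKernel (α X u : ℝ) : ℝ :=
  (Real.exp u - Real.exp X) * summationKernel α u +
    Real.exp (-(α - 1) * u) / ((α - 1) * u ^ 2)

/-- An antiderivative of `mainKernel α X` vanishing at infinity. -/
def mainPrimitive (α X u : ℝ) : ℝ :=
  (Real.exp u - Real.exp X) * -(Real.exp (-α * u) / u) +
    (α - 1)⁻¹ * -(Real.exp (-(α - 1) * u) / u)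

@[fun_prop]
lemma measurable_mainKernel (α X : ℝ) : Measurable (mainKernel α X) := by
  unfold mainKernel
  fun_prop

lemma mainKernel_nonneg {α X u : ℝ} (hα : 1 ≤ α) (hu : 0 ≤ u) (hXu : X ≤ u) :
    0 ≤ mainKernel α X u := by
  have : 0 ≤ α - 1 := sub_nonneg.mpr hα
  have hexp : 0 ≤ Real.exp u - Real.exp X := sub_nonneg.mpr (Real.exp_le_exp.mpr hXu)
  have hkernel := summationKernel_nonneg (zero_le_one.trans hα) hu
  unfold mainKernel
  positivity

lemma hasDerivAt_mainPrimitive {α u : ℝ} (hα : α ≠ 1) (X : ℝ) (hu : u ≠ 0) :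
    HasDerivAt (mainPrimitive α X) (mainKernel α X u) u := by
  have hα_sub : α - 1 ≠ 0 := sub_ne_zero.mpr hα
  refine ((((Real.hasDerivAt_exp u).sub_const (Real.exp X)).fun_mul
    (hasDerivAt_neg_exp_div α hu)).fun_add
      ((hasDerivAt_neg_exp_div (α - 1) hu).const_mul (α - 1)⁻¹)).congr_deriv ?_
  rw [mainKernel, summationKernel, summationKernel, exp_sub_one_mul]
  field_simp
  ring

lemma tendsto_mainPrimitive {α : ℝ} (hα : 1 < α) (X : ℝ) :
    Tendsto (mainPrimitive α X) atTop (𝓝 0) := by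
  have hsub := tendsto_exp_neg_mul_div (sub_pos.mpr hα)
  have hlim := (((tendsto_exp_neg_mul_div (one_pos.trans hα)).const_mul (Real.exp X)).sub hsub).sub
    (hsub.const_mul (α - 1)⁻¹)
  simp only [mul_zero, sub_zero] at hlim
  refine hlim.congr fun u => ?_
  rw [mainPrimitive, exp_sub_one_mul]
  ring

lemma integrableOn_mainKernel {α X : ℝ} (hα : 1 < α) (hX : 0 < X) :
    IntegrableOn (mainKernel α X) (Ioi X) :=
  integrableOn_Ioi_deriv_of_nonneg'
    (fun _ hu => hasDerivAt_mainPrimitive hα.ne' X (hX.trans_le hu).ne')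
    (fun _ hu => mainKernel_nonneg hα.le (hX.trans hu).le (le_of_lt hu))
    (tendsto_mainPrimitive hα X)

lemma integral_mainKernel {α X : ℝ} (hα : 1 < α) (hX : 0 < X) :
    ∫ u in Ioi X, mainKernel α X u = Real.exp (-(α - 1) * X) / ((α - 1) * X) := by
  rw [integral_Ioi_of_hasDerivAt_of_nonneg'
    (fun _ hu => hasDerivAt_mainPrimitive hα.ne' X (hX.trans_le hu).ne')
    (fun _ hu => mainKernel_nonneg hα.le (hX.trans hu).le (le_of_lt hu))
    (tendsto_mainPrimitive hα X), mainPrimitive, sub_self, zero_mul, zero_add]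
  field_simp
  ring

end SummationKernel

section PartialSummation

open MeasureTheory Set

variable {P : Type*} {Np : P → ℕ}

/-- The contribution of an element of norm `n` to the integral form of `∑ Np p ^ (-α)` over
`x ≤ Np p`. -/
def tailSummand (α x : ℝ) (n : ℕ) : ℝ → ℝ :=
  if x ≤ n then (Ici (Real.log n)).indicator fun u => Real.log n * summationKernel α u else 0

lemma tailSummand_nonneg {α : ℝ} (hα : 0 ≤ α) (x : ℝ) (n : ℕ) (u : ℝ) :
    0 ≤ tailSummand α x n u := by
  have hlog := Real.log_natCast_nonneg n
  unfold tailSummand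
  split_ifs
  · exact indicator_nonneg
      (fun v hv => mul_nonneg hlog (summationKernel_nonneg hα (hlog.trans hv))) u
  · exact le_rfl

lemma integrable_tailSummand {α : ℝ} (hα : 0 < α) (x : ℝ) {n : ℕ} (hn : 2 ≤ n) :
    Integrable (tailSummand α x n) := by
  unfold tailSummand
  split_ifs
  · rw [integrable_indicator_iff measurableSet_Ici, integrableOn_Ici_iff_integrableOn_Ioi]
    exact (integrableOn_summationKernel hα (Real.log_pos (Nat.one_lt_cast.mpr hn))).const_mul _
  · exact integrable_zero _ _ _

lemma integral_tailSummand {α : ℝ} (hα : 0 < α) (x : ℝ) {n : ℕ} (hn : 2 ≤ n) :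
    ∫ u, tailSummand α x n u = if x ≤ n then (n : ℝ) ^ (-α) else 0 := by
  have hlog : 0 < Real.log n := Real.log_pos (Nat.one_lt_cast.mpr hn)
  unfold tailSummand
  split_ifs
  · rw [integral_indicator measurableSet_Ici, integral_Ici_eq_integral_Ioi, integral_const_mul,
      integral_summationKernel hα hlog, mul_div_cancel₀ _ hlog.ne',
      Real.rpow_def_of_pos (Nat.cast_pos.mpr (by omega)), mul_comm]
  · exact integral_zero _ _

lemma tailSummand_eq_zero (α : ℝ) {x u : ℝ} (hx : 0 < x) (hu : u < Real.log x) (n : ℕ) :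
    tailSummand α x n u = 0 := by
  unfold tailSummand
  split_ifs with hn
  · exact indicator_of_notMem (notMem_Ici.mpr (hu.trans_le (Real.log_le_log hx hn))) _
  · rfl

lemma tailSummand_eq (α : ℝ) {x u : ℝ} (hx : 0 < x) (hu : Real.log x ≤ u) {n : ℕ} (hn : 0 < n) :
    tailSummand α x n u = ((if (n : ℝ) ≤ Real.exp u then Real.log n else 0) -
      if (n : ℝ) < x then Real.log n else 0) * summationKernel α u := by
  have hxu : x ≤ Real.exp u := (Real.log_le_iff_le_exp hx).mp hu
  unfold tailSummand
  rcases le_or_gt x n with hxn | hxn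
  · rw [if_pos hxn, if_neg hxn.not_gt, indicator_apply, sub_zero, ite_mul, zero_mul]
    simp only [mem_Ici, Real.log_le_iff_le_exp (Nat.cast_pos.mpr hn)]
  · rw [if_neg hxn.not_ge, if_pos hxn, if_pos (hxn.le.trans hxu), sub_self, zero_mul,
      Pi.zero_apply]

lemma PrimeNorms.tsum_tailSummand (h : PrimeNorms Np) (α : ℝ) {x : ℝ} (hx : 0 < x) (u : ℝ) :
    ∑' p, tailSummand α x (Np p) u = (Ici (Real.log x)).indicator (fun u =>
      (chebyshevTheta Np (Real.exp u) - chebyshevThetaLT Np x) * summationKernel α u) u := by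
  rcases le_or_gt (Real.log x) u with hu | hu
  · rw [indicator_of_mem (mem_Ici.mpr hu), chebyshevTheta, chebyshevThetaLT,
      ← (h.summable_log_ite _).tsum_sub (h.summable_log_ite_lt x), ← tsum_mul_right]
    exact tsum_congr fun p => tailSummand_eq α hx hu (h.pos p)
  · simp only [indicator_of_notMem (notMem_Ici.mpr hu), tailSummand_eq_zero α hx hu, tsum_zero]

theorem PrimeNorms.tsum_rpow_eq_integral (h : PrimeNorms Np) {α x : ℝ} (hα : 1 < α) (hx : 0 < x) :
    ∑' p, (if x ≤ Np p then (Np p : ℝ) ^ (-α) else 0) =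
      ∫ u in Ioi (Real.log x),
        (chebyshevTheta Np (Real.exp u) - chebyshevThetaLT Np x) * summationKernel α u := by
  have := h.countable
  have hα₀ : 0 < α := one_pos.trans hα
  have hval (p : P) := integral_tailSummand hα₀ x (h.two_le p)
  have hsum : Summable fun p => ∫ u, ‖tailSummand α x (Np p) u‖ := by
    simp only [Real.norm_of_nonneg (tailSummand_nonneg hα₀.le _ _ _), hval]
    refine .of_nonneg_of_le (fun p => ?_) (fun p => ?_) (h.summable_rpow α hα) <;>
      split_ifs <;> first | exact le_rfl | positivity
  rw [← tsum_congr hval, integral_tsum_of_summable_integral_norm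
    (fun p => integrable_tailSummand hα₀ x (h.two_le p)) hsum]
  simp only [h.tsum_tailSummand α hx]
  rw [integral_indicator measurableSet_Ici, integral_Ici_eq_integral_Ioi]

end PartialSummation

section TailEstimate

open MeasureTheory Set

variable {P : Type*} {Np : P → ℕ} {Z : ℂ → ℂ} {δ B : ℝ}

lemma summationKernel_le {α X u L : ℝ} (hα : 0 ≤ α) (hL : 0 < L) (hLX : L ≤ X) (hXu : X ≤ u) :
    summationKernel α u ≤ Real.exp (-α * u) * ((α + 1 / L) / X) := by
  have hX : 0 < X := hL.trans_le hLX
  rw [summationKernel, add_div, div_div]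
  have hsq : L * X ≤ u ^ 2 := by nlinarith
  gcongr

lemma PrimeNorms.abs_tailIntegrand_sub_le (h : PrimeNorms Np) {C : ℝ} (hC₀ : 0 ≤ C)
    (hC : ∀ x, 1 < x → |chebyshevTheta Np x - x| ≤ C * (x / Real.log x)) {α X u L : ℝ}
    (hα : 1 < α) (hL : 0 < L) (hLX : L ≤ X) (hXu : X ≤ u) :
    |(chebyshevTheta Np (Real.exp u) - chebyshevThetaLT Np (Real.exp X)) * summationKernel α u -
        mainKernel α X u| ≤
      (2 * C * (α + 1 / L) + 1 / (α - 1)) / X ^ 2 * Real.exp (-(α - 1) * u) := by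
  have hX : 0 < X := hL.trans_le hLX
  have hu : 0 < u := hX.trans_le hXu
  have hα_sub : 0 < α - 1 := sub_pos.mpr hα
  have hkernel := summationKernel_nonneg (zero_le_one.trans hα.le) hu.le
  have hθ : |chebyshevTheta Np (Real.exp u) - Real.exp u| ≤ C * (Real.exp u / X) := by
    refine (hC _ (Real.one_lt_exp_iff.mpr hu)).trans ?_
    rw [Real.log_exp]
    gcongr
  have hθ_lt : |chebyshevThetaLT Np (Real.exp X) - Real.exp X| ≤ C * (Real.exp u / X) := by
    refine (h.abs_chebyshevThetaLT_sub_le hC (Real.one_lt_exp_iff.mpr hX)).trans ?_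
    rw [Real.log_exp]
    gcongr
  have hdiff : |(chebyshevTheta Np (Real.exp u) - Real.exp u) -
      (chebyshevThetaLT Np (Real.exp X) - Real.exp X)| ≤ 2 * C * (Real.exp u / X) :=
    (abs_sub _ _).trans (by linarith)
  calc _ = |((chebyshevTheta Np (Real.exp u) - Real.exp u) -
          (chebyshevThetaLT Np (Real.exp X) - Real.exp X)) * summationKernel α u -
          Real.exp (-(α - 1) * u) / ((α - 1) * u ^ 2)| := by
        rw [mainKernel]
        ring_nf
    _ ≤ 2 * C * (Real.exp u / X) * (Real.exp (-α * u) * ((α + 1 / L) / X)) +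
          Real.exp (-(α - 1) * u) / ((α - 1) * X ^ 2) := by
        refine (abs_sub _ _).trans ?_
        rw [abs_mul, abs_of_nonneg hkernel, abs_of_nonneg (a := _ / _) (by positivity)]
        gcongr
        exact summationKernel_le (zero_le_one.trans hα.le) hL hLX hXu
    _ = _ := by
        rw [exp_sub_one_mul]
        field_simp

lemma PrimeNorms.abs_integral_sub_le (h : PrimeNorms Np) {α X Q : ℝ} (hα : 1 < α) (hX : 0 < X)
    (hQ : ∀ u, X ≤ u →
      |(chebyshevTheta Np (Real.exp u) - chebyshevThetaLT Np (Real.exp X)) *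
        summationKernel α u - mainKernel α X u| ≤ Q * Real.exp (-(α - 1) * u)) :
    |(∫ u in Ioi X, (chebyshevTheta Np (Real.exp u) - chebyshevThetaLT Np (Real.exp X)) *
        summationKernel α u) - Real.exp (-(α - 1) * X) / ((α - 1) * X)| ≤
      Q / (α - 1) * Real.exp (-(α - 1) * X) := by
  have hα_sub : -(α - 1) < 0 := by linarith
  have hdom := (integrableOn_exp_mul_Ioi hα_sub X).const_mul Q
  have hbound : ∀ᵐ u ∂volume.restrict (Ioi X),
      ‖(chebyshevTheta Np (Real.exp u) - chebyshevThetaLT Np (Real.exp X)) *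
        summationKernel α u - mainKernel α X u‖ ≤ Q * Real.exp (-(α - 1) * u) :=
    ae_restrict_of_forall_mem measurableSet_Ioi fun u hu => hQ u (le_of_lt hu)
  have hmain := integrableOn_mainKernel hα hX
  have hdiff : IntegrableOn (fun u =>
      (chebyshevTheta Np (Real.exp u) - chebyshevThetaLT Np (Real.exp X)) *
        summationKernel α u - mainKernel α X u) (Ioi X) := by
    have := h.measurable_chebyshevTheta_exp
    exact hdom.mono' (by fun_prop) hbound
  have hint : IntegrableOn (fun u =>
      (chebyshevTheta Np (Real.exp u) - chebyshevThetaLT Np (Real.exp X)) *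
        summationKernel α u) (Ioi X) := by
    simpa only [Pi.add_def, sub_add_cancel] using hdiff.add hmain
  rw [← integral_mainKernel hα hX, ← integral_sub hint hmain, ← Real.norm_eq_abs]
  refine (norm_integral_le_of_norm_le hdom hbound).trans_eq ?_
  rw [integral_const_mul, integral_exp_mul_Ioi hα_sub, neg_div_neg_eq, mul_div_assoc',
    div_mul_eq_mul_div]

theorem EulerContinuation.exists_abs_tsum_rpow_sub_le (h : EulerContinuation Np Z δ B) {α : ℝ}
    (hα : 1 < α) :
    ∃ C : ℝ, ∀ x : ℝ, 2 ≤ x →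
      |∑' p, (if x ≤ Np p then (Np p : ℝ) ^ (-α) else 0) -
          1 / ((α - 1) * x ^ (α - 1) * Real.log x)| ≤
        C / (x ^ (α - 1) * Real.log x ^ 2) := by
  obtain ⟨C, hC₀, hC⟩ := h.exists_abs_chebyshevTheta_sub_le
  have hlog_two : 0 < Real.log 2 := Real.log_pos one_lt_two
  refine ⟨(2 * C * (α + 1 / Real.log 2) + 1 / (α - 1)) / (α - 1), fun x hx => ?_⟩
  have hx₀ : 0 < x := two_pos.trans_le hx
  have hlog : Real.log 2 ≤ Real.log x := Real.log_le_log two_pos hx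
  have hα_sub : 0 < α - 1 := sub_pos.mpr hα
  have hpow : Real.exp (-(α - 1) * Real.log x) = (x ^ (α - 1))⁻¹ := by
    rw [Real.rpow_def_of_pos hx₀, ← Real.exp_neg]
    ring_nf
  have hbound := h.abs_integral_sub_le hα (hlog_two.trans_le hlog)
    fun u hu => h.abs_tailIntegrand_sub_le hC₀.le hC hα hlog_two hlog hu
  rw [Real.exp_log hx₀, ← h.tsum_rpow_eq_integral hα hx₀, hpow] at hbound
  convert hbound using 1
  · congr 2
    field_simp
  · field_simp

end TailEstimate

section PrimeIdealSums

open NumberField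

lemma tsum_isPrime_rpow_eq_tsum_prime {K : Type*} [Field K] [NumberField K] (α : ℝ) {x : ℝ}
    (hx : 0 < x) :
    ∑' p : {p : Ideal (𝓞 K) // p.IsPrime ∧ x ≤ Ideal.absNorm p},
        (Ideal.absNorm p.1 : ℝ) ^ (-α) =
      ∑' p : {p : Ideal (𝓞 K) // Prime p},
        if x ≤ Ideal.absNorm p.1 then (Ideal.absNorm p.1 : ℝ) ^ (-α) else 0 := by
  classical
  have hsubtype := tsum_subtype {p : Ideal (𝓞 K) | p.IsPrime ∧ x ≤ Ideal.absNorm p}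
    fun p => (Ideal.absNorm p : ℝ) ^ (-α)
  have hprime := tsum_subtype {p : Ideal (𝓞 K) | Prime p}
    fun p => if x ≤ Ideal.absNorm p then (Ideal.absNorm p : ℝ) ^ (-α) else 0
  refine hsubtype.trans (.trans (tsum_congr fun p => ?_) hprime.symm)
  simp only [Set.indicator_apply, Set.mem_ofPred_eq]
  by_cases hxp : x ≤ Ideal.absNorm p
  · have hp : p ≠ ⊥ := by
      rintro rfl
      rw [Ideal.absNorm_bot, Nat.cast_zero] at hxp
      exact hx.not_ge hxp
    simp only [hxp, and_true, Ideal.prime_iff_isPrime hp, if_true]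
  · simp only [hxp, and_false, if_false, ite_self]

end PrimeIdealSums

end PrimeIdealTail

/-- For `α > 1`, `Σ_{N(p) ≥ x} N(p)^{-α} = 1/((α-1) x^{α-1} log x) +
O(1/(x^{α-1} (log x)²))`. -/
theorem tail_sum_primeIdeals_norm_rpow_neg
    (K : Type) [Field K] [NumberField K]
    (α : ℝ) (hα : 1 < α) :
    ∃ C : ℝ, ∀ x : ℝ, 2 ≤ x →
      |(∑' p : {p : Ideal (NumberField.RingOfIntegers K) //
          p.IsPrime ∧ x ≤ (Ideal.absNorm p : ℝ)},
        (Ideal.absNorm p.1 : ℝ) ^ (-α)) -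
          1 / ((α - 1) * x ^ (α - 1) * Real.log x)| ≤
      C / (x ^ (α - 1) * (Real.log x) ^ 2) := by
  obtain ⟨Z, δ, B, hZ⟩ := PrimeIdealTail.exists_eulerContinuation K
  obtain ⟨C, hC⟩ := hZ.exists_abs_tsum_rpow_sub_le hα
  refine ⟨C, fun x hx => ?_⟩
  rw [PrimeIdealTail.tsum_isPrime_rpow_eq_tsum_prime α (two_pos.trans_le hx)]
  exact hC x hx

end
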